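/- arXiv:2407.08450 — 4 statements merged into one kernel-verified Lean document; each statement's English description precedes it below -/
import Mathlib

section
/- Let L be a hermitian linear matrix pencil of size d in noncommuting variables x₁,…,xₙ, and let ℓ = α₀ + α₁x₁ + ⋯ + αₙxₙ with α₀,…,αₙ ∈ ℝ. Then ℓ vanishes on the free spectrahedron D_L (i.e., for every k and every X ∈ D_L(k), α₀I_k + α₁X₁ + ⋯ + αₙXₙ = 0) if and only if ℓ vanishes on the first level D_L(1) (i.e., α₀ + α₁x₁ + ⋯ + αₙxₙ = 0 for every point x ∈ D_L(1) ⊆ ℝⁿ). -/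
open scoped Kronecker Matrix ComplexOrder

/-- Noncommutative polynomials: the free `ℂ`-algebra `ℂ⟨x₁,…,xₙ⟩` on `n` generators. -/
abbrev FreeAlg (n : ℕ) := FreeAlgebra ℂ (Fin n)

/-- Evaluation of a matrix of noncommutative polynomials at an `n`-tuple of `k × k` complex
matrices, i.e. the image under `id ⊗ ev_X`. -/
noncomputable def evalM {n k : ℕ} {I J : Type*} (f : Matrix I J (FreeAlg n))
    (X : Fin n → Matrix (Fin k) (Fin k) ℂ) : Matrix (I × Fin k) (J × Fin k) ℂ :=
  fun p q => FreeAlgebra.lift ℂ X (f p.1 q.1) p.2 q.2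

/-- The conjugate-linear involutive anti-automorphism on `ℂ⟨x⟩` fixing the generators:
reverse each word and conjugate each coefficient. -/
noncomputable def nstar {n : ℕ} (a : FreeAlg n) : FreeAlg n :=
  (FreeAlgebra.equivMonoidAlgebraFreeMonoid).symm
    (MonoidAlgebra.ofCoeff (Finsupp.mapDomain FreeMonoid.reverse
      (Finsupp.mapRange (starRingEnd ℂ) (map_zero _)
        ((FreeAlgebra.equivMonoidAlgebraFreeMonoid) a).coeff)))

/-- Conjugate-transpose of a matrix over `ℂ⟨x⟩`. -/
noncomputable def adjM {n : ℕ} {I J : Type*} (f : Matrix I J (FreeAlg n)) :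
    Matrix J I (FreeAlg n) :=
  fun i j => nstar (f j i)

/-- A matrix `f` over `ℂ⟨x⟩` is hermitian if `f = f*`. -/
def IsHermPoly {n : ℕ} {I : Type*} (f : Matrix I I (FreeAlg n)) : Prop :=
  ∀ i j, f i j = nstar (f j i)

/-- Evaluation `L(X) = A₀ ⊗ I + ∑ⱼ Aⱼ ⊗ Xⱼ` of a linear matrix pencil at a matrix tuple. -/
noncomputable def pencilK {n d k : ℕ} (A0 : Matrix (Fin d) (Fin d) ℂ)
    (A : Fin n → Matrix (Fin d) (Fin d) ℂ) (X : Fin n → Matrix (Fin k) (Fin k) ℂ) :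
    Matrix (Fin d × Fin k) (Fin d × Fin k) ℂ :=
  A0 ⊗ₖ (1 : Matrix (Fin k) (Fin k) ℂ) + ∑ j, A j ⊗ₖ X j

/-- Evaluation `L(X) = I ⊗ I + ∑ⱼ Aⱼ ⊗ Xⱼ` of a monic linear matrix pencil. -/
noncomputable def monicK {n d k : ℕ} (A : Fin n → Matrix (Fin d) (Fin d) ℂ)
    (X : Fin n → Matrix (Fin k) (Fin k) ℂ) : Matrix (Fin d × Fin k) (Fin d × Fin k) ℂ :=
  1 + ∑ j, A j ⊗ₖ X j

/-- The monic pencil `I + ∑ⱼ Aⱼ xⱼ` as a matrix of noncommutative polynomials. -/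
noncomputable def monicPoly {n e : ℕ} (A : Fin n → Matrix (Fin e) (Fin e) ℂ) :
    Matrix (Fin e) (Fin e) (FreeAlg n) :=
  1 + ∑ j, (A j).map (fun c => c • FreeAlgebra.ι ℂ j)

/-- The subspace of noncommutative polynomials of degree at most `δ`:
the `ℂ`-linear span of products of at most `δ` generators. -/
noncomputable def degLE (n δ : ℕ) : Submodule ℂ (FreeAlg n) :=
  Submodule.span ℂ
    {a | ∃ w : List (Fin n), w.length ≤ δ ∧ a = (w.map (FreeAlgebra.ι ℂ)).prod}

/-- A matrix over `ℂ⟨x⟩` has degree at most `δ` if each entry does. -/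
def matDegLE {n : ℕ} {I J : Type*} (f : Matrix I J (FreeAlg n)) (δ : ℕ) : Prop :=
  ∀ i j, f i j ∈ degLE n δ

/-- The degree of a matrix of noncommutative polynomials: the least `δ` such that every entry
lies in the span of words of length at most `δ`. -/
noncomputable def matDeg {n : ℕ} {I J : Type*} (f : Matrix I J (FreeAlg n)) : ℕ :=
  sInf {δ | matDegLE f δ}

/-- Evaluation of `f` at the zero scalar tuple, `f(0) ∈ M_d(ℂ)`. -/
noncomputable def evalZero {n : ℕ} {I J : Type*} (f : Matrix I J (FreeAlg n)) :
    Matrix I J ℂ :=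
  f.map (⇑(FreeAlgebra.lift ℂ (fun _ : Fin n => (0 : ℂ))))

/-!
Let `v` be a unit eigenvector of the Hermitian matrix `ℓ(X)` with eigenvalue `t`, where
`L(X) ⪰ 0`. The numbers `xⱼ = v* Xⱼ v` are real because the `Xⱼ` are Hermitian, and compressing
`L(X)` by the isometry `u ↦ u ⊗ v` gives `L(x)`. So `x` lies in the first level, and
`t = v* ℓ(X) v = ℓ(x) = 0`. A Hermitian matrix without nonzero eigenvalues is zero.
-/

open Matrix

theorem conjTranspose_replicateCol_mul_self {R κ : Type*} [CommSemiring R] [StarRing R] [Fintype κ]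
    {v : κ → R} (hv : star v ⬝ᵥ v = 1) :
    (replicateCol Unit v)ᴴ * replicateCol Unit v = 1 := by
  ext
  simpa [mul_apply, dotProduct] using hv

section HermitianForm

variable {𝕜 ι κ : Type*} [RCLike 𝕜]

theorem isHermitian_smul_one_add_sum_smul [Fintype ι] [DecidableEq κ] {X : ι → Matrix κ κ 𝕜}
    (hX : ∀ j, (X j).IsHermitian) (α₀ : ℝ) (α : ι → ℝ) :
    (α₀ • (1 : Matrix κ κ 𝕜) + ∑ j, α j • X j).IsHermitian :=
  (isHermitian_one.smul (.all α₀)).add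
    (isSelfAdjoint_sum _ fun j _ => (hX j).smul (.all (α j))).isHermitian

variable [Fintype κ]

theorem ofReal_re_star_dotProduct_mulVec {Y : Matrix κ κ 𝕜} (hY : Y.IsHermitian) (v : κ → 𝕜) :
    (RCLike.re (star v ⬝ᵥ Y *ᵥ v) : 𝕜) = star v ⬝ᵥ Y *ᵥ v :=
  RCLike.conj_eq_iff_re.mp (RCLike.conj_eq_iff_im.mpr (hY.im_star_dotProduct_mulVec_self v))

theorem re_star_dotProduct_smul_one_add_sum_smul_mulVec [Fintype ι] [DecidableEq κ]
    (α₀ : ℝ) (α : ι → ℝ) (X : ι → Matrix κ κ 𝕜) (v : κ → 𝕜) :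
    RCLike.re (star v ⬝ᵥ (α₀ • (1 : Matrix κ κ 𝕜) + ∑ j, α j • X j) *ᵥ v) =
      α₀ * RCLike.re (star v ⬝ᵥ v) + ∑ j, α j * RCLike.re (star v ⬝ᵥ X j *ᵥ v) := by
  simp only [add_mulVec, sum_mulVec, smul_mulVec, one_mulVec, dotProduct_add, dotProduct_sum,
    dotProduct_smul, map_add, map_sum, RCLike.smul_re]

theorem eq_zero_of_re_star_dotProduct_mulVec_eq_zero {M : Matrix κ κ 𝕜} (hM : M.IsHermitian)
    (h : ∀ v : κ → 𝕜, star v ⬝ᵥ v = 1 → RCLike.re (star v ⬝ᵥ M *ᵥ v) = 0) : M = 0 := by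
  classical
  refine hM.eigenvalues_eq_zero_iff.mp (funext fun i => ?_)
  have unit_eigenvector :
      star ⇑(hM.eigenvectorBasis i) ⬝ᵥ ⇑(hM.eigenvectorBasis i) = 1 := by
    rw [dotProduct_comm, ← EuclideanSpace.inner_eq_star_dotProduct,
      hM.eigenvectorBasis.inner_eq_one]
  exact (hM.eigenvalues_eq i).trans (h _ unit_eigenvector)

theorem conjTranspose_replicateCol_mul_mul_same {Y : Matrix κ κ 𝕜} (hY : Y.IsHermitian)
    (v : κ → 𝕜) :
    (replicateCol Unit v)ᴴ * Y * replicateCol Unit v =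
      RCLike.re (star v ⬝ᵥ Y *ᵥ v) • (1 : Matrix Unit Unit 𝕜) := by
  ext
  rw [Matrix.mul_assoc, RCLike.real_smul_eq_coe_smul (K := 𝕜),
    ofReal_re_star_dotProduct_mulVec hY]
  simp [mul_apply, dotProduct, mulVec]

end HermitianForm

section Pencil

variable {R 𝕜 ι m κ ν : Type*} [RCLike 𝕜] [Fintype ι] [DecidableEq κ] [DecidableEq ν]

/-- The value `A₀ ⊗ I + ∑ⱼ Aⱼ ⊗ Xⱼ` of a linear matrix pencil at a matrix tuple: `pencilK` with
arbitrary scalars and index types. -/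
def pencilEval [CommSemiring R] (A₀ : Matrix m m R) (A : ι → Matrix m m R)
    (X : ι → Matrix κ κ R) : Matrix (m × κ) (m × κ) R :=
  A₀ ⊗ₖ (1 : Matrix κ κ R) + ∑ j, A j ⊗ₖ X j

theorem pencilEval_smul_one {S : Type*} [CommSemiring S] [CommSemiring R] [Algebra S R]
    (A₀ : Matrix m m R) (A : ι → Matrix m m R) (x : ι → S) :
    pencilEval A₀ A (fun j => x j • (1 : Matrix κ κ R)) =
      (A₀ + ∑ j, x j • A j) ⊗ₖ (1 : Matrix κ κ R) := by
  ext
  simp [pencilEval, Matrix.sum_apply, add_mul, Finset.sum_mul]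

theorem posSemidef_pencilEval_smul_one_iff [Finite m] [Finite κ] [Nonempty κ]
    {A₀ : Matrix m m 𝕜} {A : ι → Matrix m m 𝕜} {x : ι → ℝ} :
    (pencilEval A₀ A fun j => x j • (1 : Matrix κ κ 𝕜)).PosSemidef ↔
      (A₀ + ∑ j, x j • A j).PosSemidef := by
  have := Fintype.ofFinite m
  have := Fintype.ofFinite κ
  rw [pencilEval_smul_one]
  refine ⟨fun h => ?_, fun h => h.kronecker .one⟩
  convert h.submatrix fun i => (i, Classical.arbitrary κ)
  ext
  simp

variable [Fintype κ]

theorem pencilEval_compression [CommSemiring R] [StarRing R] [Fintype m] [DecidableEq m]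
    (A₀ : Matrix m m R) (A : ι → Matrix m m R) (X : ι → Matrix κ κ R) {V : Matrix κ ν R}
    (hV : Vᴴ * V = 1) :
    ((1 : Matrix m m R) ⊗ₖ V)ᴴ * pencilEval A₀ A X * ((1 : Matrix m m R) ⊗ₖ V) =
      pencilEval A₀ A fun j => Vᴴ * X j * V := by
  simp only [pencilEval, conjTranspose_kronecker, conjTranspose_one, Matrix.mul_add,
    Matrix.add_mul, Matrix.mul_sum, Matrix.sum_mul, ← mul_kronecker_mul, Matrix.one_mul,
    Matrix.mul_one, hV]

theorem posSemidef_pencilEval_compression [CommRing R] [PartialOrder R] [StarRing R]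
    [Finite m] [Finite ν] {A₀ : Matrix m m R} {A : ι → Matrix m m R} {X : ι → Matrix κ κ R}
    (hL : (pencilEval A₀ A X).PosSemidef) {V : Matrix κ ν R} (hV : Vᴴ * V = 1) :
    (pencilEval A₀ A fun j => Vᴴ * X j * V).PosSemidef := by
  classical
  have := Fintype.ofFinite m
  exact pencilEval_compression A₀ A X hV ▸ hL.conjTranspose_mul_mul_same _

theorem posSemidef_add_sum_re_star_dotProduct_mulVec_smul [Finite m] {A₀ : Matrix m m 𝕜}
    {A : ι → Matrix m m 𝕜} {X : ι → Matrix κ κ 𝕜} (hX : ∀ j, (X j).IsHermitian)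
    (hL : (pencilEval A₀ A X).PosSemidef) {v : κ → 𝕜} (hv : star v ⬝ᵥ v = 1) :
    (A₀ + ∑ j, RCLike.re (star v ⬝ᵥ X j *ᵥ v) • A j).PosSemidef := by
  have compressed :=
    posSemidef_pencilEval_compression hL (conjTranspose_replicateCol_mul_self hv)
  simp only [conjTranspose_replicateCol_mul_mul_same (hX _)] at compressed
  exact posSemidef_pencilEval_smul_one_iff.mp compressed

theorem linear_vanishes_on_freeSpectrahedron_iff_level_one_general [Finite m]
    (A₀ : Matrix m m 𝕜) (A : ι → Matrix m m 𝕜) (α₀ : ℝ) (α : ι → ℝ) :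
    (∀ (k : ℕ) (X : ι → Matrix (Fin k) (Fin k) 𝕜), (∀ j, (X j).IsHermitian) →
        (pencilEval A₀ A X).PosSemidef →
        α₀ • (1 : Matrix (Fin k) (Fin k) 𝕜) + ∑ j, α j • X j = 0) ↔
      ∀ x : ι → ℝ, (A₀ + ∑ j, x j • A j).PosSemidef → α₀ + ∑ j, α j * x j = 0 := by
  constructor
  · intro h x hx
    have hzero := h 1 (fun j => x j • 1) (fun j => isHermitian_one.smul (.all _))
      (posSemidef_pencilEval_smul_one_iff.mpr hx)
    simp only [smul_smul, ← Finset.sum_smul, ← add_smul] at hzero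
    exact (smul_eq_zero.mp hzero).resolve_right one_ne_zero
  · intro h k X hX hL
    refine eq_zero_of_re_star_dotProduct_mulVec_eq_zero
      (isHermitian_smul_one_add_sum_smul hX α₀ α) fun v hv => ?_
    rw [re_star_dotProduct_smul_one_add_sum_smul_mulVec, hv, RCLike.one_re, mul_one]
    exact h _ (posSemidef_add_sum_re_star_dotProduct_mulVec_smul hX hL hv)

end Pencil

/-- an affine linear polynomial with real coefficients vanishes on the free
spectrahedron `D_L` iff it vanishes on the first level `D_L(1)`. -/
theorem linear_vanishes_on_freeSpectrahedron_iff_level_one {n d : ℕ}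
    (A0 : Matrix (Fin d) (Fin d) ℂ) (A : Fin n → Matrix (Fin d) (Fin d) ℂ)
    (hA0 : A0.IsHermitian) (hA : ∀ j, (A j).IsHermitian)
    (α0 : ℝ) (α : Fin n → ℝ) :
    (∀ (k : ℕ) (X : Fin n → Matrix (Fin k) (Fin k) ℂ), (∀ j, (X j).IsHermitian) →
        (pencilK A0 A X).PosSemidef →
        (α0 : ℂ) • (1 : Matrix (Fin k) (Fin k) ℂ) + ∑ j, (α j : ℂ) • X j = 0) ↔
      (∀ x : Fin n → ℝ, (A0 + ∑ j, (x j : ℂ) • A j).PosSemidef →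
        α0 + ∑ j, α j * x j = 0) := by
  simpa only [Complex.coe_smul] using!
    linear_vanishes_on_freeSpectrahedron_iff_level_one_general A0 A α0 α
end

section
/- Uniqueness of minimal LMI representations: let L = I + A₁x₁ + ⋯ + Aₙxₙ (size d) and M = I + B₁x₁ + ⋯ + Bₙxₙ (size e) be monic hermitian linear matrix pencils, each minimal in the sense that every monic hermitian pencil N with D_N = D_L has size ≥ d, and every monic hermitian pencil N with D_N = D_M has size ≥ e. Then D_L = D_M if and only if d = e and there exists a unitary U ∈ M_d(ℂ) with Bⱼ = U Aⱼ U* for all j = 1,…,n. -/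
open scoped Kronecker Matrix ComplexOrder

/-- Two monic pencils define the same free spectrahedron. -/
def SameFreeSpectrahedron {n d e : ℕ} (A : Fin n → Matrix (Fin d) (Fin d) ℂ)
    (B : Fin n → Matrix (Fin e) (Fin e) ℂ) : Prop :=
  ∀ (k : ℕ) (X : Fin n → Matrix (Fin k) (Fin k) ℂ), (∀ j, (X j).IsHermitian) →
    ((monicK A X).PosSemidef ↔ (monicK B X).PosSemidef)

/-!
If `D_B ⊆ D_A`, Hahn–Banach separation for the compact convex set of the tuples
`(∑ Vₗ* Bⱼ Vₗ)ⱼ` gives Kraus operators `Vₗ` with `∑ Vₗ* Vₗ ≤ 1` and `Aⱼ = ∑ Vₗ* Bⱼ Vₗ`. If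
`D_A = D_B`, there are also `Wₘ` carrying `A` to `B`, and the completely positive map `Φ` with
Kraus operators `Wₘ Vₗ` fixes every `Aⱼ`. The lowest eigenspace of an indefinite `A(X)` is
invariant under the amplified Kraus operators, and a vector of it at which
`⟨h, ∑ Aⱼ² h⟩ / ‖h‖²` is maximal makes the Kadison–Schwarz defects `Φ(Aⱼ²) - Aⱼ²` vanish. Hence
the subspace on which `Φ(1)` is the identity and the `Wₘ Vₗ` commute with the `Aⱼ` detects every
failure of `A(X) ≥ 0`; as `A` is minimal, it is everything. So `∑ Vₗ* Vₗ = 1` and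
`Vₗ Aⱼ = Bⱼ Vₗ`; in particular the `Vₗ` have no common kernel.

An intertwiner `T` with least kernel is then injective: the range of `T*` also detects every
failure of `A(X) ≥ 0`. Its polar part is the unitary sought.
-/

section Kraus

variable {R ι ι' κ κ' : Type*} [NonUnitalSemiring R] [StarRing R] [Fintype ι] [Fintype κ]

/-- The completely positive map `C ↦ ∑ Vₗ* C Vₗ` with Kraus operators `Vₗ`. -/
def krausMap (V : κ → Matrix ι ι' R) (C : Matrix ι ι R) : Matrix ι' ι' R :=
  ∑ l, (V l)ᴴ * C * V l

theorem krausMap_add (V : κ → Matrix ι ι' R) (C D : Matrix ι ι R) :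
    krausMap V (C + D) = krausMap V C + krausMap V D := by
  simp only [krausMap, Matrix.mul_add, Matrix.add_mul, Finset.sum_add_distrib]

theorem krausMap_sum {τ : Type*} (V : κ → Matrix ι ι' R) (s : Finset τ) (C : τ → Matrix ι ι R) :
    krausMap V (∑ j ∈ s, C j) = ∑ j ∈ s, krausMap V (C j) := by
  simp only [krausMap, Matrix.mul_sum, Matrix.sum_mul]
  exact Finset.sum_comm

theorem krausMap_comp [Fintype ι'] [Fintype κ'] {ι'' : Type*} (V : κ → Matrix ι' ι'' R)
    (W : κ' → Matrix ι ι' R) (C : Matrix ι ι R) :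
    krausMap (fun p : κ × κ' => W p.2 * V p.1) C = krausMap V (krausMap W C) := by
  simp only [krausMap, Fintype.sum_prod_type, Matrix.mul_sum, Matrix.sum_mul,
    Matrix.conjTranspose_mul, Matrix.mul_assoc]

end Kraus

theorem krausMap_sub {R ι ι' κ : Type*} [NonUnitalRing R] [StarRing R] [Fintype ι] [Fintype κ]
    (V : κ → Matrix ι ι' R) (C D : Matrix ι ι R) :
    krausMap V (C - D) = krausMap V C - krausMap V D := by
  simp only [krausMap, Matrix.mul_sub, Matrix.sub_mul, Finset.sum_sub_distrib]

theorem krausMap_kronecker_one {R ι ι' κ μ : Type*} [CommSemiring R] [StarRing R] [Fintype ι]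
    [Fintype κ] [Fintype μ] [DecidableEq μ] (V : κ → Matrix ι ι' R) (C : Matrix ι ι R)
    (X : Matrix μ μ R) :
    krausMap (fun l => V l ⊗ₖ (1 : Matrix μ μ R)) (C ⊗ₖ X) = krausMap V C ⊗ₖ X := by
  ext ⟨i, a⟩ ⟨j, b⟩
  simp only [krausMap, Matrix.conjTranspose_kronecker, Matrix.conjTranspose_one,
    ← Matrix.mul_kronecker_mul, Matrix.one_mul, Matrix.mul_one, Matrix.sum_apply,
    Matrix.kroneckerMap_apply, Finset.sum_mul]

theorem isHermitian_sum_kronecker {R ι ι' τ : Type*} [CommSemiring R] [StarRing R] [Fintype τ]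
    {C : τ → Matrix ι ι R} {H : τ → Matrix ι' ι' R} (hC : ∀ t, (C t).IsHermitian)
    (hH : ∀ t, (H t).IsHermitian) : (∑ t, C t ⊗ₖ H t).IsHermitian := by
  simp only [Matrix.IsHermitian, Matrix.conjTranspose_sum, Matrix.conjTranspose_kronecker,
    (hC _).eq, (hH _).eq]

-- The defect in the Kadison–Schwarz inequality `Φ(A)² ≤ Φ(A²)` at a fixed point of `Φ`.
theorem sum_conjTranspose_mul_self_commutator {R ι κ : Type*} [Ring R] [StarRing R] [Fintype ι]
    [DecidableEq ι] [Fintype κ] {V : κ → Matrix ι ι R} {A : Matrix ι ι R} (hA : A.IsHermitian)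
    (hVA : krausMap V A = A) :
    ∑ l, (A * V l - V l * A)ᴴ * (A * V l - V l * A) =
      krausMap V (A * A) - A * A - A * (1 - krausMap V 1) * A := by
  have expand (l : κ) : (A * V l - V l * A)ᴴ * (A * V l - V l * A) =
      (V l)ᴴ * (A * A) * V l - (V l)ᴴ * A * V l * A - A * ((V l)ᴴ * A * V l)
        + A * ((V l)ᴴ * 1 * V l) * A := by
    rw [Matrix.conjTranspose_sub, Matrix.conjTranspose_mul, Matrix.conjTranspose_mul, hA.eq]
    noncomm_ring
  calc ∑ l, (A * V l - V l * A)ᴴ * (A * V l - V l * A)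
      = krausMap V (A * A) - krausMap V A * A - A * krausMap V A + A * krausMap V 1 * A := by
        simp only [expand, krausMap, Finset.sum_add_distrib, Finset.sum_sub_distrib,
          Matrix.mul_sum, Matrix.sum_mul]
    _ = krausMap V (A * A) - A * A - A * (1 - krausMap V 1) * A := by
        rw [hVA]
        noncomm_ring

section QuadraticForm

variable {𝕜 ι ι' κ τ : Type*} [RCLike 𝕜] [Fintype ι] [Fintype ι'] [Fintype κ]

/-- The value `Re (x* G x)` of the real quadratic form of `G` at `x`, as a linear function
of `G`. -/
def quadForm (x : ι → 𝕜) : Matrix ι ι 𝕜 →ₗ[ℝ] ℝ where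
  toFun G := RCLike.re (star x ⬝ᵥ G *ᵥ x)
  map_add' G H := by rw [Matrix.add_mulVec, dotProduct_add, map_add]
  map_smul' c G := by
    rw [Matrix.smul_mulVec, dotProduct_smul, RCLike.smul_re, RingHom.id_apply, smul_eq_mul]

theorem quadForm_apply (x : ι → 𝕜) (G : Matrix ι ι 𝕜) :
    quadForm x G = RCLike.re (star x ⬝ᵥ G *ᵥ x) := rfl

theorem quadForm_smul (c : ℝ) (x : ι → 𝕜) (G : Matrix ι ι 𝕜) :
    quadForm (c • x) G = c ^ 2 * quadForm x G := by
  simp only [quadForm_apply, Matrix.mulVec_smul, star_smul, star_trivial, smul_dotProduct,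
    dotProduct_smul, RCLike.smul_re]
  ring

theorem quadForm_conjTranspose_mul_mul (V : Matrix ι ι' 𝕜) (G : Matrix ι ι 𝕜) (x : ι' → 𝕜) :
    quadForm x (Vᴴ * G * V) = quadForm (V *ᵥ x) G := by
  simp only [quadForm_apply, Matrix.star_mulVec, ← Matrix.mulVec_mulVec, Matrix.dotProduct_mulVec,
    Matrix.vecMul_vecMul]

theorem quadForm_conjTranspose (x : ι → 𝕜) (G : Matrix ι ι 𝕜) :
    quadForm x Gᴴ = quadForm x G := by
  rw [quadForm_apply, Matrix.dotProduct_mulVec, ← Matrix.star_mulVec, quadForm_apply,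
    Matrix.star_dotProduct, RCLike.star_def, RCLike.conj_re]

theorem quadForm_krausMap (V : κ → Matrix ι ι' 𝕜) (G : Matrix ι ι 𝕜) (x : ι' → 𝕜) :
    quadForm x (krausMap V G) = ∑ l, quadForm (V l *ᵥ x) G := by
  simp only [krausMap, map_sum, quadForm_conjTranspose_mul_mul]

theorem quadForm_nonneg {G : Matrix ι ι 𝕜} (hG : G.PosSemidef) (x : ι → 𝕜) : 0 ≤ quadForm x G :=
  hG.re_dotProduct_nonneg x

theorem posSemidef_iff_quadForm_nonneg {G : Matrix ι ι 𝕜} (hG : G.IsHermitian) :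
    G.PosSemidef ↔ ∀ x, 0 ≤ quadForm x G := by
  refine ⟨quadForm_nonneg, fun h => ?_⟩
  refine .of_dotProduct_mulVec_nonneg hG fun x => RCLike.nonneg_iff.2 ⟨h x, ?_⟩
  exact hG.im_star_dotProduct_mulVec_self x

theorem posDef_of_quadForm_pos {G : Matrix ι ι 𝕜} (hG : G.IsHermitian)
    (h : ∀ x ≠ 0, 0 < quadForm x G) : G.PosDef :=
  .of_dotProduct_mulVec_pos hG fun x hx =>
    RCLike.pos_iff.2 ⟨h x hx, hG.im_star_dotProduct_mulVec_self x⟩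

theorem mulVec_eq_zero_iff_quadForm_eq_zero {G : Matrix ι ι 𝕜} (hG : G.PosSemidef) {x : ι → 𝕜} :
    G *ᵥ x = 0 ↔ quadForm x G = 0 := by
  rw [← hG.dotProduct_mulVec_zero_iff, quadForm_apply, RCLike.ext_iff]
  simp [hG.isHermitian.im_star_dotProduct_mulVec_self x]

theorem quadForm_one_pos [DecidableEq ι] {x : ι → 𝕜} (hx : x ≠ 0) : 0 < quadForm x 1 :=
  Matrix.PosDef.one.re_dotProduct_pos hx

theorem quadForm_neg_of_mulVec_eq_smul {G : Matrix ι ι 𝕜} {r : ℝ} {x : ι → 𝕜} (hr : r < 0)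
    (hx : x ≠ 0) (hGx : G *ᵥ x = r • x) : quadForm x G < 0 := by
  classical
  have : quadForm x G = r * quadForm x 1 := by
    rw [quadForm_apply, quadForm_apply, hGx, dotProduct_smul, RCLike.smul_re, Matrix.one_mulVec]
  exact this ▸ mul_neg_of_neg_of_pos hr (quadForm_one_pos hx)

theorem continuous_quadForm (G : Matrix ι ι 𝕜) : Continuous fun x => quadForm x G := by
  simp only [quadForm_apply]
  fun_prop

theorem mulVec_eq_zero_of_add {M N : Matrix ι ι 𝕜} (hM : M.PosSemidef) (hN : N.PosSemidef)
    {x : ι → 𝕜} (hx : (M + N) *ᵥ x = 0) : M *ᵥ x = 0 := by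
  rw [mulVec_eq_zero_iff_quadForm_eq_zero hM]
  have h := (mulVec_eq_zero_iff_quadForm_eq_zero (hM.add hN)).1 hx
  rw [map_add] at h
  linarith [quadForm_nonneg hM x, quadForm_nonneg hN x]

theorem posSemidef_krausMap {μ : Type*} [Finite μ] {G : Matrix ι ι 𝕜} (hG : G.PosSemidef)
    (V : κ → Matrix ι μ 𝕜) : (krausMap V G).PosSemidef := by
  cases nonempty_fintype μ
  exact Matrix.posSemidef_sum _ fun l _ => hG.conjTranspose_mul_mul_same (V l)

theorem mulVec_mulVec_eq_zero_of_krausMap {G : Matrix ι ι 𝕜} (hG : G.PosSemidef)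
    {V : κ → Matrix ι ι' 𝕜} {x : ι' → 𝕜} (hx : krausMap V G *ᵥ x = 0) (l : κ) :
    G *ᵥ (V l *ᵥ x) = 0 := by
  rw [mulVec_eq_zero_iff_quadForm_eq_zero (posSemidef_krausMap hG V), quadForm_krausMap,
    Finset.sum_eq_zero_iff_of_nonneg fun l _ => quadForm_nonneg hG _] at hx
  exact (mulVec_eq_zero_iff_quadForm_eq_zero hG).2 (hx l (Finset.mem_univ l))

theorem exists_quadForm_maximizer [DecidableEq ι] {E : Submodule 𝕜 (ι → 𝕜)} (hE : E ≠ ⊥)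
    (G : Matrix ι ι 𝕜) :
    ∃ c : ℝ, (∃ h ∈ E, h ≠ 0 ∧ quadForm h G = c * quadForm h 1) ∧
      ∀ y ∈ E, quadForm y G ≤ c * quadForm y 1 := by
  obtain ⟨z, hzE, hz⟩ := E.ne_bot_iff.1 hE
  have normalize {y : ι → 𝕜} (hyE : y ∈ E) (hy : y ≠ 0) :
      ‖y‖⁻¹ • y ∈ Metric.sphere 0 1 ∩ (E : Set (ι → 𝕜)) := by
    refine ⟨mem_sphere_zero_iff_norm.2 ?_, (E.restrictScalars ℝ).smul_mem _ hyE⟩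
    rw [norm_smul, norm_inv, norm_norm, inv_mul_cancel₀ (norm_ne_zero_iff.2 hy)]
  have hcont : ContinuousOn (fun x => quadForm x G / quadForm x 1)
      (Metric.sphere 0 1 ∩ (E : Set (ι → 𝕜))) :=
    (continuous_quadForm G).continuousOn.div (continuous_quadForm 1).continuousOn fun x hx =>
      (quadForm_one_pos (ne_zero_of_mem_unit_sphere ⟨x, hx.1⟩)).ne'
  obtain ⟨h, hh, hmax⟩ := ((isCompact_sphere 0 1).inter_right
    E.closed_of_finiteDimensional).exists_isMaxOn ⟨_, normalize hzE hz⟩ hcont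
  have hh0 : h ≠ 0 := ne_zero_of_mem_unit_sphere ⟨h, hh.1⟩
  refine ⟨quadForm h G / quadForm h 1,
    ⟨h, hh.2, hh0, (div_mul_cancel₀ _ (quadForm_one_pos hh0).ne').symm⟩, fun y hyE => ?_⟩
  obtain rfl | hy := eq_or_ne y 0
  · simp [quadForm_apply]
  rw [← div_le_iff₀ (quadForm_one_pos hy)]
  have hle : quadForm (‖y‖⁻¹ • y) G / quadForm (‖y‖⁻¹ • y) 1 ≤ quadForm h G / quadForm h 1 :=
    hmax (normalize hyE hy)
  rwa [quadForm_smul, quadForm_smul, mul_div_mul_left _ _ (by positivity)] at hle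

theorem exists_neg_eigenvector_posSemidef_sub [DecidableEq ι] {G : Matrix ι ι 𝕜}
    (hG : G.IsHermitian) (hneg : ¬ G.PosSemidef) :
    ∃ r : ℝ, r < 0 ∧ (G - r • (1 : Matrix ι ι 𝕜)).PosSemidef ∧ ∃ h ≠ 0, G *ᵥ h = r • h := by
  have : (⊤ : Submodule 𝕜 (ι → 𝕜)) ≠ ⊥ := fun h => hneg <| by
    have : Subsingleton (ι → 𝕜) :=
      (Submodule.subsingleton_iff 𝕜).1 (subsingleton_of_bot_eq_top h.symm)
    exact (posSemidef_iff_quadForm_nonneg hG).2 fun x => by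
      simp [Subsingleton.elim x 0, quadForm_apply]
  obtain ⟨c, ⟨h, -, hh, hc⟩, hmax⟩ := exists_quadForm_maximizer this (-G)
  have hGc : (G - (-c) • (1 : Matrix ι ι 𝕜)).PosSemidef := by
    refine (posSemidef_iff_quadForm_nonneg
      (hG.sub (Matrix.isHermitian_one.smul (.all _)))).2 fun x => ?_
    have := hmax x trivial
    rw [map_neg] at this
    rw [map_sub, map_smul, smul_eq_mul]
    linarith
  refine ⟨-c, ?_, hGc, h, hh, ?_⟩
  · contrapose! hneg
    simpa using hGc.add (Matrix.PosSemidef.one.smul hneg)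
  · rw [← sub_eq_zero, ← Matrix.one_mulVec h, Matrix.mulVec_mulVec, Matrix.mul_one,
      ← Matrix.smul_mulVec, ← Matrix.sub_mulVec, mulVec_eq_zero_iff_quadForm_eq_zero hGc, map_sub,
      map_smul, smul_eq_mul]
    rw [map_neg] at hc
    linarith

-- A vector of `E` maximising `∑ ‖Aⱼ h‖² / ‖h‖²` leaves no room for a Kadison–Schwarz defect.
theorem exists_mem_commute_of_krausMap_eq_self [DecidableEq ι] [Finite τ]
    {V : κ → Matrix ι ι 𝕜} {A : τ → Matrix ι ι 𝕜} (hA : ∀ j, (A j).IsHermitian)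
    (hVA : ∀ j, krausMap V (A j) = A j) (hV : (1 - krausMap V 1).PosSemidef)
    {E : Submodule 𝕜 (ι → 𝕜)} (hE : E ≠ ⊥) (hVE : ∀ l, ∀ x ∈ E, V l *ᵥ x ∈ E)
    (hE1 : ∀ x ∈ E, krausMap V 1 *ᵥ x = x) :
    ∃ h ∈ E, h ≠ 0 ∧ ∀ j l, A j *ᵥ (V l *ᵥ h) = V l *ᵥ (A j *ᵥ h) := by
  cases nonempty_fintype τ
  obtain ⟨c, ⟨h, hhE, hh, hc⟩, hmax⟩ := exists_quadForm_maximizer hE (∑ j, A j * A j)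
  let D (p : τ × κ) : Matrix ι ι 𝕜 := A p.1 * V p.2 - V p.2 * A p.1
  have hD : krausMap D 1 = krausMap V (∑ j, A j * A j) - ∑ j, A j * A j -
      ∑ j, A j * (1 - krausMap V 1) * A j := by
    rw [krausMap_sum, ← Finset.sum_sub_distrib, ← Finset.sum_sub_distrib, krausMap,
      Fintype.sum_prod_type]
    simp only [Matrix.mul_one, D]
    exact Finset.sum_congr rfl fun j _ => sum_conjTranspose_mul_self_commutator (hA j) (hVA j)
  have hgrow : quadForm h (krausMap V (∑ j, A j * A j)) ≤ quadForm h (∑ j, A j * A j) :=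
    calc quadForm h (krausMap V (∑ j, A j * A j))
        = ∑ l, quadForm (V l *ᵥ h) (∑ j, A j * A j) := quadForm_krausMap ..
      _ ≤ ∑ l, c * quadForm (V l *ᵥ h) 1 :=
        Finset.sum_le_sum fun l _ => hmax _ (hVE l h hhE)
      _ = c * quadForm h (krausMap V 1) := by rw [quadForm_krausMap, Finset.mul_sum]
      _ = quadForm h (∑ j, A j * A j) := by
        rw [hc, quadForm_apply, hE1 h hhE, quadForm_apply, Matrix.one_mulVec]
  have hloss : 0 ≤ quadForm h (∑ j, A j * (1 - krausMap V 1) * A j) := by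
    rw [map_sum]
    refine Finset.sum_nonneg fun j _ => ?_
    nth_rw 1 [← (hA j).eq]
    exact quadForm_nonneg (hV.conjTranspose_mul_mul_same (A j)) h
  have hD1 := posSemidef_krausMap Matrix.PosSemidef.one D
  have hDh : krausMap D 1 *ᵥ h = 0 := by
    rw [mulVec_eq_zero_iff_quadForm_eq_zero hD1]
    refine le_antisymm ?_ (quadForm_nonneg hD1 h)
    rw [hD, map_sub, map_sub]
    linarith
  refine ⟨h, hhE, hh, fun j l => ?_⟩
  have := mulVec_mulVec_eq_zero_of_krausMap Matrix.PosSemidef.one hDh (j, l)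
  rwa [Matrix.one_mulVec, Matrix.sub_mulVec, sub_eq_zero, ← Matrix.mulVec_mulVec,
    ← Matrix.mulVec_mulVec] at this

-- With `r` the least eigenvalue of `G`, the identity
-- `G - r = Φ(G - r) + (1 - r)(1 - Φ(1))` makes `ker (G - r)` invariant under the Kraus operators.
theorem exists_quadForm_neg_commute [DecidableEq ι] [Finite τ] {V : κ → Matrix ι ι 𝕜}
    {A : τ → Matrix ι ι 𝕜} (hA : ∀ j, (A j).IsHermitian) (hVA : ∀ j, krausMap V (A j) = A j)
    (hV : (1 - krausMap V 1).PosSemidef) {G : Matrix ι ι 𝕜} (hG : G.IsHermitian)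
    (hVG : krausMap V (G - 1) = G - 1) (hneg : ¬ G.PosSemidef) :
    ∃ h, quadForm h G < 0 ∧ krausMap V 1 *ᵥ h = h ∧
      ∀ j l, A j *ᵥ (V l *ᵥ h) = V l *ᵥ (A j *ᵥ h) := by
  obtain ⟨r, hr, hGr, h₀, hh₀, hGh₀⟩ := exists_neg_eigenvector_posSemidef_sub hG hneg
  have hdecomp : G - r • (1 : Matrix ι ι 𝕜) =
      krausMap V (G - r • (1 : Matrix ι ι 𝕜)) + (1 - r) • (1 - krausMap V 1) := by
    have hsmul : krausMap V (r • 1) = r • krausMap V 1 := by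
      simp only [krausMap, Matrix.mul_smul, Matrix.smul_mul, Finset.smul_sum]
    rw [show G - r • (1 : Matrix ι ι 𝕜) = (G - 1) + 1 - r • (1 : Matrix ι ι 𝕜) by abel,
      krausMap_sub, krausMap_add, hVG, hsmul]
    module
  have hpsd := posSemidef_krausMap hGr V
  have hslack : ((1 - r) • (1 - krausMap V 1)).PosSemidef := hV.smul (by linarith)
  let E : Submodule 𝕜 (ι → 𝕜) := LinearMap.ker (G - r • (1 : Matrix ι ι 𝕜)).mulVecLin
  have hmemE {x : ι → 𝕜} : x ∈ E ↔ G *ᵥ x = r • x := by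
    rw [LinearMap.mem_ker, Matrix.mulVecLin_apply, Matrix.sub_mulVec, Matrix.smul_mulVec,
      Matrix.one_mulVec, sub_eq_zero]
  have hkill (x) (hx : x ∈ E) : (krausMap V (G - r • (1 : Matrix ι ι 𝕜)) +
      (1 - r) • (1 - krausMap V 1)) *ᵥ x = 0 := hdecomp ▸ hx
  have hE : E ≠ ⊥ := fun h => hh₀ <| by rwa [← hmemE, h] at hGh₀
  have hfix (x) (hx : x ∈ E) : krausMap V 1 *ᵥ x = x := by
    have := mulVec_eq_zero_of_add hslack hpsd (by rw [add_comm]; exact hkill x hx)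
    rw [Matrix.smul_mulVec, smul_eq_zero_iff_right (by linarith), Matrix.sub_mulVec,
      Matrix.one_mulVec, sub_eq_zero] at this
    exact this.symm
  obtain ⟨h, hhE, hh, hcomm⟩ := exists_mem_commute_of_krausMap_eq_self hA hVA hV hE
    (fun l x hx => mulVec_mulVec_eq_zero_of_krausMap hGr
      (mulVec_eq_zero_of_add hpsd hslack (hkill x hx)) l) hfix
  exact ⟨h, quadForm_neg_of_mulVec_eq_smul hr hh (hmemE.1 hhE), hfix h hhE, hcomm⟩

end QuadraticForm

theorem exists_isometry_range_eq {𝕜 ι : Type*} [RCLike 𝕜] [Fintype ι]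
    (M : Submodule 𝕜 (ι → 𝕜)) :
    ∃ J : Matrix ι (Fin (Module.finrank 𝕜 M)) 𝕜, Jᴴ * J = 1 ∧
      LinearMap.range J.mulVecLin = M := by
  let L := (WithLp.linearEquiv 2 𝕜 (ι → 𝕜)).symm
  let b := (stdOrthonormalBasis 𝕜 (M.map L.toLinearMap)).reindex
    (finCongr (LinearEquiv.finrank_map_eq L M))
  let J : Matrix ι (Fin (Module.finrank 𝕜 M)) 𝕜 := .of fun i a => (b a).1.ofLp i
  refine ⟨J, ?_, ?_⟩
  · ext a c
    rw [Matrix.one_apply, ← orthonormal_iff_ite.1 b.orthonormal a c, Submodule.coe_inner,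
      PiLp.inner_apply]
    exact Finset.sum_congr rfl fun i _ => mul_comm ..
  · have hcol : Set.range J.col = L.symm '' ((↑) '' Set.range b) := by
      simp only [← Set.range_comp]
      rfl
    have hspan : Submodule.span 𝕜 (Set.range b) = ⊤ := by
      simpa using b.toBasis.span_eq
    rw [Matrix.range_mulVecLin, hcol, ← LinearEquiv.coe_toLinearMap L.symm, ← Submodule.map_span,
      ← Submodule.coe_subtype, ← Submodule.map_span, hspan, Submodule.map_subtype_top,
      ← Submodule.map_comp, LinearEquiv.comp_coe, LinearEquiv.self_trans_symm,
      LinearEquiv.refl_toLinearMap, Submodule.map_id]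

theorem kronecker_one_mulVec {R ι ι' μ : Type*} [NonAssocSemiring R] [Fintype ι'] [Fintype μ]
    [DecidableEq μ] (V : Matrix ι ι' R) (y : ι' × μ → R) (a : μ) :
    (fun i => ((V ⊗ₖ (1 : Matrix μ μ R)) *ᵥ y) (i, a)) = V *ᵥ fun p => y (p, a) := by
  ext i
  simp [Matrix.mulVec, dotProduct, Fintype.sum_prod_type, Matrix.one_apply]

section Pencils

variable {n d e k : ℕ} {A : Fin n → Matrix (Fin d) (Fin d) ℂ}
  {B : Fin n → Matrix (Fin e) (Fin e) ℂ} {κ κ' : Type*} [Fintype κ] [Fintype κ']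

/-- A monic pencil, given by its coefficients, is minimal if no monic hermitian pencil of
smaller size defines the same free spectrahedron. -/
def IsMinimalPencil (A : Fin n → Matrix (Fin d) (Fin d) ℂ) : Prop :=
  ∀ (e' : ℕ) (C : Fin n → Matrix (Fin e') (Fin e') ℂ),
    (∀ j, (C j).IsHermitian) → SameFreeSpectrahedron A C → d ≤ e'

theorem isHermitian_monicK (hA : ∀ j, (A j).IsHermitian) {X : Fin n → Matrix (Fin k) (Fin k) ℂ}
    (hX : ∀ j, (X j).IsHermitian) : (monicK A X).IsHermitian :=
  Matrix.isHermitian_one.add (isHermitian_sum_kronecker hA hX)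

theorem krausMap_monicK_sub_one (V : κ → Matrix (Fin e) (Fin d) ℂ)
    (X : Fin n → Matrix (Fin k) (Fin k) ℂ) :
    krausMap (fun l => V l ⊗ₖ (1 : Matrix (Fin k) (Fin k) ℂ)) (monicK B X - 1) =
      monicK (fun j => krausMap V (B j)) X - 1 := by
  simp only [monicK, add_sub_cancel_left, krausMap_sum, krausMap_kronecker_one]

theorem conjTranspose_mul_monicK_mul {J : Matrix (Fin e) (Fin d) ℂ} (hJ : Jᴴ * J = 1)
    (B : Fin n → Matrix (Fin e) (Fin e) ℂ) (X : Fin n → Matrix (Fin k) (Fin k) ℂ) :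
    (J ⊗ₖ (1 : Matrix (Fin k) (Fin k) ℂ))ᴴ * monicK B X * (J ⊗ₖ (1 : Matrix (Fin k) (Fin k) ℂ)) =
      monicK (fun j => Jᴴ * B j * J) X := by
  simp only [monicK, Matrix.conjTranspose_kronecker, Matrix.conjTranspose_one, Matrix.mul_add,
    Matrix.add_mul, Matrix.mul_sum, Matrix.sum_mul, Matrix.mul_one, ← Matrix.mul_kronecker_mul,
    Matrix.one_mul, hJ, Matrix.one_kronecker_one]

theorem kronecker_one_mul_monicK {T : Matrix (Fin e) (Fin d) ℂ} (hT : ∀ j, T * A j = B j * T)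
    (X : Fin n → Matrix (Fin k) (Fin k) ℂ) :
    (T ⊗ₖ (1 : Matrix (Fin k) (Fin k) ℂ)) * monicK A X =
      monicK B X * (T ⊗ₖ (1 : Matrix (Fin k) (Fin k) ℂ)) := by
  simp only [monicK, Matrix.mul_add, Matrix.add_mul, Matrix.mul_one, Matrix.one_mul,
    Matrix.mul_sum, Matrix.sum_mul, ← Matrix.mul_kronecker_mul, hT]

-- The compression of `A` to `M` defines the same free spectrahedron.
theorem IsMinimalPencil.eq_top_of_columns_mem (hAmin : IsMinimalPencil A)
    (hA : ∀ j, (A j).IsHermitian) {M : Submodule ℂ (Fin d → ℂ)}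
    (hM : ∀ (k : ℕ) (X : Fin n → Matrix (Fin k) (Fin k) ℂ), (∀ j, (X j).IsHermitian) →
      ¬ (monicK A X).PosSemidef →
      ∃ y : Fin d × Fin k → ℂ, (∀ a, (fun i => y (i, a)) ∈ M) ∧ quadForm y (monicK A X) < 0) :
    M = ⊤ := by
  obtain ⟨J, hJ, hJM⟩ := exists_isometry_range_eq M
  have hC (j) : (Jᴴ * A j * J).IsHermitian := Matrix.isHermitian_conjTranspose_mul_mul J (hA j)
  have hsame : SameFreeSpectrahedron A fun j => Jᴴ * A j * J := by
    intro k X hX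
    rw [← conjTranspose_mul_monicK_mul hJ]
    refine ⟨fun h => h.conjTranspose_mul_mul_same _, fun h => ?_⟩
    by_contra hcon
    obtain ⟨y, hy, hneg⟩ := hM k X hX hcon
    choose z hz using fun a => hJM ▸ hy a
    have hyz : y = (J ⊗ₖ (1 : Matrix (Fin k) (Fin k) ℂ)) *ᵥ fun p => z p.2 p.1 := by
      ext ⟨i, a⟩
      rw [congrFun (kronecker_one_mulVec J (fun p => z p.2 p.1) a) i]
      exact (congrFun (hz a) i).symm
    rw [hyz, ← quadForm_conjTranspose_mul_mul] at hneg
    exact hneg.not_ge (quadForm_nonneg h _)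
  refine Submodule.eq_top_of_finrank_eq (le_antisymm M.finrank_le ?_)
  simpa using hAmin _ _ hC hsame

theorem IsMinimalPencil.krausMap_rigid (hAmin : IsMinimalPencil A)
    (hA : ∀ j, (A j).IsHermitian) {V : κ → Matrix (Fin d) (Fin d) ℂ}
    (hVA : ∀ j, krausMap V (A j) = A j) (hV : (1 - krausMap V 1).PosSemidef) :
    krausMap V 1 = 1 ∧ ∀ j l, A j * V l = V l * A j := by
  let M : Submodule ℂ (Fin d → ℂ) := LinearMap.ker (1 - krausMap V 1).mulVecLin ⊓
    ⨅ j, ⨅ l, LinearMap.ker (A j * V l - V l * A j).mulVecLin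
  have hmem {x} : x ∈ M ↔ krausMap V 1 *ᵥ x = x ∧ ∀ j l, (A j * V l) *ᵥ x = (V l * A j) *ᵥ x := by
    simp only [M, Submodule.mem_inf, Submodule.mem_iInf, LinearMap.mem_ker,
      Matrix.mulVecLin_apply, Matrix.sub_mulVec, Matrix.one_mulVec, sub_eq_zero, eq_comm]
  have hM : M = ⊤ := by
    refine hAmin.eq_top_of_columns_mem hA fun k X hX hnot => ?_
    let F (C : Matrix (Fin d) (Fin d) ℂ) := C ⊗ₖ (1 : Matrix (Fin k) (Fin k) ℂ)
    have hV1 : krausMap (fun l => F (V l)) 1 = F (krausMap V 1) := by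
      rw [← Matrix.one_kronecker_one, krausMap_kronecker_one]
    have hcontr : (1 - krausMap (fun l => F (V l)) 1).PosSemidef := by
      have : 1 - F (krausMap V 1) = F (1 - krausMap V 1) := sub_eq_of_eq_add <| by
        rw [← Matrix.add_kronecker, sub_add_cancel, Matrix.one_kronecker_one]
      rw [hV1, this]
      exact hV.kronecker .one
    obtain ⟨h, hneg, hfix, hcomm⟩ := exists_quadForm_neg_commute
      (V := fun l => F (V l)) (A := fun j => F (A j))
      (fun j => by
        rw [Matrix.IsHermitian, Matrix.conjTranspose_kronecker, (hA j).eq,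
          Matrix.conjTranspose_one])
      (fun j => by rw [krausMap_kronecker_one, hVA]) hcontr (isHermitian_monicK hA hX)
      (by rw [krausMap_monicK_sub_one, funext hVA]) hnot
    refine ⟨h, fun a => hmem.2 ⟨?_, fun j l => ?_⟩, hneg⟩
    · rw [hV1] at hfix
      exact (kronecker_one_mulVec _ h a).symm.trans (funext fun i => congrFun hfix (i, a))
    · have := hcomm j l
      simp only [F, Matrix.mulVec_mulVec, ← Matrix.mul_kronecker_mul, Matrix.one_mul] at this
      rw [← kronecker_one_mulVec, ← kronecker_one_mulVec, this]
  have hall (x) := hmem.1 (hM ▸ Submodule.mem_top : x ∈ M)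
  refine ⟨Matrix.mulVec_injective (funext fun x => ?_), fun j l => Matrix.mulVec_injective
    (funext fun x => (hall x).2 j l)⟩
  rw [(hall x).1, Matrix.one_mulVec]

theorem IsMinimalPencil.krausMap_intertwines (hAmin : IsMinimalPencil A)
    (hA : ∀ j, (A j).IsHermitian) {V : κ → Matrix (Fin e) (Fin d) ℂ}
    {W : κ' → Matrix (Fin d) (Fin e) ℂ}
    (hVB : ∀ j, krausMap V (B j) = A j) (hV : (1 - krausMap V 1).PosSemidef)
    (hWA : ∀ j, krausMap W (A j) = B j) (hW : (1 - krausMap W 1).PosSemidef) :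
    krausMap V 1 = 1 ∧ ∀ j l, V l * A j = B j * V l := by
  let WV (p : κ × κ') : Matrix (Fin d) (Fin d) ℂ := W p.2 * V p.1
  have hslack : 1 - krausMap WV 1 = (1 - krausMap V 1) + krausMap V (1 - krausMap W 1) := by
    rw [krausMap_comp, krausMap_sub]
    abel
  have hWslack := posSemidef_krausMap hW V
  obtain ⟨hWV1, hcomm⟩ := hAmin.krausMap_rigid hA (V := WV)
    (fun j => by rw [krausMap_comp, hWA, hVB]) (hslack ▸ hV.add hWslack)
  rw [hWV1, sub_self] at hslack
  have hV1 : 1 - krausMap V 1 = 0 := Matrix.mulVec_injective <| funext fun x => by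
    rw [Matrix.zero_mulVec, mulVec_eq_zero_of_add hV hWslack]
    rw [← hslack, Matrix.zero_mulVec]
  have hWV (l) : krausMap W 1 * V l = V l := by
    refine (sub_eq_zero.1 (Matrix.mulVec_injective <| funext fun x => ?_)).symm
    rw [← Matrix.one_mul (V l), ← Matrix.mul_assoc, Matrix.mul_one, ← Matrix.sub_mul,
      Matrix.zero_mulVec, ← Matrix.mulVec_mulVec]
    refine mulVec_mulVec_eq_zero_of_krausMap hW ?_ l
    rw [← zero_add (krausMap V _), ← hV1, ← hslack, Matrix.zero_mulVec]
  refine ⟨(sub_eq_zero.1 hV1).symm, fun j l => ?_⟩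
  calc V l * A j = krausMap W 1 * V l * A j := by rw [hWV]
    _ = ∑ m, (W m)ᴴ * (W m * V l * A j) := by
        simp only [krausMap, Matrix.sum_mul, Matrix.mul_one, Matrix.mul_assoc]
    _ = ∑ m, (W m)ᴴ * (A j * (W m * V l)) :=
        Finset.sum_congr rfl fun m _ => by rw [hcomm j (l, m)]
    _ = B j * V l := by simp only [← hWA j, krausMap, Matrix.sum_mul, Matrix.mul_assoc]

end Pencils

section FunctionalCalculus

variable {𝕜 ι : Type*} [RCLike 𝕜] [Fintype ι]

theorem exists_commuting_pseudoinverse {S : Matrix ι ι 𝕜} (hS : S.IsHermitian) :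
    ∃ Q : Matrix ι ι 𝕜, S * Q * S = S ∧ ∀ C, Commute S C → Commute Q C := by
  classical
  refine ⟨cfc (fun t : ℝ => t⁻¹) S, ?_, fun C hC => hS.isSelfAdjoint.commute_cfc hC _⟩
  have hcont (f : ℝ → ℝ) : ContinuousOn f (spectrum ℝ S) := S.finite_real_spectrum.continuousOn f
  have hS' := hS.isSelfAdjoint
  calc S * cfc (fun t : ℝ => t⁻¹) S * S = cfc (fun t : ℝ => t * t⁻¹ * t) S := by
        rw [cfc_mul _ _ S (hcont _) (hcont _), cfc_mul _ _ S (hcont _) (hcont _), cfc_id' ℝ S]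
    _ = S := by simp only [mul_inv_mul_cancel, cfc_id' ℝ S]

open scoped MatrixOrder in
theorem exists_commuting_inverse_sqrt [DecidableEq ι] {P : Matrix ι ι 𝕜} (hP : P.PosDef) :
    ∃ Q : Matrix ι ι 𝕜, Q.IsHermitian ∧ Q * P * Q = 1 ∧ ∀ C, Commute P C → Commute Q C := by
  have hP' := hP.isHermitian.isSelfAdjoint
  refine ⟨cfc (fun t : ℝ => (√t)⁻¹) P, cfc_predicate _ P, ?_, fun C hC => hP'.commute_cfc hC _⟩
  have hcont (f : ℝ → ℝ) : ContinuousOn f (spectrum ℝ P) := P.finite_real_spectrum.continuousOn f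
  calc cfc (fun t : ℝ => (√t)⁻¹) P * P * cfc (fun t : ℝ => (√t)⁻¹) P
      = cfc (fun t : ℝ => (√t)⁻¹ * t * (√t)⁻¹) P := by
        rw [cfc_mul _ _ P (hcont _) (hcont _), cfc_mul _ _ P (hcont _) (hcont _), cfc_id' ℝ P]
    _ = cfc (fun _ : ℝ => 1) P := by
        refine cfc_congr fun t ht => ?_
        have ht' : 0 < t := hP.isStrictlyPositive.spectrum_pos ht
        have := Real.sqrt_pos.2 ht'
        field_simp
        exact (Real.sq_sqrt ht'.le).symm
    _ = 1 := cfc_const_one ℝ P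

end FunctionalCalculus

section Intertwiners

variable {𝕜 ι ι' τ : Type*} [RCLike 𝕜] [Fintype ι] [Fintype ι'] {A : τ → Matrix ι ι 𝕜}
  {B : τ → Matrix ι' ι' 𝕜}

theorem conjTranspose_intertwines (hA : ∀ j, (A j).IsHermitian) (hB : ∀ j, (B j).IsHermitian)
    {T : Matrix ι' ι 𝕜} (hT : ∀ j, T * A j = B j * T) (j : τ) : Tᴴ * B j = A j * Tᴴ := by
  simpa only [Matrix.conjTranspose_mul, (hA j).eq, (hB j).eq] using
    (congrArg Matrix.conjTranspose (hT j)).symm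

-- With `Q` a pseudoinverse of `T T*`, replacing `T` by `T + (1 - T T* Q) V` does not enlarge the
-- kernel, so if `ker T` has least dimension then `V` maps it into the range of `T`.
theorem exists_intertwiner_mapsTo_range (hA : ∀ j, (A j).IsHermitian)
    (hB : ∀ j, (B j).IsHermitian) :
    ∃ T : Matrix ι' ι 𝕜, (∀ j, T * A j = B j * T) ∧
      ∀ V : Matrix ι' ι 𝕜, (∀ j, V * A j = B j * V) →
        ∀ x, T *ᵥ x = 0 → ∃ z, V *ᵥ x = T *ᵥ z := by
  classical
  obtain ⟨T, hT, hmin⟩ := (measure fun T : Matrix ι' ι 𝕜 =>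
    Module.finrank 𝕜 (LinearMap.ker T.mulVecLin)).wf.has_min {T | ∀ j, T * A j = B j * T}
      ⟨0, fun j => by simp⟩
  have hT' : ∀ j, T * A j = B j * T := hT
  refine ⟨T, hT, fun V hV x hx => ?_⟩
  obtain ⟨Q, hQ, hQcomm⟩ :=
    exists_commuting_pseudoinverse (Matrix.isHermitian_mul_conjTranspose_self T)
  have hSB (j) : Commute (T * Tᴴ) (B j) := by
    rw [Commute, SemiconjBy, Matrix.mul_assoc, conjTranspose_intertwines hA hB hT,
      ← Matrix.mul_assoc, hT', Matrix.mul_assoc]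
  have hproj : Tᴴ * (1 - T * Tᴴ * Q) = 0 := by
    rw [← Matrix.self_mul_conjTranspose_mul_eq_zero, Matrix.mul_sub, Matrix.mul_one,
      (hQcomm _ (.refl _)).eq.symm, ← Matrix.mul_assoc (T * Tᴴ), hQ, sub_self]
  let T₁ := T + (1 - T * Tᴴ * Q) * V
  have hT₁ (j) : T₁ * A j = B j * T₁ := by
    have hcomm : Commute (1 - T * Tᴴ * Q) (B j) :=
      (Commute.one_left _).sub_left ((hSB j).mul_left (hQcomm _ (hSB j)))
    rw [Matrix.add_mul, Matrix.mul_add, hT', Matrix.mul_assoc, hV, ← Matrix.mul_assoc, hcomm.eq,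
      Matrix.mul_assoc]
  have hTT₁ : Tᴴ * T₁ = Tᴴ * T := by
    rw [Matrix.mul_add, ← Matrix.mul_assoc, hproj, Matrix.zero_mul, add_zero]
  have hle : LinearMap.ker T₁.mulVecLin ≤ LinearMap.ker T.mulVecLin := fun y hy => by
    rw [LinearMap.mem_ker, Matrix.mulVecLin_apply] at hy ⊢
    rw [← Matrix.conjTranspose_mul_self_mulVec_eq_zero, ← hTT₁, ← Matrix.mulVec_mulVec, hy,
      Matrix.mulVec_zero]
  have hker := Submodule.eq_of_le_of_finrank_le hle (not_lt.1 (hmin T₁ hT₁))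
  have hT₁x : T₁ *ᵥ x = 0 := hker.ge hx
  refine ⟨Tᴴ *ᵥ (Q *ᵥ (V *ᵥ x)), ?_⟩
  rw [Matrix.add_mulVec, hx, zero_add, Matrix.sub_mul, Matrix.one_mul, Matrix.sub_mulVec,
    sub_eq_zero] at hT₁x
  simpa only [Matrix.mulVec_mulVec, Matrix.mul_assoc] using hT₁x

theorem exists_intertwiner_separating (hA : ∀ j, (A j).IsHermitian)
    (hB : ∀ j, (B j).IsHermitian)
    (hsep : ∀ x ≠ 0, ∃ V : Matrix ι' ι 𝕜, (∀ j, V * A j = B j * V) ∧ V *ᵥ x ≠ 0) :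
    ∃ T : Matrix ι' ι 𝕜, (∀ j, T * A j = B j * T) ∧
      ∀ x ≠ 0, ∃ V : Matrix ι' ι 𝕜, (∀ j, V * A j = B j * V) ∧ (Tᴴ * V) *ᵥ x ≠ 0 := by
  obtain ⟨T, hT, hrange⟩ := exists_intertwiner_mapsTo_range hA hB
  refine ⟨T, hT, fun x hx => ?_⟩
  by_cases hTx : T *ᵥ x = 0
  · obtain ⟨V, hV, hVx⟩ := hsep x hx
    obtain ⟨z, hz⟩ := hrange V hV x hTx
    refine ⟨V, hV, ?_⟩
    rwa [← Matrix.mulVec_mulVec, hz, Matrix.mulVec_mulVec, ne_eq,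
      Matrix.conjTranspose_mul_self_mulVec_eq_zero, ← hz]
  · exact ⟨T, hT, by rwa [ne_eq, Matrix.conjTranspose_mul_self_mulVec_eq_zero]⟩

end Intertwiners

theorem IsMinimalPencil.exists_injective_intertwiner_of_separating {n d e : ℕ}
    {A : Fin n → Matrix (Fin d) (Fin d) ℂ} {B : Fin n → Matrix (Fin e) (Fin e) ℂ}
    (hAmin : IsMinimalPencil A) (hA : ∀ j, (A j).IsHermitian) (hB : ∀ j, (B j).IsHermitian)
    (hsep : ∀ x ≠ 0, ∃ V : Matrix (Fin e) (Fin d) ℂ, (∀ j, V * A j = B j * V) ∧ V *ᵥ x ≠ 0) :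
    ∃ T : Matrix (Fin e) (Fin d) ℂ, (∀ j, T * A j = B j * T) ∧ Function.Injective T.mulVec := by
  obtain ⟨T, hT, hTsep⟩ := exists_intertwiner_separating hA hB hsep
  have htop : LinearMap.range Tᴴ.mulVecLin = ⊤ := by
    refine hAmin.eq_top_of_columns_mem hA fun k X hX hnot => ?_
    obtain ⟨r, hr, -, h, hh, hGh⟩ :=
      exists_neg_eigenvector_posSemidef_sub (isHermitian_monicK hA hX) hnot
    obtain ⟨⟨i, a⟩, hia⟩ := Function.ne_iff.1 hh
    obtain ⟨V, hV, hVh⟩ := hTsep (fun p => h (p, a)) (Function.ne_iff.2 ⟨i, hia⟩)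
    have hcomm (j) : Tᴴ * V * A j = A j * (Tᴴ * V) := by
      rw [Matrix.mul_assoc, hV, ← Matrix.mul_assoc, conjTranspose_intertwines hA hB hT,
        Matrix.mul_assoc]
    refine ⟨((Tᴴ * V) ⊗ₖ (1 : Matrix (Fin k) (Fin k) ℂ)) *ᵥ h, fun b => ?_,
      quadForm_neg_of_mulVec_eq_smul hr (fun h0 => hVh ?_) ?_⟩
    · rw [kronecker_one_mulVec, ← Matrix.mulVec_mulVec]
      exact LinearMap.mem_range_self ..
    · rw [← kronecker_one_mulVec, h0]
      rfl
    · rw [Matrix.mulVec_mulVec, ← kronecker_one_mul_monicK hcomm, ← Matrix.mulVec_mulVec, hGh,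
        Matrix.mulVec_smul]
  refine ⟨T, hT, (injective_iff_map_eq_zero T.mulVecLin).2 fun x hx => ?_⟩
  obtain ⟨y, rfl⟩ := htop.ge (Submodule.mem_top (x := x))
  rw [Matrix.mulVecLin_apply, Matrix.mulVecLin_apply, Matrix.mulVec_mulVec] at hx
  rwa [Matrix.mulVecLin_apply, ← Matrix.self_mul_conjTranspose_mulVec_eq_zero]

section ConvexHull

variable {E : Type*} [AddCommGroup E] [Module ℝ E] [FiniteDimensional ℝ E]

-- Carathéodory's theorem, with the points indexed by an initial segment of `ℕ`.
theorem convexHull_eq_iUnion_image_stdSimplex (K : Set E) :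
    convexHull ℝ K = ⋃ m : Fin (Module.finrank ℝ E + 2),
      (fun p : (Fin m → ℝ) × (Fin m → E) => ∑ i, p.1 i • p.2 i) ''
        (stdSimplex ℝ (Fin m) ×ˢ Set.univ.pi fun _ => K) := by
  ext x
  simp only [Set.mem_iUnion, Set.mem_image, Set.mem_prod, Set.mem_univ_pi, Prod.exists]
  constructor
  · intro hx
    obtain ⟨ι, _, z, w, hz, hind, hw, hw1, hsum⟩ := eq_pos_convex_span_of_mem_convexHull hx
    have hcard : Fintype.card ι < Module.finrank ℝ E + 2 :=
      Nat.lt_succ_of_le (hind.card_le_finrank_succ.trans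
        (Nat.succ_le_succ (Submodule.finrank_le _)))
    let g := (Fintype.equivFin ι).symm
    refine ⟨⟨_, hcard⟩, w ∘ g, z ∘ g, ⟨⟨fun i => (hw _).le, ?_⟩, fun i => hz ⟨_, rfl⟩⟩, ?_⟩
    · rw [← hw1]
      exact g.sum_comp w
    · rw [← hsum]
      exact g.sum_comp fun i => w i • z i
  · rintro ⟨m, w, z, ⟨hw, hz⟩, rfl⟩
    exact (convex_convexHull ℝ K).sum_mem (fun i _ => hw.1 i) hw.2
      fun i _ => subset_convexHull ℝ K (hz i)

theorem isCompact_convexHull [TopologicalSpace E] [ContinuousAdd E] [ContinuousSMul ℝ E]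
    {K : Set E} (hK : IsCompact K) : IsCompact (convexHull ℝ K) := by
  rw [convexHull_eq_iUnion_image_stdSimplex]
  refine isCompact_iUnion fun m => ?_
  exact ((isCompact_stdSimplex ℝ (Fin m)).prod (isCompact_univ_pi fun _ => hK)).image (by fun_prop)

end ConvexHull

theorem exists_eq_sum_trace_mul_transpose {R ι τ : Type*} [CommSemiring R] [Fintype ι] [Fintype τ]
    (f : (τ → Matrix ι ι R) →ₗ[R] R) :
    ∃ N : τ → Matrix ι ι R, ∀ X, f X = ∑ t, (X t * (N t)ᵀ).trace := by
  classical
  refine ⟨fun t => .of fun a b => f (Pi.single t (Matrix.single a b 1)), fun X => ?_⟩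
  have hX : X = ∑ t, ∑ a, ∑ b, X t a b • Pi.single t (Matrix.single a b 1) :=
    calc X = ∑ t, Pi.single t (X t) := (Finset.univ_sum_single X).symm
      _ = ∑ t, Pi.single t (∑ a, ∑ b, X t a b • Matrix.single a b 1) := by
        simp only [Matrix.smul_single, smul_eq_mul, mul_one, ← Matrix.matrix_eq_sum_single]
      _ = ∑ t, ∑ a, ∑ b, X t a b • Pi.single t (Matrix.single a b 1) := by
        simp only [← LinearMap.single_apply R, map_sum, map_smul]
  conv_lhs => rw [hX]
  simp only [map_sum, map_smul, Matrix.trace, Matrix.diag, Matrix.mul_apply,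
    Matrix.transpose_apply, Matrix.of_apply, smul_eq_mul]

section Separation

variable {𝕜 ι ι' τ : Type*} [RCLike 𝕜] [Fintype ι] [Fintype ι'] [Fintype τ]

theorem quadForm_vec_kronecker (V : Matrix ι ι' 𝕜) (C : Matrix ι ι 𝕜) (N : Matrix ι' ι' 𝕜) :
    quadForm Vᵀ.vec (C ⊗ₖ N) = RCLike.re (Vᴴ * C * V * Nᵀ).trace := by
  have htr : (Vᵀᴴ * (N * Vᵀ * Cᵀ)).trace = (C * (V * Nᵀ) * Vᴴ).trace := by
    rw [← Matrix.trace_transpose]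
    simp only [Matrix.transpose_mul, Matrix.transpose_transpose]
    rfl
  rw [quadForm_apply, Matrix.kronecker_mulVec_vec, Matrix.star_vec_dotProduct_vec, htr,
    Matrix.trace_mul_comm]
  simp only [Matrix.mul_assoc]

theorem exists_trace_separating {K : Set (τ → Matrix ι ι 𝕜)} (hK : IsCompact K)
    {X₀ : τ → Matrix ι ι 𝕜} (hX₀ : X₀ ∉ convexHull ℝ K) :
    ∃ (N : τ → Matrix ι ι 𝕜) (u : ℝ), (RCLike.re (∑ t, (X₀ t * (N t)ᵀ).trace) < u) ∧
      ∀ X ∈ K, u < RCLike.re (∑ t, (X t * (N t)ᵀ).trace) := by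
  have : LocallyConvexSpace ℝ (Matrix ι ι 𝕜) := inferInstanceAs (LocallyConvexSpace ℝ (ι → ι → 𝕜))
  have : FiniteDimensional ℝ (Matrix ι ι 𝕜) := inferInstance
  obtain ⟨f, u, hu, hf⟩ := RCLike.geometric_hahn_banach_point_closed (𝕜 := 𝕜)
    (convex_convexHull ℝ K) (isCompact_convexHull hK).isClosed hX₀
  obtain ⟨N, hN⟩ := exists_eq_sum_trace_mul_transpose f.toLinearMap
  exact ⟨N, u, hN X₀ ▸ hu, fun X hX => hN X ▸ hf X (subset_convexHull ℝ K hX)⟩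

theorem exists_krausMap_of_mem_convexHull {μ σ : Type*} [Finite μ] [Finite σ]
    {B : σ → Matrix ι ι 𝕜} {s : Set (Matrix ι μ 𝕜)} {A : σ → Matrix μ μ 𝕜}
    (hA : A ∈ convexHull ℝ ((fun V t => Vᴴ * B t * V) '' s)) :
    ∃ (m : ℕ) (V : Fin m → Matrix ι μ 𝕜), ∀ t, krausMap V (B t) = A t := by
  cases nonempty_fintype μ
  cases nonempty_fintype σ
  have : FiniteDimensional ℝ (Matrix μ μ 𝕜) := inferInstance
  rw [convexHull_eq_iUnion_image_stdSimplex] at hA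
  obtain ⟨m, ⟨w, z⟩, ⟨hw, hz⟩, hwz⟩ := Set.mem_iUnion.1 hA
  choose V _ hV using fun i => hz i (Set.mem_univ i)
  replace hV (i) (t) : z i t = (V i)ᴴ * B t * V i := (congrFun (hV i) t).symm
  refine ⟨m, fun i => √(w i) • V i, fun t => ?_⟩
  simp only [← hwz, krausMap, Finset.sum_apply, Pi.smul_apply, hV, Matrix.conjTranspose_smul,
    Matrix.smul_mul, Matrix.mul_smul, smul_smul, star_trivial, Real.mul_self_sqrt (hw.1 _)]

theorem isCompact_setOf_quadForm_one_eq [DecidableEq ι] (c : ℝ) :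
    IsCompact {x : ι → 𝕜 | quadForm x 1 = c} := by
  have hnorm (x : ι → 𝕜) : quadForm x 1 = ‖WithLp.toLp 2 x‖ ^ 2 := by
    rw [quadForm_apply, Matrix.one_mulVec, ← inner_self_eq_norm_sq (𝕜 := 𝕜),
      EuclideanSpace.inner_toLp_toLp, dotProduct_comm]
  refine ((isCompact_closedBall (0 : EuclideanSpace 𝕜 ι) √c).image
    (PiLp.continuous_ofLp 2 _)).of_isClosed_subset
      (isClosed_eq (continuous_quadForm 1) continuous_const) fun x hx => ?_
  refine ⟨WithLp.toLp 2 x, mem_closedBall_zero_iff.2 (Real.le_sqrt_of_sq_le ?_), rfl⟩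
  exact (hnorm x ▸ hx.le)

theorem quadForm_pos_of_forall_quadForm_one_eq [DecidableEq ι] {G : Matrix ι ι 𝕜} {c : ℝ}
    (hc : 0 < c) (hG : ∀ x, quadForm x 1 = c → 0 < quadForm x G) {x : ι → 𝕜} (hx : x ≠ 0) :
    0 < quadForm x G := by
  have hx1 := quadForm_one_pos hx
  have := hG (√(c / quadForm x 1) • x) <| by
    rw [quadForm_smul, Real.sq_sqrt (by positivity), div_mul_cancel₀ _ hx1.ne']
  rw [quadForm_smul] at this
  exact pos_of_mul_pos_right this (sq_nonneg _)

theorem quadForm_sum_kronecker_add_conjTranspose {C : τ → Matrix ι ι 𝕜}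
    (hC : ∀ t, (C t).IsHermitian) (N : τ → Matrix ι' ι' 𝕜) (v : ι × ι' → 𝕜) :
    quadForm v (∑ t, C t ⊗ₖ (N t + (N t)ᴴ)) = 2 * quadForm v (∑ t, C t ⊗ₖ N t) := by
  have : ∑ t, C t ⊗ₖ (N t)ᴴ = (∑ t, C t ⊗ₖ N t)ᴴ := by
    simp only [Matrix.conjTranspose_sum, Matrix.conjTranspose_kronecker, (hC _).eq]
  simp only [Matrix.kronecker_add, Finset.sum_add_distrib, this, map_add, quadForm_conjTranspose]
  ring

theorem quadForm_sum_kronecker_add_single [DecidableEq ι] [DecidableEq ι'] [DecidableEq τ]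
    {C : τ → Matrix ι ι 𝕜} {o : τ} (hCo : C o = 1) (N : τ → Matrix ι' ι' 𝕜) (r : ℝ)
    (v : ι × ι' → 𝕜) :
    quadForm v (∑ t, C t ⊗ₖ (N + Pi.single o (r • 1) : τ → Matrix ι' ι' 𝕜) t) =
      quadForm v (∑ t, C t ⊗ₖ N t) + r * quadForm v 1 := by
  have hsingle : ∑ t, C t ⊗ₖ (Pi.single o (r • 1) : τ → Matrix ι' ι' 𝕜) t =
      r • (1 : Matrix (ι × ι') (ι × ι') 𝕜) := by
    rw [Fintype.sum_eq_single o fun t ht => by rw [Pi.single_eq_of_ne ht, Matrix.kronecker_zero],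
      Pi.single_eq_same, hCo, Matrix.kronecker_smul, Matrix.one_kronecker_one]
  simp only [Pi.add_apply, Matrix.kronecker_add, Finset.sum_add_distrib, hsingle, map_add,
    map_smul, smul_eq_mul]

theorem exists_sum_kronecker_separating [DecidableEq ι] [DecidableEq ι'] {A : τ → Matrix ι' ι' 𝕜}
    {B : τ → Matrix ι ι 𝕜} {o : τ} (hAo : A o = 1) (hBo : B o = 1)
    (hAB : ¬ ∃ (m : ℕ) (V : Fin m → Matrix ι ι' 𝕜), ∀ t, krausMap V (B t) = A t) :
    ∃ N : τ → Matrix ι' ι' 𝕜, (∀ v ≠ 0, 0 < quadForm v (∑ t, B t ⊗ₖ N t)) ∧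
      quadForm (Matrix.vec 1) (∑ t, A t ⊗ₖ N t) < 0 := by
  classical
  have : Nonempty ι' := not_isEmpty_iff.1 fun _ => hAB ⟨0, 0, fun t => Subsingleton.elim _ _⟩
  let c : ℝ := Fintype.card ι'
  have hc : 0 < c := Nat.cast_pos.2 Fintype.card_pos
  let unvec (v : ι × ι' → 𝕜) : Matrix ι ι' 𝕜 := .of fun p a => v (p, a)
  let K : Set (τ → Matrix ι' ι' 𝕜) :=
    (fun V t => Vᴴ * B t * V) '' (unvec '' {v | quadForm v 1 = c})
  have hK : IsCompact K := ((isCompact_setOf_quadForm_one_eq c).image (by fun_prop)).image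
    (by fun_prop)
  obtain ⟨N, u, hAN, hBN⟩ := exists_trace_separating hK fun hA => hAB <|
    exists_krausMap_of_mem_convexHull hA
  refine ⟨N + Pi.single o (-(u / c) • 1), fun v hv => ?_, ?_⟩
  · refine quadForm_pos_of_forall_quadForm_one_eq hc (fun w hw => ?_) hv
    have hwN := hBN _ ⟨_, ⟨w, hw, rfl⟩, rfl⟩
    rw [map_sum] at hwN
    simp only [← quadForm_vec_kronecker] at hwN
    rw [quadForm_sum_kronecker_add_single hBo, hw, neg_mul, div_mul_cancel₀ _ hc.ne', map_sum]
    exact sub_pos.2 hwN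
  · have hpair (C M : Matrix ι' ι' 𝕜) :
        quadForm (Matrix.vec 1) (C ⊗ₖ M) = RCLike.re (C * Mᵀ).trace := by
      simpa using quadForm_vec_kronecker 1 C M
    have h1 : quadForm (Matrix.vec (1 : Matrix ι' ι' 𝕜)) 1 = c := by
      rw [← Matrix.one_kronecker_one, hpair]
      simp [c]
    rw [map_sum] at hAN
    rw [quadForm_sum_kronecker_add_single hAo, h1, neg_mul, div_mul_cancel₀ _ hc.ne', map_sum]
    simp only [hpair]
    linarith

theorem exists_krausMap_eq_of_posDef {μ : Type*} [Finite μ] [DecidableEq ι] [DecidableEq μ]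
    {A : τ → Matrix μ μ 𝕜} {B : τ → Matrix ι ι 𝕜} {o : τ} (hAo : A o = 1) (hBo : B o = 1)
    (hA : ∀ t, (A t).IsHermitian) (hB : ∀ t, (B t).IsHermitian)
    (hAB : ∀ H : τ → Matrix μ μ 𝕜, (∀ t, (H t).IsHermitian) →
      (∑ t, B t ⊗ₖ H t).PosDef → (∑ t, A t ⊗ₖ H t).PosSemidef) :
    ∃ (m : ℕ) (V : Fin m → Matrix ι μ 𝕜), ∀ t, krausMap V (B t) = A t := by
  cases nonempty_fintype μ
  by_contra hcon
  obtain ⟨N, hBN, hAN⟩ := exists_sum_kronecker_separating hAo hBo hcon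
  let H (t : τ) : Matrix μ μ 𝕜 := N t + (N t)ᴴ
  have hH (t) : (H t).IsHermitian := Matrix.isHermitian_add_transpose_self _
  have hBH : (∑ t, B t ⊗ₖ H t).PosDef := by
    refine posDef_of_quadForm_pos (isHermitian_sum_kronecker hB hH) fun v hv => ?_
    rw [quadForm_sum_kronecker_add_conjTranspose hB]
    exact mul_pos two_pos (hBN v hv)
  have hAH := quadForm_nonneg (hAB H hH hBH) (Matrix.vec 1)
  rw [quadForm_sum_kronecker_add_conjTranspose hA] at hAH
  linarith

end Separation

theorem krausMap_fromBlocks_diagonal {R ι₁ ι₂ ι' κ : Type*} [Semiring R] [StarRing R]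
    [Fintype ι₁] [Fintype ι₂] [Fintype κ] (V : κ → Matrix (ι₁ ⊕ ι₂) ι' R) (C : Matrix ι₁ ι₁ R)
    (D : Matrix ι₂ ι₂ R) :
    krausMap V (.fromBlocks C 0 0 D) =
      krausMap (fun l => (V l).toRows₁) C + krausMap (fun l => (V l).toRows₂) D := by
  rw [krausMap, krausMap, krausMap, ← Finset.sum_add_distrib]
  refine Finset.sum_congr rfl fun l _ => ?_
  nth_rw 1 2 [← Matrix.fromRows_toRows (V l)]
  simp only [Matrix.conjTranspose_fromRows_eq_fromCols_conjTranspose, Matrix.mul_assoc,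
    Matrix.fromBlocks_mul_fromRows, Matrix.fromCols_mul_fromRows, Matrix.zero_mul, add_zero,
    zero_add]

theorem exists_unitary_of_injective_intertwiner {𝕜 ι τ : Type*} [RCLike 𝕜] [Fintype ι]
    [DecidableEq ι] {A B : τ → Matrix ι ι 𝕜} (hA : ∀ j, (A j).IsHermitian)
    (hB : ∀ j, (B j).IsHermitian) {T : Matrix ι ι 𝕜} (hT : ∀ j, T * A j = B j * T)
    (hTinj : Function.Injective T.mulVec) :
    ∃ U ∈ Matrix.unitaryGroup ι 𝕜, ∀ j, B j = U * A j * star U := by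
  obtain ⟨Q, hQ, hQTQ, hQcomm⟩ :=
    exists_commuting_inverse_sqrt (Matrix.PosDef.conjTranspose_mul_self T hTinj)
  have hU : T * Q ∈ Matrix.unitaryGroup ι 𝕜 := by
    rw [Matrix.mem_unitaryGroup_iff', Matrix.star_eq_conjTranspose, Matrix.conjTranspose_mul, hQ.eq]
    simpa only [Matrix.mul_assoc] using hQTQ
  refine ⟨T * Q, hU, fun j => ?_⟩
  have hcomm : Commute (Tᴴ * T) (A j) := by
    rw [Commute, SemiconjBy, Matrix.mul_assoc, hT, ← Matrix.mul_assoc,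
      conjTranspose_intertwines hA hB hT, Matrix.mul_assoc]
  have hUA : T * Q * A j = B j * (T * Q) := by
    rw [Matrix.mul_assoc, (hQcomm _ hcomm).eq, ← Matrix.mul_assoc, hT, Matrix.mul_assoc]
  rw [hUA, Matrix.mul_assoc, Matrix.mem_unitaryGroup_iff.1 hU, Matrix.mul_one]

section Spectrahedra

variable {n d e k : ℕ} {A : Fin n → Matrix (Fin d) (Fin d) ℂ}
  {B : Fin n → Matrix (Fin e) (Fin e) ℂ}

theorem posSemidef_monicK_conj_iff {P Q : Matrix (Fin k) (Fin k) ℂ} (hQ : Q.IsHermitian)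
    (hQPQ : Q * P * Q = 1) (A : Fin n → Matrix (Fin d) (Fin d) ℂ)
    (H : Fin n → Matrix (Fin k) (Fin k) ℂ) :
    (monicK A fun j => Q * H j * Q).PosSemidef ↔
      ((1 : Matrix (Fin d) (Fin d) ℂ) ⊗ₖ P + ∑ j, A j ⊗ₖ H j).PosSemidef := by
  let R := (1 : Matrix (Fin d) (Fin d) ℂ) ⊗ₖ Q
  have hR : IsUnit R := Matrix.IsUnit.kronecker isUnit_one <|
    .of_mul_eq_one (P * Q) (by rw [← Matrix.mul_assoc, hQPQ])
  have hconj : (monicK A fun j => Q * H j * Q) =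
      star R * ((1 : Matrix (Fin d) (Fin d) ℂ) ⊗ₖ P + ∑ j, A j ⊗ₖ H j) * R := by
    simp only [R, Matrix.star_eq_conjTranspose, Matrix.conjTranspose_kronecker,
      Matrix.conjTranspose_one, hQ.eq, Matrix.mul_add, Matrix.add_mul, Matrix.mul_sum,
      Matrix.sum_mul, ← Matrix.mul_kronecker_mul, Matrix.one_mul, Matrix.mul_one, hQPQ,
      Matrix.one_kronecker_one, monicK]
  rw [hconj, Matrix.IsUnit.posSemidef_star_left_conjugate_iff hR]

-- Adjoining a slack block to `B`, on which only the constant coefficient acts, allows the Kraus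
-- operators to be subunital and forces the constant coefficient `H₀` to be positive definite.
theorem exists_krausMap_eq_of_forall_posSemidef (hA : ∀ j, (A j).IsHermitian)
    (hB : ∀ j, (B j).IsHermitian)
    (hBA : ∀ (k : ℕ) (X : Fin n → Matrix (Fin k) (Fin k) ℂ), (∀ j, (X j).IsHermitian) →
      (monicK B X).PosSemidef → (monicK A X).PosSemidef) :
    ∃ (m : ℕ) (V : Fin m → Matrix (Fin e) (Fin d) ℂ),
      (∀ j, krausMap V (B j) = A j) ∧ (1 - krausMap V 1).PosSemidef := by
  let A' (t : Option (Fin n)) : Matrix (Fin d) (Fin d) ℂ := t.elim 1 A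
  let B' (t : Option (Fin n)) : Matrix (Fin e ⊕ Unit) (Fin e ⊕ Unit) ℂ :=
    .fromBlocks (t.elim 1 B) 0 0 (t.elim 1 0)
  have hA' (t) : (A' t).IsHermitian := t.casesOn Matrix.isHermitian_one hA
  have hB' (t) : (B' t).IsHermitian :=
    .fromBlocks (t.casesOn Matrix.isHermitian_one hB) Matrix.conjTranspose_zero
      (t.casesOn Matrix.isHermitian_one fun _ => Matrix.isHermitian_zero)
  obtain ⟨m, V, hV⟩ := exists_krausMap_eq_of_posDef (A := A') (B := B') (o := none) rfl
    Matrix.fromBlocks_one hA' hB' fun H hH hBH => by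
      have hpencil : (∑ t, B' t ⊗ₖ H t).submatrix (Prod.map Sum.inl id) (Prod.map Sum.inl id) =
          (1 : Matrix (Fin e) (Fin e) ℂ) ⊗ₖ H none + ∑ j, B j ⊗ₖ H (some j) := by
        ext p q
        simp [B', Fintype.sum_option, Matrix.sum_apply, Matrix.one_apply]
      have hslack : (∑ t, B' t ⊗ₖ H t).submatrix (Prod.mk (.inr ())) (Prod.mk (.inr ())) =
          H none := by
        ext p q
        simp [B', Fintype.sum_option, Matrix.sum_apply]
      obtain ⟨Q, hQ, hQHQ, -⟩ := exists_commuting_inverse_sqrt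
        (hslack ▸ hBH.submatrix (Prod.mk_right_injective _))
      rw [Fintype.sum_option]
      refine (posSemidef_monicK_conj_iff hQ hQHQ A _).1 (hBA d _ (fun j => ?_) <|
        (posSemidef_monicK_conj_iff hQ hQHQ B _).2 (hpencil ▸ hBH.posSemidef.submatrix _))
      simpa only [hQ.eq] using Matrix.isHermitian_conjTranspose_mul_mul Q (hH (some j))
  simp only [B', krausMap_fromBlocks_diagonal] at hV
  refine ⟨m, fun l => (V l).toRows₁, fun j => ?_, ?_⟩
  · simpa [krausMap, A'] using hV (some j)
  · have hV1 : krausMap (fun l => (V l).toRows₁) 1 + krausMap (fun l => (V l).toRows₂) 1 = 1 :=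
      hV none
    rw [sub_eq_of_eq_add' hV1.symm]
    exact posSemidef_krausMap Matrix.PosSemidef.one _

theorem SameFreeSpectrahedron.symm (h : SameFreeSpectrahedron A B) : SameFreeSpectrahedron B A :=
  fun k X hX => (h k X hX).symm

theorem sameFreeSpectrahedron_unitary_conj {U : Matrix (Fin d) (Fin d) ℂ}
    (hU : U ∈ Matrix.unitaryGroup (Fin d) ℂ) (A : Fin n → Matrix (Fin d) (Fin d) ℂ) :
    SameFreeSpectrahedron A fun j => U * A j * star U := fun k X _ => by
  have hunit : IsUnit (Uᴴ ⊗ₖ (1 : Matrix (Fin k) (Fin k) ℂ)) :=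
    Matrix.IsUnit.kronecker (.of_mul_eq_one U (Matrix.mem_unitaryGroup_iff'.1 hU)) isUnit_one
  rw [← Matrix.IsUnit.posSemidef_star_left_conjugate_iff hunit, Matrix.star_eq_conjTranspose,
    conjTranspose_mul_monicK_mul] <;> rw [Matrix.conjTranspose_conjTranspose]
  · rfl
  · exact Matrix.mem_unitaryGroup_iff.1 hU

theorem SameFreeSpectrahedron.exists_injective_intertwiner (hAB : SameFreeSpectrahedron A B)
    (hAmin : IsMinimalPencil A) (hA : ∀ j, (A j).IsHermitian) (hB : ∀ j, (B j).IsHermitian) :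
    ∃ T : Matrix (Fin e) (Fin d) ℂ, (∀ j, T * A j = B j * T) ∧ Function.Injective T.mulVec := by
  obtain ⟨m, V, hVB, hV⟩ :=
    exists_krausMap_eq_of_forall_posSemidef hA hB fun k X hX => (hAB k X hX).2
  obtain ⟨m', W, hWA, hW⟩ :=
    exists_krausMap_eq_of_forall_posSemidef hB hA fun k X hX => (hAB k X hX).1
  obtain ⟨hV1, hVAB⟩ := hAmin.krausMap_intertwines hA hVB hV hWA hW
  refine hAmin.exists_injective_intertwiner_of_separating hA hB fun x hx => ?_
  by_contra! hzero
  refine hx ?_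
  rw [← Matrix.one_mulVec x, ← hV1, krausMap, Matrix.sum_mulVec]
  exact Finset.sum_eq_zero fun l _ => by
    rw [← Matrix.mulVec_mulVec, hzero (V l) fun j => hVAB j l, Matrix.mulVec_zero]

end Spectrahedra

/-- minimal monic hermitian pencils define the same free spectrahedron
iff they are unitarily similar. -/
theorem minimal_monic_hermitian_pencils_unique {n d e : ℕ}
    (A : Fin n → Matrix (Fin d) (Fin d) ℂ) (B : Fin n → Matrix (Fin e) (Fin e) ℂ)
    (hAherm : ∀ j, (A j).IsHermitian) (hBherm : ∀ j, (B j).IsHermitian)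
    (hAmin : ∀ (e' : ℕ) (C : Fin n → Matrix (Fin e') (Fin e') ℂ),
      (∀ j, (C j).IsHermitian) → SameFreeSpectrahedron A C → d ≤ e')
    (hBmin : ∀ (e' : ℕ) (C : Fin n → Matrix (Fin e') (Fin e') ℂ),
      (∀ j, (C j).IsHermitian) → SameFreeSpectrahedron B C → e ≤ e') :
    SameFreeSpectrahedron A B ↔
      ∃ h : d = e, ∃ U ∈ Matrix.unitaryGroup (Fin e) ℂ,
        ∀ j, B j = U * (Matrix.reindex (finCongr h) (finCongr h) (A j)) * star U := by
  constructor
  · intro hAB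
    obtain rfl : d = e := (hAmin e B hBherm hAB).antisymm (hBmin d A hAherm hAB.symm)
    obtain ⟨T, hT, hTinj⟩ := hAB.exists_injective_intertwiner hAmin hAherm hBherm
    exact ⟨rfl, exists_unitary_of_injective_intertwiner hAherm hBherm hT hTinj⟩
  · rintro ⟨rfl, U, hU, hUA⟩
    obtain rfl : B = fun j => U * A j * star U := funext hUA
    exact sameFreeSpectrahedron_unitary_conj hU A
end

section
/- Helton–McCullough theorem (convexity forces an LMI representation): let f = f* ∈ M_d(ℂ⟨x⟩) with f(0) positive definite. Then the free semialgebraic set D_f is convex (i.e., for every k ∈ ℕ, D_f(k) is a convex subset of the real vector space (H_k)ⁿ) if and only if D_f is a free spectrahedron, i.e., there exists a hermitian linear matrix pencil L with D_f = D_L. -/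
open scoped Kronecker Matrix ComplexOrder

/-!
Homogenized compressions `(V* V, V* Y₁ V, …, V* Yₙ V)` of points `Y` of `D_f` form a convex cone of
tuples of hermitian matrices. By trace duality, a linear functional nonnegative on this cone is a
linear pencil that is positive semidefinite on `D_f`.

For a Krylov family `V = (w(X) v)`, indexed by the words `w` of length at most `δ = deg f`, the
quadratic form of `f(X)` at `v` is a linear functional of `V* V`. Consider this functional on the
subspace of tuples that obey the Hankel relations `(V* Xⱼ V)_{u, w} = (V* V)_{u, xⱼ w}`. It is
nonnegative on those tuples of the subspace that are compressions of some `Y ∈ D_f`: pinching `Y`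
along the range of `V` turns `V` into a Krylov family of the pinched tuple, and convexity keeps the
pinched tuple in `D_f`. Since `f(0) ≻ 0`, the subspace contains an order unit of the cone, built
from the truncated Fock space. The M. Riesz extension theorem then extends the functional to one
that is nonnegative on the whole cone, and the resulting pencil defines `D_f`.
-/

namespace HeltonMcCullough

open Filter Topology

section LinearAlgebra

variable {ι κ : Type*} [Fintype ι]

theorem posSemidef_iff_re_nonneg {M : Matrix ι ι ℂ} (hM : M.IsHermitian) :
    M.PosSemidef ↔ ∀ v, 0 ≤ (star v ⬝ᵥ M *ᵥ v).re :=
  ⟨fun h v => h.re_dotProduct_nonneg v, fun h => .of_dotProduct_mulVec_nonneg hM fun v =>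
    RCLike.nonneg_iff.2 ⟨h v, hM.im_star_dotProduct_mulVec_self v⟩⟩

theorem posDef_of_re_pos_on_sphere {M : Matrix ι ι ℂ} (hM : M.IsHermitian)
    (h : ∀ v ∈ Metric.sphere (0 : ι → ℂ) 1, 0 < (star v ⬝ᵥ M *ᵥ v).re) : M.PosDef := by
  refine .of_dotProduct_mulVec_pos hM fun v hv =>
    RCLike.pos_iff.2 ⟨?_, hM.im_star_dotProduct_mulVec_self v⟩
  have hv' : 0 < ‖v‖ := norm_pos_iff.2 hv
  have hu : ‖((‖v‖⁻¹ : ℝ) : ℂ) • v‖ = 1 := by simp [norm_smul, hv'.ne']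
  have key : (star (((‖v‖⁻¹ : ℝ) : ℂ) • v) ⬝ᵥ M *ᵥ (((‖v‖⁻¹ : ℝ) : ℂ) • v)).re =
      ‖v‖⁻¹ * (‖v‖⁻¹ * (star v ⬝ᵥ M *ᵥ v).re) := by
    simp [Matrix.mulVec_smul]
  have := h _ (mem_sphere_zero_iff_norm.2 hu)
  rw [key] at this
  exact pos_of_mul_pos_right (pos_of_mul_pos_right this (by positivity)) (by positivity)

theorem eventually_posDef_of_isHermitian {ι : Type*} [Finite ι] {M₀ : Matrix ι ι ℂ}
    (h : M₀.PosDef) :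
    ∀ᶠ M in 𝓝 M₀, M.IsHermitian → M.PosDef := by
  cases nonempty_fintype ι
  have hcont : Continuous fun z : Matrix ι ι ℂ × (ι → ℂ) => (star z.2 ⬝ᵥ z.1 *ᵥ z.2).re := by
    fun_prop
  have hsphere : ∀ᶠ M in 𝓝 M₀, ∀ v ∈ Metric.sphere (0 : ι → ℂ) 1,
      0 < (star v ⬝ᵥ M *ᵥ v).re := by
    refine (isCompact_sphere _ _).eventually_forall_of_forall_eventually fun v hv =>
      hcont.continuousAt.eventually_const_lt ?_
    exact h.re_dotProduct_pos (Metric.ne_of_mem_sphere hv one_ne_zero)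
  exact hsphere.mono fun M hM hherm => posDef_of_re_pos_on_sphere hherm hM

theorem eventually_posDef_smul_add {ι : Type*} [Finite ι] {P H : Matrix ι ι ℂ} (hP : P.PosDef)
    (hH : H.IsHermitian) :
    ∀ᶠ r : ℝ in atTop, (r • P + H).PosDef := by
  have hlim : Tendsto (fun r : ℝ => P + r⁻¹ • H) atTop (𝓝 P) := by
    simpa using tendsto_const_nhds.add ((tendsto_inv_atTop_zero (𝕜 := ℝ)).smul_const H)
  filter_upwards [hlim.eventually (eventually_posDef_of_isHermitian hP), eventually_gt_atTop 0]
    with r hr hr0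
  have hdef := (hr (hP.isHermitian.add (.smul hH (.all _)))).smul hr0
  rwa [smul_add, smul_inv_smul₀ hr0.ne'] at hdef

theorem exists_isSelfAdjoint_mul_mul_eq_self {A : Matrix ι ι ℂ} (hA : IsSelfAdjoint A) :
    ∃ B : Matrix ι ι ℂ, IsSelfAdjoint B ∧ A * B * A = A := by
  classical
  have hcont (f : ℝ → ℝ) : ContinuousOn f (spectrum ℝ A) :=
    A.finite_real_spectrum.continuousOn f
  refine ⟨cfc (·⁻¹ : ℝ → ℝ) A, cfc_predicate _ A, ?_⟩
  nth_rw 1 3 [← cfc_id' ℝ A hA]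
  rw [← cfc_mul _ _ A (hcont _) (hcont _), ← cfc_mul _ _ A (hcont _) (hcont _)]
  simp only [mul_inv_mul_cancel, cfc_id' ℝ A hA]

theorem exists_isStarProjection_mul [Fintype κ] (V : Matrix ι κ ℂ) :
    ∃ R : Matrix κ ι ℂ, IsStarProjection (V * R) ∧ V * R * V = V := by
  obtain ⟨B, hB, hBV⟩ := exists_isSelfAdjoint_mul_mul_eq_self
    (Matrix.isHermitian_conjTranspose_mul_self V).isSelfAdjoint
  have hV : V * (B * Vᴴ) * V = V := by
    rw [← sub_eq_zero, ← Matrix.conjTranspose_mul_self_eq_zero]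
    simp only [Matrix.conjTranspose_sub, Matrix.conjTranspose_mul,
      Matrix.conjTranspose_conjTranspose, hB.isHermitian.eq, Matrix.sub_mul, Matrix.mul_sub,
      Matrix.mul_assoc] at hBV ⊢
    simp only [hBV, sub_self]
  refine ⟨B * Vᴴ, ⟨?_, ?_⟩, hV⟩
  · rw [IsIdempotentElem, ← Matrix.mul_assoc, hV]
  · rw [← Matrix.mul_assoc]
    exact Matrix.isHermitian_mul_mul_conjTranspose V hB

theorem isUnit_of_forall_le_eq_ite {α : Type*} [DecidableEq ι] [LinearOrder α]
    {M : Matrix ι ι ℂ} {b : ι → α} {d : ι → ℂ} (hd : ∀ i, d i ≠ 0)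
    (h : ∀ i j, b j ≤ b i → M i j = if i = j then d j else 0) : IsUnit M := by
  have htri : M.BlockTriangular b := fun i j hij => by
    rw [h i j hij.le, if_neg (by rintro rfl; exact hij.false)]
  rw [Matrix.isUnit_iff_isUnit_det, isUnit_iff_ne_zero, htri.det]
  refine Finset.prod_ne_zero_iff.2 fun k _ => ?_
  have hblock : M.toSquareBlock b k = .diagonal fun i => d i := by
    ext i j
    rw [Matrix.toSquareBlock_def, Matrix.of_apply, h _ _ (j.2.trans i.2.symm).le]
    obtain rfl | hij := eq_or_ne i j <;> simp [Subtype.coe_inj, *]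
  rw [hblock, Matrix.det_diagonal]
  exact Finset.prod_ne_zero_iff.2 fun i _ => hd i

end LinearAlgebra

section Monomials

variable {n : ℕ}

/-- The monomial of `ℂ⟨x⟩` spelled by the word `w`. -/
noncomputable def monomial (w : List (Fin n)) : FreeAlg n :=
  (w.map (FreeAlgebra.ι ℂ)).prod

theorem equivMonoidAlgebraFreeMonoid_symm_single (w : FreeMonoid (Fin n)) (c : ℂ) :
    FreeAlgebra.equivMonoidAlgebraFreeMonoid.symm (MonoidAlgebra.single w c) =
      c • monomial w.toList := by
  rw [FreeAlgebra.equivMonoidAlgebraFreeMonoid, AlgEquiv.ofAlgHom_symm]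
  simp [monomial, FreeMonoid.lift_apply]

theorem monomial_induction {motive : FreeAlg n → Prop} (a : FreeAlg n)
    (add : ∀ a b, motive a → motive b → motive (a + b))
    (smul_monomial : ∀ (c : ℂ) w, motive (c • monomial w)) : motive a := by
  obtain ⟨b, rfl⟩ := FreeAlgebra.equivMonoidAlgebraFreeMonoid.symm.surjective a
  induction b using MonoidAlgebra.induction_linear with
  | zero => simpa using smul_monomial 0 []
  | add b c hb hc => simpa only [map_add] using add _ _ hb hc
  | single w c =>
    simpa only [equivMonoidAlgebraFreeMonoid_symm_single] using smul_monomial c w.toList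

theorem nstar_add (a b : FreeAlg n) : nstar (a + b) = nstar a + nstar b := by
  simp only [nstar, map_add, MonoidAlgebra.coeff_add, Finsupp.mapDomain_add,
    Finsupp.mapRange_add (map_add (starRingEnd ℂ)), MonoidAlgebra.ofCoeff_add]

theorem nstar_smul_monomial (c : ℂ) (w : List (Fin n)) :
    nstar (c • monomial w) = star c • monomial w.reverse := by
  have h := equivMonoidAlgebraFreeMonoid_symm_single (FreeMonoid.ofList w) c
  rw [FreeMonoid.toList_ofList] at h
  rw [← h, nstar, AlgEquiv.apply_symm_apply, MonoidAlgebra.coeff_single, Finsupp.mapRange_single,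
    Finsupp.mapDomain_single]
  exact equivMonoidAlgebraFreeMonoid_symm_single ..

theorem degLE_mono {δ δ' : ℕ} (h : δ ≤ δ') : degLE n δ ≤ degLE n δ' :=
  Submodule.span_mono fun _ ⟨w, hw, ha⟩ => ⟨w, hw.trans h, ha⟩

theorem exists_mem_degLE (a : FreeAlg n) : ∃ δ, a ∈ degLE n δ := by
  induction a using monomial_induction with
  | add a b ha hb =>
    obtain ⟨⟨δ, ha⟩, ⟨δ', hb⟩⟩ := And.intro ha hb
    exact ⟨max δ δ', add_mem (degLE_mono (le_max_left _ _) ha) (degLE_mono (le_max_right _ _) hb)⟩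
  | smul_monomial c w =>
    exact ⟨w.length, Submodule.smul_mem _ c (Submodule.subset_span ⟨w, le_rfl, rfl⟩)⟩

theorem exists_matDegLE {I J : Type*} [Finite I] [Finite J] (f : Matrix I J (FreeAlg n)) :
    ∃ δ, matDegLE f δ := by
  choose δ hδ using fun p : I × J => exists_mem_degLE (f p.1 p.2)
  obtain ⟨M, hM⟩ := (Set.finite_range δ).bddAbove
  exact ⟨M, fun i j => degLE_mono (hM ⟨(i, j), rfl⟩) (hδ (i, j))⟩

/-- Words of length at most `δ`; they index the Krylov vectors below. -/
abbrev Word (n δ : ℕ) := {w : List (Fin n) // w.length ≤ δ}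

noncomputable instance (δ : ℕ) : Fintype (Word n δ) :=
  (List.finite_length_le (Fin n) δ).fintype

theorem exists_eq_sum_monomial {I J : Type*} {δ : ℕ} {f : Matrix I J (FreeAlg n)}
    (hf : matDegLE f δ) :
    ∃ C : Word n δ → Matrix I J ℂ, ∀ i j, f i j = ∑ w, C w i j • monomial w.1 := by
  have hspan : degLE n δ = Submodule.span ℂ (Set.range fun w : Word n δ => monomial w.1) := by
    rw [degLE]
    congr 1
    ext a
    simp [monomial, eq_comm]
  choose c hc using fun i j => (Submodule.mem_span_range_iff_exists_fun ℂ).1 (hspan ▸ hf i j)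
  exact ⟨fun w => .of fun i j => c i j w, fun i j => (hc i j).symm⟩

end Monomials

section Evaluation

variable {n : ℕ} {ι κ I J : Type*} [Fintype ι] [DecidableEq ι] [Fintype κ] [DecidableEq κ]

theorem lift_monomial (X : Fin n → Matrix ι ι ℂ) (w : List (Fin n)) :
    FreeAlgebra.lift ℂ X (monomial w) = (w.map X).prod := by
  simp [monomial, map_list_prod, Function.comp_def]

theorem lift_nstar {X : Fin n → Matrix ι ι ℂ} (hX : ∀ j, (X j).IsHermitian) (a : FreeAlg n) :
    FreeAlgebra.lift ℂ X (nstar a) = (FreeAlgebra.lift ℂ X a)ᴴ := by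
  induction a using monomial_induction with
  | add a b ha hb => rw [nstar_add, map_add, ha, hb, map_add, Matrix.conjTranspose_add]
  | smul_monomial c w =>
    simp only [nstar_smul_monomial, map_smul, lift_monomial, Matrix.conjTranspose_smul,
      Matrix.conjTranspose_list_prod, List.map_map, List.map_reverse]
    simp only [Function.comp_def, (hX _).eq]

theorem lift_mul_of_intertwines {X : Fin n → Matrix ι ι ℂ} {Y : Fin n → Matrix κ κ ℂ}
    {T : Matrix κ ι ℂ} (hT : ∀ j, Y j * T = T * X j) (a : FreeAlg n) :
    FreeAlgebra.lift ℂ Y a * T = T * FreeAlgebra.lift ℂ X a := by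
  induction a using FreeAlgebra.induction with
  | grade0 c => simp [Algebra.algebraMap_eq_smul_one]
  | grade1 j => simpa using hT j
  | mul a b ha hb =>
    rw [map_mul, map_mul, Matrix.mul_assoc, hb, ← Matrix.mul_assoc, ha, Matrix.mul_assoc]
  | add a b ha hb => rw [map_add, map_add, Matrix.add_mul, ha, hb, Matrix.mul_add]

theorem continuous_lift (a : FreeAlg n) :
    Continuous fun X : Fin n → Matrix ι ι ℂ => FreeAlgebra.lift ℂ X a := by
  induction a using FreeAlgebra.induction with
  | grade0 c => simpa only [AlgHom.commutes] using continuous_const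
  | grade1 j => simpa using continuous_apply j
  | mul a b ha hb => simp only [map_mul]; exact Continuous.mul ha hb
  | add a b ha hb => simp only [map_add]; exact ha.add hb

theorem lift_zero (a : FreeAlg n) :
    FreeAlgebra.lift ℂ (0 : Fin n → Matrix ι ι ℂ) a =
      algebraMap ℂ _ (FreeAlgebra.lift ℂ (fun _ : Fin n => (0 : ℂ)) a) := by
  induction a using FreeAlgebra.induction with
  | grade0 c => simp
  | grade1 j => simp
  | mul a b ha hb => simp only [map_mul, ha, hb]
  | add a b ha hb => simp only [map_add, ha, hb]

/-- The evaluation `f(X)` at a tuple of matrices indexed by an arbitrary finite type; `evalM` is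
the case of `Fin k`. -/
noncomputable def matEval (f : Matrix I J (FreeAlg n)) (X : Fin n → Matrix ι ι ℂ) :
    Matrix (I × ι) (J × ι) ℂ :=
  .of fun p q => FreeAlgebra.lift ℂ X (f p.1 q.1) p.2 q.2

theorem continuous_matEval (f : Matrix I J (FreeAlg n)) :
    Continuous fun X : Fin n → Matrix ι ι ℂ => matEval f X :=
  continuous_matrix fun p q => (continuous_lift (f p.1 q.1)).matrix_elem p.2 q.2

theorem isHermitian_matEval {f : Matrix I I (FreeAlg n)} (hf : IsHermPoly f)
    {X : Fin n → Matrix ι ι ℂ} (hX : ∀ j, (X j).IsHermitian) : (matEval f X).IsHermitian := by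
  ext p q
  simp [matEval, Matrix.conjTranspose_apply, hf p.1 q.1, lift_nstar hX]

theorem matEval_zero (f : Matrix I J (FreeAlg n)) :
    matEval f (0 : Fin n → Matrix ι ι ℂ) = evalZero f ⊗ₖ (1 : Matrix ι ι ℂ) := by
  ext p q
  simp [matEval, evalZero, lift_zero, Matrix.algebraMap_matrix_apply, Matrix.one_apply]

theorem matEval_mul_kronecker [Fintype I] [DecidableEq I] [Fintype J] [DecidableEq J]
    (f : Matrix I J (FreeAlg n)) {X : Fin n → Matrix ι ι ℂ}
    {Y : Fin n → Matrix κ κ ℂ} {T : Matrix κ ι ℂ} (hT : ∀ j, Y j * T = T * X j) :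
    matEval f Y * ((1 : Matrix J J ℂ) ⊗ₖ T) = ((1 : Matrix I I ℂ) ⊗ₖ T) * matEval f X := by
  ext p q
  have := congrFun₂ (lift_mul_of_intertwines hT (f p.1 q.1)) p.2 q.2
  simpa [Matrix.mul_apply, Fintype.sum_prod_type, Matrix.one_apply, matEval] using this

theorem matEval_eq_sum_kronecker {δ : ℕ} {f : Matrix I J (FreeAlg n)}
    {C : Word n δ → Matrix I J ℂ} (hC : ∀ i j, f i j = ∑ w, C w i j • monomial w.1)
    (X : Fin n → Matrix ι ι ℂ) : matEval f X = ∑ w, C w ⊗ₖ (w.1.map X).prod := by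
  ext p q
  simp [matEval, hC, lift_monomial, Matrix.sum_apply]

end Evaluation

section FreeSemialgebraicSet

variable {n : ℕ} {I ι κ : Type*} [Fintype ι] [DecidableEq ι] [Fintype κ] [DecidableEq κ]

/-- The level `D_f(ι)` of the free semialgebraic set of `f`, for an arbitrary finite index type. -/
def freeSemialgebraicSet (f : Matrix I I (FreeAlg n)) (ι : Type*) [Fintype ι] [DecidableEq ι] :
    Set (Fin n → Matrix ι ι ℂ) :=
  {X | (∀ j, (X j).IsHermitian) ∧ (matEval f X).PosSemidef}

theorem convex_freeSemialgebraicSet_iff {f : Matrix I I (FreeAlg n)} {k : ℕ} :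
    Convex ℝ (freeSemialgebraicSet f (Fin k)) ↔
      ∀ X Y : Fin n → Matrix (Fin k) (Fin k) ℂ,
        (∀ j, (X j).IsHermitian) → (∀ j, (Y j).IsHermitian) →
        (evalM f X).PosSemidef → (evalM f Y).PosSemidef →
        ∀ t : ℝ, 0 ≤ t → t ≤ 1 →
          (evalM f (fun j => (t : ℂ) • X j + ((1 - t : ℝ) : ℂ) • Y j)).PosSemidef := by
  simp only [Complex.coe_smul]
  constructor
  · intro h X Y hX hY hfX hfY t ht ht'
    exact (h ⟨hX, hfX⟩ ⟨hY, hfY⟩ ht (sub_nonneg.2 ht') (add_sub_cancel _ _)).2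
  · rintro h X ⟨hX, hfX⟩ Y ⟨hY, hfY⟩ a b ha hb hab
    obtain rfl := eq_sub_of_add_eq' hab
    exact ⟨fun j => .add (.smul (hX j) (.all a)) (.smul (hY j) (.all (1 - a))),
      h X Y hX hY hfX hfY a ha (sub_nonneg.1 hb)⟩

variable [Finite I] {f : Matrix I I (FreeAlg n)}

theorem mem_freeSemialgebraicSet_of_intertwines {X : Fin n → Matrix ι ι ℂ}
    {Y : Fin n → Matrix κ κ ℂ} (hY : Y ∈ freeSemialgebraicSet f κ) {T : Matrix κ ι ℂ}
    (hT : Tᴴ * T = 1) (hTXY : ∀ j, Y j * T = T * X j) : X ∈ freeSemialgebraicSet f ι := by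
  classical
  cases nonempty_fintype I
  have hX (j) : X j = Tᴴ * Y j * T := by
    rw [Matrix.mul_assoc, hTXY, ← Matrix.mul_assoc, hT, Matrix.one_mul]
  have heval : matEval f X =
      ((1 : Matrix I I ℂ) ⊗ₖ T)ᴴ * matEval f Y * ((1 : Matrix I I ℂ) ⊗ₖ T) := by
    rw [Matrix.mul_assoc, matEval_mul_kronecker f hTXY, ← Matrix.mul_assoc,
      Matrix.conjTranspose_kronecker, ← Matrix.mul_kronecker_mul, hT, Matrix.conjTranspose_one,
      Matrix.one_mul, Matrix.one_kronecker_one, Matrix.one_mul]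
  exact ⟨fun j => hX j ▸ Matrix.isHermitian_conjTranspose_mul_mul _ (hY.1 j),
    heval ▸ hY.2.conjTranspose_mul_mul_same _⟩

theorem submatrix_mem_freeSemialgebraicSet {X : Fin n → Matrix ι ι ℂ}
    (hX : X ∈ freeSemialgebraicSet f ι) (e : κ ≃ ι) :
    (fun j => (X j).submatrix e e) ∈ freeSemialgebraicSet f κ :=
  mem_freeSemialgebraicSet_of_intertwines hX (T := (1 : Matrix ι ι ℂ).submatrix id e)
    (by simp [← Matrix.submatrix_mul _ _ _ id _ Function.bijective_id])
    (fun j => by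
      simpa using (Matrix.submatrix_mul (X j) 1 id id e Function.bijective_id).symm)

theorem fromBlocks_mem_freeSemialgebraicSet {X : Fin n → Matrix ι ι ℂ} {Y : Fin n → Matrix κ κ ℂ}
    (hX : X ∈ freeSemialgebraicSet f ι) (hY : Y ∈ freeSemialgebraicSet f κ) :
    (fun j => Matrix.fromBlocks (X j) 0 0 (Y j)) ∈ freeSemialgebraicSet f (ι ⊕ κ) := by
  classical
  cases nonempty_fintype I
  refine ⟨fun j => (hX.1 j).fromBlocks (by simp) (hY.1 j), ?_⟩
  set Z := fun j => Matrix.fromBlocks (X j) 0 0 (Y j)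
  let T₁ : Matrix I I ℂ → Matrix (I × (ι ⊕ κ)) (I × ι) ℂ := (· ⊗ₖ Matrix.fromRows 1 0)
  let T₂ : Matrix I I ℂ → Matrix (I × (ι ⊕ κ)) (I × κ) ℂ := (· ⊗ₖ Matrix.fromRows 0 1)
  have h₁ : matEval f Z * T₁ 1 = T₁ 1 * matEval f X :=
    matEval_mul_kronecker f fun j => by
      simp [Z, Matrix.fromBlocks_mul_fromRows, Matrix.fromRows_mul]
  have h₂ : matEval f Z * T₂ 1 = T₂ 1 * matEval f Y :=
    matEval_mul_kronecker f fun j => by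
      simp [Z, Matrix.fromBlocks_mul_fromRows, Matrix.fromRows_mul]
  have hone : T₁ 1 * (T₁ 1)ᴴ + T₂ 1 * (T₂ 1)ᴴ = 1 := by
    simp only [T₁, T₂, Matrix.conjTranspose_kronecker, ← Matrix.mul_kronecker_mul,
      Matrix.conjTranspose_fromRows_eq_fromCols_conjTranspose, Matrix.fromRows_mul_fromCols]
    simp [← Matrix.kronecker_add, Matrix.fromBlocks_add]
  have heval : matEval f Z = T₁ 1 * matEval f X * (T₁ 1)ᴴ + T₂ 1 * matEval f Y * (T₂ 1)ᴴ := by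
    rw [← h₁, ← h₂, Matrix.mul_assoc, Matrix.mul_assoc, ← Matrix.mul_add, hone, Matrix.mul_one]
  rw [heval]
  exact (hX.2.mul_mul_conjTranspose_same _).add (hY.2.mul_mul_conjTranspose_same _)

/-- The pinching of `Y` along `P` is the midpoint of `Y` and `U * Y * U`, where `U = 2 * P - 1`. -/
theorem pinching_mem_freeSemialgebraicSet (hconv : Convex ℝ (freeSemialgebraicSet f ι))
    {Y : Fin n → Matrix ι ι ℂ} (hY : Y ∈ freeSemialgebraicSet f ι) {P : Matrix ι ι ℂ}
    (hP : IsStarProjection P) :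
    (fun j => P * Y j * P + (1 - P) * Y j * (1 - P)) ∈ freeSemialgebraicSet f ι := by
  obtain ⟨hUstar, hUU⟩ : star (2 * P - 1) = 2 * P - 1 ∧ (2 * P - 1) * (2 * P - 1) = 1 := by
    have := Unitary.star_mul_self_of_mem hP.two_mul_sub_one_mem_unitary
    have hstar : star (2 * P - 1) = 2 * P - 1 := by
      simp [hP.isSelfAdjoint.star_eq, two_mul]
    exact ⟨hstar, by rwa [hstar] at this⟩
  have hUY : (fun j => (2 * P - 1) * Y j * (2 * P - 1)) ∈ freeSemialgebraicSet f ι :=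
    mem_freeSemialgebraicSet_of_intertwines hY (T := 2 * P - 1)
      (by rw [← Matrix.star_eq_conjTranspose, hUstar, hUU])
      (fun j => by rw [← Matrix.mul_assoc, ← Matrix.mul_assoc, hUU, Matrix.one_mul])
  convert hconv.midpoint_mem hY hUY using 1
  ext1 j
  rw [midpoint_eq_smul_add, invOf_eq_inv, Pi.smul_apply, Pi.add_apply,
    eq_inv_smul_iff₀ two_ne_zero, two_smul]
  noncomm_ring

theorem eventually_mem_freeSemialgebraicSet (hf : IsHermPoly f) (hf0 : (evalZero f).PosDef) :
    ∀ᶠ X in 𝓝 (0 : Fin n → Matrix ι ι ℂ),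
      (∀ j, (X j).IsHermitian) → X ∈ freeSemialgebraicSet f ι := by
  cases nonempty_fintype I
  have h0 : (matEval f (0 : Fin n → Matrix ι ι ℂ)).PosDef := by
    rw [matEval_zero]
    exact hf0.kronecker .one
  filter_upwards [(continuous_matEval f).continuousAt.eventually
    (eventually_posDef_of_isHermitian h0)] with X hX hXh
  exact ⟨hXh, (hX (isHermitian_matEval hf hXh)).posSemidef⟩

theorem exists_pos_forall_smul_one_mem (hf : IsHermPoly f) (hf0 : (evalZero f).PosDef) :
    ∃ s : ℝ, 0 < s ∧ ∀ a : Fin n → ℝ, ‖a‖ ≤ s →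
      (fun j => a j • (1 : Matrix ι ι ℂ)) ∈ freeSemialgebraicSet f ι := by
  have hlim : Tendsto (fun (a : Fin n → ℝ) j => a j • (1 : Matrix ι ι ℂ)) (𝓝 0) (𝓝 0) :=
    Continuous.tendsto' (by fun_prop) _ _ (by ext; simp)
  obtain ⟨s, hs, h⟩ := Metric.nhds_basis_closedBall.eventually_iff.1
    (hlim.eventually (eventually_mem_freeSemialgebraicSet hf hf0))
  exact ⟨s, hs, fun a ha => h (mem_closedBall_zero_iff.2 ha) fun j =>
    Matrix.isHermitian_one.smul (.all _)⟩

end FreeSemialgebraicSet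

section Pencils

variable {n : ℕ} {I J ι : Type*}

/-- Tuples `(A₀, A₁, …, Aₙ)` of hermitian matrices. They serve both as the coefficients of linear
pencils and as homogenized matrix tuples. -/
abbrev HermTuple (n : ℕ) (I : Type*) :=
  selfAdjoint (Matrix I I ℂ) × (Fin n → selfAdjoint (Matrix I I ℂ))

theorem hermTuple_eq_add_sum_single (x : HermTuple n I) :
    x = (x.1, 0) + ∑ j, (0, Pi.single j (x.2 j)) := by
  ext1 <;> simp [Prod.fst_sum, Prod.snd_sum, Finset.univ_sum_single]

/-- The evaluation `A₀ ⊗ 1 + ∑ⱼ Aⱼ ⊗ Xⱼ` of the pencil with coefficients `A`. -/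
noncomputable def pencilEval [DecidableEq ι] (A : HermTuple n I) (X : Fin n → Matrix ι ι ℂ) :
    Matrix (I × ι) (I × ι) ℂ :=
  (A.1 : Matrix I I ℂ) ⊗ₖ (1 : Matrix ι ι ℂ) + ∑ j, (A.2 j : Matrix I I ℂ) ⊗ₖ X j

theorem isHermitian_pencilEval [DecidableEq ι] (A : HermTuple n I) {X : Fin n → Matrix ι ι ℂ}
    (hX : ∀ j, (X j).IsHermitian) : (pencilEval A X).IsHermitian :=
  have hkron {M : Matrix I I ℂ} {N : Matrix ι ι ℂ} (hM : IsSelfAdjoint M) (hN : N.IsHermitian) :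
      (M ⊗ₖ N).IsHermitian := by
    rw [Matrix.IsHermitian, Matrix.conjTranspose_kronecker, hN.eq, hM.isHermitian.eq]
  .add (hkron A.1.2 Matrix.isHermitian_one) <| isSelfAdjoint_sum _ fun j _ =>
    hkron (A.2 j).2 (hX j)

/-- The level `D_L(ι)` of the free spectrahedron of the pencil `L` with coefficients `A`. -/
def freeSpectrahedron [DecidableEq ι] (A : HermTuple n I) : Set (Fin n → Matrix ι ι ℂ) :=
  {X | (∀ j, (X j).IsHermitian) ∧ (pencilEval A X).PosSemidef}

theorem convex_freeSpectrahedron [DecidableEq ι] (A : HermTuple n I) :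
    Convex ℝ (freeSpectrahedron A : Set (Fin n → Matrix ι ι ℂ)) := by
  rintro X ⟨hX, hAX⟩ Y ⟨hY, hAY⟩ a b ha hb hab
  refine ⟨fun j => .add (.smul (hX j) (.all a)) (.smul (hY j) (.all b)), ?_⟩
  have heval : pencilEval A (a • X + b • Y) = a • pencilEval A X + b • pencilEval A Y := by
    simp only [pencilEval, Pi.add_apply, Pi.smul_apply, Matrix.kronecker_add,
      Matrix.kronecker_smul, Finset.sum_add_distrib, ← Finset.smul_sum, smul_add]
    rw [add_add_add_comm, ← add_smul, hab, one_smul]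
  exact heval ▸ (hAX.smul ha).add (hAY.smul hb)

/-- The transport of a tuple of coefficients along a bijection of index types. -/
def HermTuple.reindex (A : HermTuple n I) (e : J ≃ I) : HermTuple n J :=
  (⟨A.1.1.submatrix e e, Matrix.IsHermitian.submatrix A.1.2 e⟩,
    fun j => ⟨(A.2 j).1.submatrix e e, Matrix.IsHermitian.submatrix (A.2 j).2 e⟩)

theorem freeSpectrahedron_reindex [DecidableEq ι] (A : HermTuple n I) (e : J ≃ I) :
    (freeSpectrahedron (A.reindex e) : Set (Fin n → Matrix ι ι ℂ)) = freeSpectrahedron A := by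
  ext X
  have heval : pencilEval (A.reindex e) X =
      (pencilEval A X).submatrix (e.prodCongr (.refl ι)) (e.prodCongr (.refl ι)) := by
    ext ⟨p, s⟩ ⟨q, t⟩
    simp [pencilEval, Matrix.sum_apply, HermTuple.reindex]
  simp only [freeSpectrahedron, Set.mem_ofPred_eq, heval, Matrix.posSemidef_submatrix_equiv]

variable [Fintype I]

theorem exists_forall_eq_re_trace_mul_transpose (g : selfAdjoint (Matrix I I ℂ) →ₗ[ℝ] ℝ) :
    ∃ B : selfAdjoint (Matrix I I ℂ), ∀ x, g x = (x.1 * B.1ᵀ).trace.re := by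
  have : Module.Finite ℝ (selfAdjoint (Matrix I I ℂ)) :=
    .of_injective (selfAdjoint.submodule ℝ (Matrix I I ℂ)).subtype Subtype.val_injective
  let T : selfAdjoint (Matrix I I ℂ) →ₗ[ℝ] Module.Dual ℝ (selfAdjoint (Matrix I I ℂ)) :=
    LinearMap.mk₂ ℝ (fun A x => (x.1 * A.1).trace.re)
      (fun _ _ _ => by simp [Matrix.mul_add]) (fun _ _ _ => by simp)
      (fun _ _ _ => by simp [Matrix.add_mul]) (fun _ _ _ => by simp)
  have hinj : Function.Injective T := by
    refine (injective_iff_map_eq_zero T).2 fun A hA => Subtype.ext ?_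
    have hAA : A.1ᴴ * A.1 = A.1 * A.1 := by rw [Matrix.IsHermitian.eq A.2]
    have htr : (A.1ᴴ * A.1).trace = 0 := by
      have h := (Matrix.posSemidef_conjTranspose_mul_self A.1).trace_nonneg
      refine Complex.ext ?_ (RCLike.nonneg_iff.1 h).2
      rw [hAA]
      exact congr($hA A)
    exact Matrix.trace_conjTranspose_mul_self_eq_zero_iff.1 htr
  obtain ⟨A, rfl⟩ := (LinearMap.injective_iff_surjective_of_finrank_eq_finrank
    Subspace.dual_finrank_eq.symm).1 hinj g
  exact ⟨⟨A.1ᵀ, Matrix.IsHermitian.transpose A.2⟩, fun x => by simp [T]⟩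

/-- The homogenized compression `(V* V, V* X₁ V, …, V* Xₙ V)`. -/
def compression [Fintype ι] {X : Fin n → Matrix ι ι ℂ} (hX : ∀ j, (X j).IsHermitian)
    (V : Matrix ι I ℂ) : HermTuple n I :=
  (⟨Vᴴ * V, Matrix.isHermitian_conjTranspose_mul_self V⟩,
    fun j => ⟨Vᴴ * X j * V, Matrix.isHermitian_conjTranspose_mul_mul V (hX j)⟩)

theorem dotProduct_kronecker_mulVec_vec [Fintype ι] (B : Matrix I I ℂ) (M : Matrix ι ι ℂ)
    (V : Matrix ι I ℂ) :
    star V.vec ⬝ᵥ (B ⊗ₖ M) *ᵥ V.vec = (Vᴴ * M * V * Bᵀ).trace := by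
  rw [Matrix.kronecker_mulVec_vec, Matrix.star_vec_dotProduct_vec]
  simp only [Matrix.mul_assoc]

theorem exists_pencil_of_linearMap (g : HermTuple n I →ₗ[ℝ] ℝ) :
    ∃ B : HermTuple n I, ∀ {ι : Type*} [Fintype ι] [DecidableEq ι] {X : Fin n → Matrix ι ι ℂ}
      (hX : ∀ j, (X j).IsHermitian) (V : Matrix ι I ℂ),
      (star V.vec ⬝ᵥ pencilEval B X *ᵥ V.vec).re = g (compression hX V) := by
  obtain ⟨B₀, hB₀⟩ := exists_forall_eq_re_trace_mul_transpose (g ∘ₗ .inl ..)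
  choose B hB using fun j =>
    exists_forall_eq_re_trace_mul_transpose (g ∘ₗ .inr .. ∘ₗ
      .single ℝ (fun _ => selfAdjoint (Matrix I I ℂ)) j)
  refine ⟨(B₀, B), fun {ι} _ _ X hX V => ?_⟩
  set x := compression hX V with hx
  have hg : g x = (x.1.1 * B₀.1ᵀ).trace.re + ∑ j, ((x.2 j).1 * (B j).1ᵀ).trace.re := by
    simp only [← hB₀, ← hB, LinearMap.comp_apply, ← map_sum, LinearMap.coe_single, ← map_add,
      LinearMap.inl_apply, LinearMap.inr_apply, ← hermTuple_eq_add_sum_single]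
  rw [hg]
  simp [pencilEval, Matrix.add_mulVec, Matrix.sum_mulVec, dotProduct_add, dotProduct_sum,
    dotProduct_kronecker_mulVec_vec, hx, compression]

end Pencils

section CompressionCone

variable {n : ℕ} {I J ι : Type*} [Fintype ι] [DecidableEq ι]

/-- The homogenized compressions of points of `D_f`; by `compression_mem_compressions` the
restriction to index types `Fin l` is immaterial. -/
def compressions (f : Matrix J J (FreeAlg n)) (I : Type*) : Set (HermTuple n I) :=
  {x | ∃ (l : ℕ) (Y : Fin n → Matrix (Fin l) (Fin l) ℂ) (hY : Y ∈ freeSemialgebraicSet f (Fin l))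
    (V : Matrix (Fin l) I ℂ), compression hY.1 V = x}

variable [Finite J] {f : Matrix J J (FreeAlg n)}

theorem compression_mem_compressions {Y : Fin n → Matrix ι ι ℂ}
    (hY : Y ∈ freeSemialgebraicSet f ι) (V : Matrix ι I ℂ) :
    compression hY.1 V ∈ compressions f I := by
  let e := (Fintype.equivFin ι).symm
  refine ⟨_, _, submatrix_mem_freeSemialgebraicSet hY e, V.submatrix e id, ?_⟩
  ext <;> simp [compression, Matrix.submatrix_mul_equiv]

theorem add_mem_compressions {x y : HermTuple n I} (hx : x ∈ compressions f I)
    (hy : y ∈ compressions f I) : x + y ∈ compressions f I := by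
  obtain ⟨_, X, hX, V, rfl⟩ := hx
  obtain ⟨_, Y, hY, W, rfl⟩ := hy
  convert compression_mem_compressions (fromBlocks_mem_freeSemialgebraicSet hX hY)
    (Matrix.fromRows V W) using 1
  simp [compression, Matrix.conjTranspose_fromRows_eq_fromCols_conjTranspose,
    Matrix.fromCols_mul_fromRows, Matrix.fromCols_mul_fromBlocks, Prod.ext_iff, Subtype.ext_iff,
    funext_iff]

theorem smul_mem_compressions {x : HermTuple n I} (hx : x ∈ compressions f I) {r : ℝ}
    (hr : 0 ≤ r) : r • x ∈ compressions f I := by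
  obtain ⟨_, X, hX, V, rfl⟩ := hx
  convert compression_mem_compressions hX (√r • V) using 1
  simp [compression, Prod.ext_iff, Subtype.ext_iff, funext_iff, smul_smul, Real.mul_self_sqrt hr]

/-- The convex cone formed by the homogenized compressions of points of `D_f`. -/
def compressionCone (f : Matrix J J (FreeAlg n)) (I : Type*) : PointedCone ℝ (HermTuple n I) where
  carrier := compressions f I
  add_mem' := add_mem_compressions
  zero_mem' := ⟨0, 0, ⟨fun _ => Matrix.isHermitian_zero,
    (Subsingleton.elim 0 (matEval f 0)).subst Matrix.PosSemidef.zero⟩, 0,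
    by ext <;> simp [compression]⟩
  smul_mem' c _ hx := smul_mem_compressions hx c.2

variable [Fintype I]

open scoped MatrixOrder in
theorem mk_smul_mem_compressionCone [DecidableEq I] {a : Fin n → ℝ}
    (ha : (fun j => a j • (1 : Matrix I I ℂ)) ∈ freeSemialgebraicSet f I)
    {R : selfAdjoint (Matrix I I ℂ)} (hR : R.1.PosSemidef) :
    (R, fun j => a j • R) ∈ compressionCone f I := by
  obtain ⟨W, hW⟩ := CStarAlgebra.nonneg_iff_eq_star_mul_self.1 hR.nonneg
  rw [Matrix.star_eq_conjTranspose] at hW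
  have heq : (R, fun j => a j • R) = compression ha.1 W := by
    ext <;> simp [compression, hW]
  exact heq ▸ compression_mem_compressions ha W

theorem mk_single_mem_compressionCone [DecidableEq I] {s : ℝ} (hs : 0 < s)
    (hmem : ∀ a : Fin n → ℝ, ‖a‖ ≤ s →
      (fun j => a j • (1 : Matrix I I ℂ)) ∈ freeSemialgebraicSet f I)
    {P Q : selfAdjoint (Matrix I I ℂ)} (hadd : (s • P + Q).1.PosSemidef)
    (hsub : (s • P - Q).1.PosSemidef) (j : Fin n) : (P, Pi.single j Q) ∈ compressionCone f I := by
  have hc : 0 ≤ (2 * s)⁻¹ := by positivity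
  have hnorm (r : ℝ) (hr : |r| = s) : ‖(Pi.single j r : Fin n → ℝ)‖ ≤ s := by
    rw [Pi.norm_single, Real.norm_eq_abs, hr]
  have h₁ := mk_smul_mem_compressionCone (hmem _ (hnorm s (abs_of_pos hs)))
    (R := (2 * s)⁻¹ • (s • P + Q)) (hadd.smul hc)
  have h₂ := mk_smul_mem_compressionCone (hmem _ (hnorm (-s) (by rw [abs_neg, abs_of_pos hs])))
    (R := (2 * s)⁻¹ • (s • P - Q)) (hsub.smul hc)
  convert add_mem h₁ h₂ using 1
  refine Prod.ext ?_ (funext fun i => ?_)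
  · dsimp only [Prod.fst_add]
    match_scalars <;> field_simp <;> norm_num
  · obtain rfl | h := eq_or_ne i j
    · simp only [Prod.mk_add_mk, Pi.add_apply, Pi.single_eq_same]
      match_scalars <;> field_simp <;> norm_num
    · simp [h]

/-- Hence a tuple that satisfies these matrix inequalities strictly is an order unit of the
cone. -/
theorem exists_pos_forall_mem_compressionCone {I : Type*} [Finite I] (hf : IsHermPoly f)
    (hf0 : (evalZero f).PosDef) :
    ∃ ε : ℝ, 0 < ε ∧ ∀ x : HermTuple n I, x.1.1.PosSemidef →
      (∀ j, (ε • x.1 + x.2 j).1.PosSemidef ∧ (ε • x.1 - x.2 j).1.PosSemidef) →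
      x ∈ compressionCone f I := by
  classical
  cases nonempty_fintype I
  obtain ⟨s, hs, hmem⟩ := exists_pos_forall_smul_one_mem (ι := I) hf hf0
  set c : ℝ := ((n : ℝ) + 1)⁻¹ with hc
  have hc0 : 0 < c := by positivity
  refine ⟨s * c, by positivity, fun x hx₀ hx => ?_⟩
  have hfst : (c • x.1, 0) ∈ compressionCone f I := by
    simpa [← Pi.zero_def] using mk_smul_mem_compressionCone (R := c • x.1)
      (hmem 0 (by simpa using hs.le)) (hx₀.smul hc0.le)
  have hsnd (j : Fin n) : (c • x.1, Pi.single j (x.2 j)) ∈ compressionCone f I :=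
    mk_single_mem_compressionCone hs hmem (by simpa only [mul_smul] using (hx j).1)
      (by simpa only [mul_smul] using (hx j).2) j
  have hsum : x = (c • x.1, 0) + ∑ j, (c • x.1, Pi.single j (x.2 j)) := by
    have hx₁ : x.1 = c • x.1 + ∑ _ : Fin n, c • x.1 := by
      rw [Finset.sum_const, Finset.card_univ, Fintype.card_fin]
      match_scalars
      rw [hc]
      field_simp
      ring
    ext1
    · simpa [Prod.fst_sum] using hx₁
    · simp [Prod.snd_sum, Finset.univ_sum_single]
  rw [hsum]
  exact add_mem hfst (sum_mem fun j _ => hsnd j)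

end CompressionCone

section Krylov

variable {n δ : ℕ} {J ι : Type*}

/-- Words of length less than `δ`, i.e. those that remain in `Word n δ` after prepending a
letter. -/
abbrev ShortWord (n δ : ℕ) := {w : List (Fin n) // w.length < δ}

/-- The empty word. -/
def Word.nil : Word n δ := ⟨[], δ.zero_le⟩

/-- The inclusion of column indices `(w, i) ↦ (w, i)`. -/
def incl (p : ShortWord n δ × J) : Word n δ × J := (⟨p.1.1, p.1.2.le⟩, p.2)

/-- The shift of column indices `(w, i) ↦ (xⱼ w, i)`. -/
def shift (j : Fin n) (p : ShortWord n δ × J) : Word n δ × J := (⟨j :: p.1.1, p.1.2⟩, p.2)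

/-- The columns of `V` indexed by the word `u`. -/
def blockCol (V : Matrix ι (Word n δ × J) ℂ) (u : Word n δ) : Matrix ι J ℂ :=
  V.submatrix id (Prod.mk u)

/-- The columns of `V` form a Krylov family for `X`: the block at `xⱼ w` is `Xⱼ` times the block
at `w`. -/
def IsKrylov [Fintype ι] (X : Fin n → Matrix ι ι ℂ) (V : Matrix ι (Word n δ × J) ℂ) : Prop :=
  ∀ j, X j * V.submatrix id incl = V.submatrix id (shift j)

theorem IsKrylov.blockCol_eq [Fintype ι] [DecidableEq ι] {X : Fin n → Matrix ι ι ℂ}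
    {V : Matrix ι (Word n δ × J) ℂ} (h : IsKrylov X V) (u : Word n δ) :
    blockCol V u = (u.1.map X).prod * blockCol V .nil := by
  obtain ⟨u, hu⟩ := u
  induction u with
  | nil => simp [Word.nil]
  | cons j u ih =>
    have hshift : blockCol V ⟨j :: u, hu⟩ = X j * blockCol V ⟨u, Nat.le_of_succ_le hu⟩ :=
      (congrArg (·.submatrix id (Prod.mk ⟨u, hu⟩)) (h j)).symm
    rw [hshift, ih, List.map_cons, List.prod_cons, Matrix.mul_assoc]

/-- The Krylov family of `X` generated by the columns of `v`. -/
def krylov [Fintype ι] [DecidableEq ι] (δ : ℕ) (X : Fin n → Matrix ι ι ℂ) (v : Matrix ι J ℂ) :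
    Matrix ι (Word n δ × J) ℂ :=
  .of fun i p => ((p.1.1.map X).prod * v) i p.2

theorem isKrylov_krylov [Fintype ι] [DecidableEq ι] (X : Fin n → Matrix ι ι ℂ)
    (v : Matrix ι J ℂ) : IsKrylov X (krylov δ X v) := fun j => by
  ext i p
  simp only [Matrix.submatrix_apply, krylov, shift, Matrix.of_apply, List.map_cons,
    List.prod_cons, Matrix.mul_assoc]
  rfl

theorem blockCol_krylov_nil [Fintype ι] [DecidableEq ι] (X : Fin n → Matrix ι ι ℂ)
    (v : Matrix ι J ℂ) : blockCol (krylov δ X v) .nil = v := by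
  ext i j
  simp [blockCol, krylov, Word.nil]

/-- The tuples whose entries are related in the same way as `V* V` and `V* Xⱼ V` for a Krylov
family `V` of `X`. -/
def hankelSubmodule (n δ : ℕ) (J : Type*) : Submodule ℝ (HermTuple n (Word n δ × J)) where
  carrier := {x | ∀ j, (x.2 j).1.submatrix id incl = x.1.1.submatrix id (shift j)}
  add_mem' hx hy j := congrArg₂ (· + ·) (hx j) (hy j)
  zero_mem' _ := rfl
  smul_mem' c _ hx j := congrArg (c • ·) (hx j)

theorem compression_mem_hankelSubmodule [Fintype ι] {X : Fin n → Matrix ι ι ℂ}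
    (hX : ∀ j, (X j).IsHermitian) {V : Matrix ι (Word n δ × J) ℂ} :
    compression hX V ∈ hankelSubmodule n δ J ↔
      ∀ j, Vᴴ * X j * V.submatrix id incl = Vᴴ * V.submatrix id (shift j) :=
  Iff.rfl

theorem IsKrylov.compression_mem_hankelSubmodule [Fintype ι] {X : Fin n → Matrix ι ι ℂ}
    (hX : ∀ j, (X j).IsHermitian) {V : Matrix ι (Word n δ × J) ℂ} (h : IsKrylov X V) :
    compression hX V ∈ hankelSubmodule n δ J :=
  (HeltonMcCullough.compression_mem_hankelSubmodule hX).2 fun j => by rw [Matrix.mul_assoc, h j]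

variable [Fintype J]

/-- The functional that reads off the quadratic form of `f = ∑ᵤ Cᵤ u` from the Gram matrix of a
Krylov family. -/
noncomputable def momentFunctional (C : Word n δ → Matrix J J ℂ) :
    selfAdjoint (Matrix (Word n δ × J) (Word n δ × J) ℂ) →ₗ[ℝ] ℝ where
  toFun G := (∑ u, (G.1.submatrix (Prod.mk Word.nil) (Prod.mk u) * (C u)ᵀ).trace).re
  map_add' G H := by simp [Matrix.submatrix_add, Matrix.add_mul, Finset.sum_add_distrib]
  map_smul' c G := by simp [Matrix.submatrix_smul, Finset.mul_sum]

theorem IsKrylov.momentFunctional_compression [Fintype ι] [DecidableEq ι]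
    {f : Matrix J J (FreeAlg n)} {C : Word n δ → Matrix J J ℂ}
    (hC : ∀ i j, f i j = ∑ w, C w i j • monomial w.1) {X Y : Fin n → Matrix ι ι ℂ}
    (hY : ∀ j, (Y j).IsHermitian)
    {V : Matrix ι (Word n δ × J) ℂ} (h : IsKrylov X V) :
    momentFunctional C (compression hY V).1 =
      (star (blockCol V .nil).vec ⬝ᵥ matEval f X *ᵥ (blockCol V .nil).vec).re := by
  have hgram (u : Word n δ) : (Vᴴ * V).submatrix (Prod.mk .nil) (Prod.mk u) =
      (blockCol V .nil)ᴴ * (u.1.map X).prod * blockCol V .nil := by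
    rw [Matrix.mul_assoc, ← h.blockCol_eq u]
    rfl
  rw [matEval_eq_sum_kronecker hC, Matrix.sum_mulVec, dotProduct_sum]
  simp only [dotProduct_kronecker_mulVec_vec, ← hgram]
  rfl

/-- Pinching along the range of `V` turns a compression of a point of `D_f` that looks like a
Krylov Gram tuple into an actual one, and convexity keeps the pinched point in `D_f`. -/
theorem momentFunctional_nonneg {f : Matrix J J (FreeAlg n)}
    {C : Word n δ → Matrix J J ℂ} (hC : ∀ i j, f i j = ∑ w, C w i j • monomial w.1)
    (hconv : ∀ k, Convex ℝ (freeSemialgebraicSet f (Fin k))) {x : HermTuple n (Word n δ × J)}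
    (hx : x ∈ hankelSubmodule n δ J) (hxC : x ∈ compressionCone f (Word n δ × J)) :
    0 ≤ momentFunctional C x.1 := by
  obtain ⟨k, Y, hY, V, rfl⟩ := hxC
  obtain ⟨R, hP, hPV⟩ := exists_isStarProjection_mul V
  have hadj : V * R = Rᴴ * Vᴴ := by
    rw [← Matrix.conjTranspose_mul, ← Matrix.star_eq_conjTranspose, hP.isSelfAdjoint.star_eq]
  set P := V * R
  have hX := pinching_mem_freeSemialgebraicSet (hconv k) hY hP
  have hkrylov : IsKrylov (fun j => P * Y j * P + (1 - P) * Y j * (1 - P)) V := fun j => by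
    have hPV' (c : ShortWord n δ × J → Word n δ × J) : P * V.submatrix id c = V.submatrix id c :=
      congrArg (·.submatrix id c) hPV
    calc (P * Y j * P + (1 - P) * Y j * (1 - P)) * V.submatrix id incl
        = P * Y j * V.submatrix id incl := by
          simp only [Matrix.add_mul, Matrix.mul_assoc, Matrix.sub_mul (1 : Matrix _ _ ℂ),
            Matrix.one_mul, hPV', sub_self, Matrix.mul_zero, add_zero]
      _ = Rᴴ * (Vᴴ * Y j * V.submatrix id incl) := by simp only [hadj, Matrix.mul_assoc]
      _ = P * V.submatrix id (shift j) := by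
          rw [(compression_mem_hankelSubmodule hY.1).1 hx j, ← Matrix.mul_assoc, ← hadj]
      _ = V.submatrix id (shift j) := hPV' _
  rw [hkrylov.momentFunctional_compression hC]
  exact hX.2.re_dotProduct_nonneg _

end Krylov

section Fock

variable {n δ : ℕ} {J : Type*} [DecidableEq J]

/-- The sum of the creation and annihilation operators of `xⱼ` on the Fock space truncated at word
length `δ`, tensored with the identity of `ℂ^J`. -/
def fockMatrix (n δ : ℕ) (J : Type*) [DecidableEq J] (j : Fin n) :
    Matrix (Word n δ × J) (Word n δ × J) ℂ :=
  .of fun p q => if p.2 = q.2 ∧ (p.1.1 = j :: q.1.1 ∨ q.1.1 = j :: p.1.1) then 1 else 0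

theorem isHermitian_fockMatrix (j : Fin n) : (fockMatrix n δ J j).IsHermitian := by
  ext p q
  simp only [fockMatrix, Matrix.conjTranspose_apply, Matrix.of_apply, apply_ite star, star_one,
    star_zero, or_comm, eq_comm]

theorem fockMatrix_apply_of_length_lt {j : Fin n} {p : Word n δ × J} {u : List (Fin n)}
    (hu : (j :: u).length ≤ δ) (b : J) (h : u.length < p.1.1.length) :
    fockMatrix n δ J j p (⟨u, Nat.le_of_succ_le hu⟩, b) =
      if p = (⟨j :: u, hu⟩, b) then 1 else 0 := by
  have hne : u ≠ j :: p.1.1 := by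
    rintro rfl
    simp at h
  simp [fockMatrix, hne, Prod.ext_iff, Subtype.ext_iff, and_comm]

theorem fockMatrix_apply_of_succ_length_lt (j : Fin n) {p q : Word n δ × J}
    (h : q.1.1.length + 1 < p.1.1.length) : fockMatrix n δ J j p q = 0 := by
  refine if_neg ?_
  rintro ⟨-, hp | hq⟩
  · rw [hp, List.length_cons] at h
    exact h.false
  · rw [hq, List.length_cons] at h
    omega

variable [Fintype J]

/-- The Krylov family generated by the vacuum vectors for the field operators scaled by `t`. -/
noncomputable def fockKrylov (n δ : ℕ) (J : Type*) [DecidableEq J] [Fintype J] (t : ℝ) :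
    Matrix (Word n δ × J) (Word n δ × J) ℂ :=
  krylov δ (t • fockMatrix n δ J) (blockCol (1 : Matrix (Word n δ × J) (Word n δ × J) ℂ) .nil)

theorem fockKrylov_apply_of_length_le (t : ℝ) (p q : Word n δ × J)
    (hq : q.1.1.length ≤ p.1.1.length) :
    fockKrylov n δ J t p q = if p = q then (t : ℂ) ^ q.1.1.length else 0 := by
  obtain ⟨⟨u, hu⟩, b⟩ := q
  induction u generalizing p with
  | nil =>
    simp [fockKrylov, krylov, blockCol, Word.nil, Matrix.one_apply]
  | cons j u ih =>
    have hu' : u.length ≤ δ := Nat.le_of_succ_le hu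
    have hstep : fockKrylov n δ J t p (⟨j :: u, hu⟩, b) =
        ∑ r, t * (fockMatrix n δ J j p r * fockKrylov n δ J t r (⟨u, hu'⟩, b)) := by
      have := congrFun₂ (isKrylov_krylov (δ := δ) (t • fockMatrix n δ J)
        (blockCol (1 : Matrix (Word n δ × J) (Word n δ × J) ℂ) .nil) j) p (⟨u, hu⟩, b)
      simpa [Matrix.mul_apply, Finset.mul_sum, mul_assoc] using! this.symm
    have hterm (r) : fockMatrix n δ J j p r * fockKrylov n δ J t r (⟨u, hu'⟩, b) =
        if r = (⟨u, hu'⟩, b) then (if p = (⟨j :: u, hu⟩, b) then (t : ℂ) ^ u.length else 0)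
          else 0 := by
      obtain rfl | h := eq_or_ne r (⟨u, hu'⟩, b)
      · simp [fockMatrix_apply_of_length_lt hu b hq, ih _ hu' le_rfl]
      rw [if_neg h, mul_eq_zero]
      obtain hr | hr := lt_or_ge r.1.1.length u.length
      · exact .inl (fockMatrix_apply_of_succ_length_lt j ((Nat.succ_lt_succ hr).trans_le hq))
      · exact .inr (by rw [ih r hu' hr, if_neg h])
    simp [hstep, hterm, pow_succ']

theorem isUnit_fockKrylov {t : ℝ} (ht : t ≠ 0) : IsUnit (fockKrylov n δ J t) :=
  isUnit_of_forall_le_eq_ite (b := fun p => p.1.1.length)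
    (fun _ => pow_ne_zero _ (Complex.ofReal_ne_zero.2 ht)) (fockKrylov_apply_of_length_le t)

theorem exists_mem_hankelSubmodule_posDef (n δ : ℕ) (J : Type*) [Finite J] {ε : ℝ}
    (hε : 0 < ε) : ∃ x ∈ hankelSubmodule n δ J, x.1.1.PosDef ∧
      ∀ j, (ε • x.1 + x.2 j).1.PosDef ∧ (ε • x.1 - x.2 j).1.PosDef := by
  classical
  cases nonempty_fintype J
  have hev (j : Fin n) : ∀ᶠ r : ℝ in atTop, (r • 1 + fockMatrix n δ J j).PosDef ∧
      (r • 1 + -fockMatrix n δ J j).PosDef :=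
    (eventually_posDef_smul_add .one (isHermitian_fockMatrix j)).and
      (eventually_posDef_smul_add .one (isHermitian_fockMatrix j).neg)
  obtain ⟨r, hr, hr0⟩ := ((eventually_all.2 hev).and (eventually_gt_atTop 0)).exists
  set t : ℝ := ε / r with ht
  have ht0 : 0 < t := by positivity
  set V := fockKrylov n δ J t
  have hX (j) : ((t • fockMatrix n δ J) j).IsHermitian := (isHermitian_fockMatrix j).smul (.all t)
  have hinj : Function.Injective V.mulVec :=
    Matrix.mulVec_injective_of_isUnit (isUnit_fockKrylov ht0.ne')
  have hdef {M : Matrix (Word n δ × J) (Word n δ × J) ℂ} (hM : (r • 1 + M).PosDef) :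
      (ε • (Vᴴ * V) + Vᴴ * (t • M) * V).PosDef := by
    convert (hM.smul ht0).conjTranspose_mul_mul_same hinj using 1
    rw [smul_add, smul_smul, ht, div_mul_cancel₀ _ hr0.ne', Matrix.mul_add, Matrix.add_mul]
    simp
  refine ⟨compression hX V, (isKrylov_krylov _ _).compression_mem_hankelSubmodule hX,
    .conjTranspose_mul_self _ hinj, fun j => ⟨hdef (hr j).1, ?_⟩⟩
  simpa [compression, sub_eq_add_neg] using hdef (hr j).2

end Fock

theorem exists_mem_hankelSubmodule_add_mem_compressionCone {n : ℕ} {J : Type*} [Finite J]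
    {f : Matrix J J (FreeAlg n)} (hf : IsHermPoly f) (hf0 : (evalZero f).PosDef)
    (δ : ℕ) (y : HermTuple n (Word n δ × J)) :
    ∃ x ∈ hankelSubmodule n δ J, x + y ∈ compressionCone f (Word n δ × J) := by
  obtain ⟨ε, hε, hmem⟩ := exists_pos_forall_mem_compressionCone (I := Word n δ × J) hf hf0
  obtain ⟨x, hx, hx₀, hxj⟩ := exists_mem_hankelSubmodule_posDef n δ J hε
  have hev₀ : ∀ᶠ r : ℝ in atTop, (r • x.1 + y.1).1.PosDef :=
    eventually_posDef_smul_add hx₀ y.1.2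
  have hev (j : Fin n) : ∀ᶠ r : ℝ in atTop,
      (r • (ε • x.1 + x.2 j) + (ε • y.1 + y.2 j)).1.PosDef ∧
      (r • (ε • x.1 - x.2 j) + (ε • y.1 - y.2 j)).1.PosDef :=
    (eventually_posDef_smul_add (hxj j).1 (ε • y.1 + y.2 j).2).and
      (eventually_posDef_smul_add (hxj j).2 (ε • y.1 - y.2 j).2)
  obtain ⟨r, hr₀, hr⟩ := (hev₀.and (eventually_all.2 hev)).exists
  refine ⟨r • x, Submodule.smul_mem _ r hx, hmem _ hr₀.posSemidef fun j => ⟨?_, ?_⟩⟩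
  · convert (hr j).1.posSemidef using 2
    simp only [Prod.fst_add, Prod.snd_add, Prod.smul_fst, Prod.smul_snd, Pi.add_apply,
      Pi.smul_apply]
    module
  · convert (hr j).2.posSemidef using 2
    simp only [Prod.fst_add, Prod.snd_add, Prod.smul_fst, Prod.smul_snd, Pi.add_apply,
      Pi.smul_apply]
    module

section RieszExtension

variable {n : ℕ} {J : Type*} {f : Matrix J J (FreeAlg n)}

theorem exists_linearMap_nonneg_on_compressionCone [Fintype J] {δ : ℕ}
    {C : Word n δ → Matrix J J ℂ} (hf : IsHermPoly f)
    (hf0 : (evalZero f).PosDef) (hC : ∀ i j, f i j = ∑ w, C w i j • monomial w.1)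
    (hconv : ∀ k, Convex ℝ (freeSemialgebraicSet f (Fin k))) :
    ∃ g : HermTuple n (Word n δ × J) →ₗ[ℝ] ℝ,
      (∀ x ∈ hankelSubmodule n δ J, g x = momentFunctional C x.1) ∧
      ∀ x ∈ compressionCone f (Word n δ × J), 0 ≤ g x := by
  obtain ⟨g, hgL, hg⟩ := riesz_extension (compressionCone f (Word n δ × J))
    ⟨hankelSubmodule n δ J, (momentFunctional C ∘ₗ .fst ..).domRestrict _⟩
    (fun x hx => momentFunctional_nonneg hC hconv x.2 hx)
    (fun y =>
      let ⟨x, hx, hxy⟩ := exists_mem_hankelSubmodule_add_mem_compressionCone hf hf0 δ y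
      ⟨⟨x, hx⟩, hxy⟩)
  exact ⟨g, fun x hx => hgL ⟨x, hx⟩, hg⟩

theorem exists_freeSemialgebraicSet_eq_freeSpectrahedron [Finite J] (hf : IsHermPoly f)
    (hf0 : (evalZero f).PosDef) (hconv : ∀ k, Convex ℝ (freeSemialgebraicSet f (Fin k))) :
    ∃ (e : ℕ) (B : HermTuple n (Fin e)),
      ∀ k, freeSemialgebraicSet f (Fin k) = freeSpectrahedron B := by
  cases nonempty_fintype J
  obtain ⟨δ, hδ⟩ := exists_matDegLE f
  obtain ⟨C, hC⟩ := exists_eq_sum_monomial hδ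
  obtain ⟨g, hgL, hg⟩ := exists_linearMap_nonneg_on_compressionCone hf hf0 hC hconv
  obtain ⟨B, hB⟩ := exists_pencil_of_linearMap g
  refine ⟨_, B.reindex (Fintype.equivFin _).symm, fun k => ?_⟩
  rw [freeSpectrahedron_reindex]
  refine Set.ext fun X => and_congr_right fun hX => ⟨fun hfX => ?_, fun hBX => ?_⟩
  · refine (posSemidef_iff_re_nonneg (isHermitian_pencilEval B hX)).2 fun v => ?_
    obtain ⟨V, rfl⟩ := Matrix.vec_bijective.surjective v
    rw [hB hX V]
    exact hg _ (compression_mem_compressions ⟨hX, hfX⟩ V)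
  · refine (posSemidef_iff_re_nonneg (isHermitian_matEval hf hX)).2 fun v => ?_
    obtain ⟨v, rfl⟩ := Matrix.vec_bijective.surjective v
    have hkrylov := isKrylov_krylov (δ := δ) X v
    have hform := hkrylov.momentFunctional_compression hC hX
    rw [blockCol_krylov_nil, ← hgL _ (hkrylov.compression_mem_hankelSubmodule hX),
      ← hB hX] at hform
    exact hform ▸ hBX.re_dotProduct_nonneg _

end RieszExtension

end HeltonMcCullough

open HeltonMcCullough

/-- Helton–McCullough: for `f = f*` with `f(0) ≻ 0`, the free semialgebraic
set `D_f` is (levelwise) convex iff it is a free spectrahedron. -/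
theorem helton_mccullough_convex_iff_freeSpectrahedron {n d : ℕ}
    (f : Matrix (Fin d) (Fin d) (FreeAlg n)) (hf : IsHermPoly f)
    (hf0 : (evalZero f).PosDef) :
    (∀ (k : ℕ) (X Y : Fin n → Matrix (Fin k) (Fin k) ℂ),
        (∀ j, (X j).IsHermitian) → (∀ j, (Y j).IsHermitian) →
        (evalM f X).PosSemidef → (evalM f Y).PosSemidef →
        ∀ t : ℝ, 0 ≤ t → t ≤ 1 →
          (evalM f (fun j => (t : ℂ) • X j + ((1 - t : ℝ) : ℂ) • Y j)).PosSemidef) ↔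
      (∃ (e : ℕ) (B0 : Matrix (Fin e) (Fin e) ℂ) (B : Fin n → Matrix (Fin e) (Fin e) ℂ),
        B0.IsHermitian ∧ (∀ j, (B j).IsHermitian) ∧
        ∀ (k : ℕ) (X : Fin n → Matrix (Fin k) (Fin k) ℂ), (∀ j, (X j).IsHermitian) →
          ((evalM f X).PosSemidef ↔ (pencilK B0 B X).PosSemidef)) := by
  simp only [← convex_freeSemialgebraicSet_iff]
  constructor
  · intro hconv
    obtain ⟨e, B, hB⟩ := exists_freeSemialgebraicSet_eq_freeSpectrahedron hf hf0 hconv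
    exact ⟨e, B.1, fun j => B.2 j, B.1.2, fun j => (B.2 j).2, fun k X hX =>
      and_congr_right_iff.1 (Set.ext_iff.1 (hB k) X) hX⟩
  · rintro ⟨e, B₀, B, hB₀, hB, h⟩ k
    have heq : freeSemialgebraicSet f (Fin k) =
        freeSpectrahedron ((⟨B₀, hB₀⟩, fun j => ⟨B j, hB j⟩) : HermTuple n (Fin e)) :=
      Set.ext fun X => and_congr_right (h k X)
    exact heq ▸ convex_freeSpectrahedron _
end

section
/- Free Hilbert 17th problem (Helton; McCullough): let f = f* ∈ M_d(ℂ⟨x⟩) and set δ = ⌊(deg f)/2⌋. Then f(X) is positive semidefinite for every k ∈ ℕ and every n-tuple X of hermitian k×k complex matrices if and only if there exist finitely many s₁,…,s_M ∈ M_d(ℂ⟨x⟩), each of degree at most δ, such that f = Σ_{i=1}^M sᵢ*sᵢ in M_d(ℂ⟨x⟩). -/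
open scoped Kronecker Matrix ComplexOrder

/-!
The sums of hermitian squares `∑ sᵢ* sᵢ` with `deg sᵢ ≤ m` form the image of the positive
semidefinite cone under a linear Gram map. Looking at top degree coefficients, a sum of hermitian
squares vanishes only if every summand does, so the Gram map kills no nonzero positive semidefinite
matrix. Since that cone has a compact base, any `f` outside its image is strictly separated from it
by a functional `L` which is moreover positive on every nonzero sum of squares. If `f = f*`, then
`L` may be taken hermitian, and a GNS construction on the rows of degree at most `m` applies: `L`
defines an inner product there, and multiplication by `xⱼ` compresses to a hermitian matrix `Xⱼ`.
The resulting tuple satisfies `L(p) = ⟨p(X) y, y⟩` for every `p` of degree at most `2m + 1`, and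
taking `m = ⌊deg f / 2⌋` gives `⟨f(X) y, y⟩ = L(f) < 0`.
-/

namespace NCPoly

section DensityMatrices

variable {𝕜 κ : Type*} [RCLike 𝕜] [Fintype κ]

lemma exists_eq_conjTranspose_mul_self {G : Matrix κ κ 𝕜} (hG : G.PosSemidef) :
    ∃ B : Matrix κ κ 𝕜, G = Bᴴ * B := by
  classical
  open scoped MatrixOrder in
  exact CStarAlgebra.nonneg_iff_eq_star_mul_self.mp hG.nonneg

lemma trace_conjTranspose_mul_self {m n : Type*} [Fintype m] [Fintype n] (B : Matrix m n 𝕜) :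
    (Bᴴ * B).trace = ((∑ i, ∑ j, ‖B i j‖ ^ 2 : ℝ) : 𝕜) := by
  rw [Finset.sum_comm]
  simp [Matrix.trace, Matrix.mul_apply, RCLike.conj_mul]

/-- The density matrices: positive semidefinite matrices of trace one. They form a compact base of
the cone of positive semidefinite matrices. -/
def densityMatrices (𝕜 κ : Type*) [RCLike 𝕜] [Fintype κ] : Set (Matrix κ κ 𝕜) :=
  {G | G.PosSemidef ∧ G.trace = 1}

lemma convex_densityMatrices : Convex ℝ (densityMatrices 𝕜 κ) := by
  rintro G ⟨hG, hG1⟩ H ⟨hH, hH1⟩ a b ha hb hab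
  refine ⟨(hG.smul ha).add (hH.smul hb), ?_⟩
  rw [Matrix.trace_add, Matrix.trace_smul, Matrix.trace_smul, hG1, hH1, ← add_smul, hab, one_smul]

lemma isCompact_densityMatrices : IsCompact (densityMatrices 𝕜 κ) := by
  have hball : IsCompact (Set.univ.pi fun _ : κ => Set.univ.pi fun _ : κ =>
      Metric.closedBall (0 : 𝕜) 1) :=
    isCompact_univ_pi fun _ => isCompact_univ_pi fun _ => isCompact_closedBall _ _
  have hsq : Continuous fun B : Matrix κ κ 𝕜 => Bᴴ * B :=
    continuous_id.matrix_conjTranspose.matrix_mul continuous_id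
  have hsphere : IsCompact {B : Matrix κ κ 𝕜 | (Bᴴ * B).trace = 1} := by
    refine hball.of_isClosed_subset (isClosed_eq hsq.matrix_trace continuous_const) ?_
    intro (B : Matrix κ κ 𝕜) (hB : (Bᴴ * B).trace = 1) i _ j _
    rw [trace_conjTranspose_mul_self] at hB
    have hB1 : ∑ i, ∑ j, ‖B i j‖ ^ 2 = 1 := by exact_mod_cast hB
    have hij : ‖B i j‖ ^ 2 ≤ ∑ i, ∑ j, ‖B i j‖ ^ 2 :=
      (Finset.single_le_sum (f := fun j => ‖B i j‖ ^ 2) (fun _ _ => by positivity)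
        (Finset.mem_univ j)).trans
      (Finset.single_le_sum (f := fun i => ∑ j, ‖B i j‖ ^ 2) (fun _ _ => by positivity)
        (Finset.mem_univ i))
    rw [mem_closedBall_zero_iff]
    exact (sq_le_one_iff₀ (norm_nonneg _)).1 (hij.trans_eq hB1)
  have himage : densityMatrices 𝕜 κ = (fun B => Bᴴ * B) '' {B | (Bᴴ * B).trace = 1} := by
    ext G
    constructor
    · rintro ⟨hG, hG1⟩
      obtain ⟨B, rfl⟩ := exists_eq_conjTranspose_mul_self hG
      exact ⟨B, hG1, rfl⟩
    · rintro ⟨B, hB, rfl⟩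
      exact ⟨Matrix.posSemidef_conjTranspose_mul_self B, hB⟩
  rw [himage]
  exact hsphere.image hsq

lemma exists_smul_mem_densityMatrices {G : Matrix κ κ 𝕜} (hG : G.PosSemidef) (hG0 : G ≠ 0) :
    ∃ t : ℝ, 0 < t ∧ ∃ D ∈ densityMatrices 𝕜 κ, G = (t : 𝕜) • D := by
  have htr : 0 < G.trace :=
    hG.trace_nonneg.lt_of_ne fun h => hG0 (hG.trace_eq_zero_iff.1 h.symm)
  obtain ⟨t, ht⟩ := RCLike.nonneg_iff_exists_ofReal.1 htr.le
  rw [← ht.2] at htr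
  have ht0 : 0 < t := by exact_mod_cast htr
  have ht' : (t : 𝕜) ≠ 0 := by exact_mod_cast ht0.ne'
  refine ⟨t, ht0, (t : 𝕜)⁻¹ • G, ⟨hG.smul (inv_nonneg.2 htr.le), ?_⟩,
    (smul_inv_smul₀ ht' G).symm⟩
  rw [Matrix.trace_smul, ← ht.2, smul_eq_mul, inv_mul_cancel₀ ht']

end DensityMatrices

section Separation

variable {𝕜 κ V : Type*} [RCLike 𝕜] [AddCommGroup V] [Module 𝕜 V]

lemma exists_linearMap_pos [Finite κ] {Φ : Matrix κ κ 𝕜 →ₗ[𝕜] V}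
    (hΦ : ∀ G : Matrix κ κ 𝕜, G.PosSemidef → Φ G = 0 → G = 0) :
    ∃ L : V →ₗ[𝕜] 𝕜, ∀ G : Matrix κ κ 𝕜, G.PosSemidef → G ≠ 0 → 0 < RCLike.re (L (Φ G)) := by
  cases nonempty_fintype κ
  let coords := (Module.finBasis 𝕜 (LinearMap.range Φ)).equivFun
  let φ := coords.toLinearMap ∘ₗ Φ.rangeRestrict
  have hφ : Continuous φ := φ.continuous_of_finiteDimensional
  have hzero : (0 : Fin _ → 𝕜) ∉ φ '' densityMatrices 𝕜 κ := by
    rintro ⟨D, ⟨hD, hD1⟩, hφD⟩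
    have hΦD : Φ D = 0 := by simpa [φ, Subtype.ext_iff] using hφD
    simp [hΦ D hD hΦD] at hD1
  obtain ⟨ℓ, u, hu, hℓ⟩ := RCLike.geometric_hahn_banach_point_closed (𝕜 := 𝕜)
    (convex_densityMatrices.is_linear_image (φ.restrictScalars ℝ).isLinear)
    (isCompact_densityMatrices.image hφ).isClosed hzero
  obtain ⟨L, hL⟩ := (ℓ.toLinearMap ∘ₗ coords.toLinearMap).exists_extend
  have hLΦ (G) : L (Φ G) = ℓ (φ G) := LinearMap.congr_fun hL (Φ.rangeRestrict G)
  refine ⟨L, fun G hG hG0 => ?_⟩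
  obtain ⟨t, ht, D, hD, rfl⟩ := exists_smul_mem_densityMatrices hG hG0
  have hu0 : 0 < u := by simpa using hu
  rw [map_smul, map_smul, hLΦ, smul_eq_mul, RCLike.re_ofReal_mul]
  exact mul_pos ht (hu0.trans (hℓ _ ⟨D, hD, rfl⟩))

lemma posSemidef_fromBlocks_zero {m n : Type*} [Finite m] [Finite n] {A : Matrix m m 𝕜}
    {D : Matrix n n 𝕜} (hA : A.PosSemidef) (hD : D.PosSemidef) :
    (Matrix.fromBlocks A 0 0 D).PosSemidef := by
  cases nonempty_fintype m
  cases nonempty_fintype n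
  obtain ⟨B, rfl⟩ := exists_eq_conjTranspose_mul_self hA
  obtain ⟨C, rfl⟩ := exists_eq_conjTranspose_mul_self hD
  rw [show Matrix.fromBlocks (Bᴴ * B) 0 0 (Cᴴ * C) =
      (Matrix.fromBlocks B 0 0 C)ᴴ * Matrix.fromBlocks B 0 0 C by
    simp [Matrix.fromBlocks_conjTranspose, Matrix.fromBlocks_multiply]]
  exact Matrix.posSemidef_conjTranspose_mul_self _

/-- The map `G ↦ Φ G₁₁ - G₂₂ • f` on matrices bordered by one row and one column. For a
functional `L`, the composite of `L` with this map is positive on nonzero positive semidefinite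
matrices exactly when `L ∘ Φ` is and `L f < 0`, which reduces strict separation to positivity. -/
def cornerMap (Φ : Matrix κ κ 𝕜 →ₗ[𝕜] V) (f : V) : Matrix (κ ⊕ Unit) (κ ⊕ Unit) 𝕜 →ₗ[𝕜] V where
  toFun G := Φ G.toBlocks₁₁ - G (.inr ()) (.inr ()) • f
  map_add' G H := by
    rw [show (G + H).toBlocks₁₁ = G.toBlocks₁₁ + H.toBlocks₁₁ from rfl, map_add,
      Matrix.add_apply, add_smul, add_sub_add_comm]
  map_smul' c G := by
    rw [show (c • G).toBlocks₁₁ = c • G.toBlocks₁₁ from rfl, map_smul, Matrix.smul_apply,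
      smul_assoc, RingHom.id_apply, smul_sub]

lemma cornerMap_apply (Φ : Matrix κ κ 𝕜 →ₗ[𝕜] V) (f : V) (G : Matrix (κ ⊕ Unit) (κ ⊕ Unit) 𝕜) :
    cornerMap Φ f G = Φ G.toBlocks₁₁ - G (.inr ()) (.inr ()) • f :=
  rfl

variable [Finite κ]

lemma eq_zero_of_cornerMap_eq_zero {Φ : Matrix κ κ 𝕜 →ₗ[𝕜] V}
    (hΦ : ∀ G : Matrix κ κ 𝕜, G.PosSemidef → Φ G = 0 → G = 0)
    {f : V} (hf : ∀ G : Matrix κ κ 𝕜, G.PosSemidef → Φ G ≠ f)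
    {G : Matrix (κ ⊕ Unit) (κ ⊕ Unit) 𝕜} (hG : G.PosSemidef) (hG0 : cornerMap Φ f G = 0) :
    G = 0 := by
  cases nonempty_fintype κ
  have hΦG : Φ G.toBlocks₁₁ = G (.inr ()) (.inr ()) • f := sub_eq_zero.1 hG0
  have hG₁₁ : G.toBlocks₁₁.PosSemidef := hG.submatrix Sum.inl
  have hcorner : 0 ≤ G (.inr ()) (.inr ()) := hG.diag_nonneg
  have hcorner0 : G (.inr ()) (.inr ()) = 0 := by
    by_contra hne
    refine hf _ (hG₁₁.smul (inv_nonneg.2 hcorner)) ?_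
    rw [map_smul, hΦG, inv_smul_smul₀ hne]
  have hG₁₁0 : G.toBlocks₁₁ = 0 := hΦ _ hG₁₁ (by rw [hΦG, hcorner0, zero_smul])
  have htr : G.trace = G.toBlocks₁₁.trace + G (.inr ()) (.inr ()) := by
    simp [Matrix.trace, Matrix.toBlocks₁₁]
  rw [← hG.trace_eq_zero_iff, htr, hG₁₁0, hcorner0, Matrix.trace_zero, add_zero]

theorem exists_linearMap_pos_and_neg {Φ : Matrix κ κ 𝕜 →ₗ[𝕜] V}
    (hΦ : ∀ G : Matrix κ κ 𝕜, G.PosSemidef → Φ G = 0 → G = 0)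
    {f : V} (hf : ∀ G : Matrix κ κ 𝕜, G.PosSemidef → Φ G ≠ f) :
    ∃ L : V →ₗ[𝕜] 𝕜,
      (∀ G : Matrix κ κ 𝕜, G.PosSemidef → G ≠ 0 → 0 < RCLike.re (L (Φ G))) ∧
        RCLike.re (L f) < 0 := by
  obtain ⟨L, hL⟩ := exists_linearMap_pos fun G => eq_zero_of_cornerMap_eq_zero hΦ hf (G := G)
  refine ⟨L, fun G hG hG0 => ?_, ?_⟩
  · have hL₁ := hL _ (posSemidef_fromBlocks_zero hG .zero)
      fun h => hG0 (Matrix.fromBlocks_inj.1 (h.trans Matrix.fromBlocks_zero.symm)).1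
    simpa [cornerMap_apply] using hL₁
  · have hL₂ := hL _ (posSemidef_fromBlocks_zero .zero .one)
      fun h => one_ne_zero (Matrix.fromBlocks_inj.1 (h.trans Matrix.fromBlocks_zero.symm)).2.2.2
    simpa [cornerMap_apply] using hL₂

end Separation

section Words

variable {n : ℕ}

/-- The monomial `x_{w₁} ⋯ x_{w_ℓ}` attached to a word `w`. -/
noncomputable def word (w : List (Fin n)) : FreeAlg n := (w.map (FreeAlgebra.ι ℂ)).prod

lemma word_append (u v : List (Fin n)) : word (u ++ v) = word u * word v := by
  simp [word]

lemma word_cons (x : Fin n) (w : List (Fin n)) :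
    word (x :: w) = FreeAlgebra.ι ℂ x * word w := by
  simp [word]

/-- The basis of monomials of `ℂ⟨x⟩`, indexed by words. -/
noncomputable def wordBasis (n : ℕ) : Module.Basis (List (Fin n)) ℂ (FreeAlg n) :=
  (FreeAlgebra.basisFreeMonoid ℂ (Fin n)).reindex FreeMonoid.toList

@[simp]
lemma wordBasis_apply (w : List (Fin n)) : wordBasis n w = word w := by
  have hsingle : FreeAlgebra.equivMonoidAlgebraFreeMonoid (word w) =
      MonoidAlgebra.single (FreeMonoid.ofList w) (1 : ℂ) := by
    induction w with
    | nil => simp [word, MonoidAlgebra.one_def]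
    | cons x w ih =>
      rw [word_cons, map_mul, ih]
      simp [FreeAlgebra.equivMonoidAlgebraFreeMonoid, MonoidAlgebra.single_mul_single,
        FreeMonoid.ofList_cons]
  rw [wordBasis, Module.Basis.reindex_apply, FreeAlgebra.basisFreeMonoid, Module.Basis.map_apply,
    Finsupp.coe_basisSingleOne]
  exact (AlgEquiv.symm_apply_eq _).2 hsingle.symm

/-- The coefficient of the word `w` in a noncommutative polynomial. -/
noncomputable def coeff (w : List (Fin n)) : FreeAlg n →ₗ[ℂ] ℂ := (wordBasis n).coord w

lemma coeff_word (w v : List (Fin n)) : coeff w (word v) = if v = w then 1 else 0 := by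
  rw [coeff, Module.Basis.coord_apply, ← wordBasis_apply, Module.Basis.repr_self,
    Finsupp.single_apply]

lemma ext_coeff {a b : FreeAlg n} (h : ∀ w, coeff w a = coeff w b) : a = b :=
  (wordBasis n).ext_elem h

lemma word_induction {p : FreeAlg n → Prop} (word : ∀ w, p (word w))
    (add : ∀ a b, p a → p b → p (a + b)) (smul : ∀ (c : ℂ) a, p a → p (c • a)) (a : FreeAlg n) :
    p a := by
  have ha : a ∈ Submodule.span ℂ (Set.range (wordBasis n)) := (wordBasis n).mem_span a
  induction ha using Submodule.span_induction with
  | mem _ hw =>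
    obtain ⟨w, rfl⟩ := hw
    rw [wordBasis_apply]
    exact word w
  | zero => simpa using smul 0 _ (word [])
  | add a b _ _ ha hb => exact add a b ha hb
  | smul c a _ ha => exact smul c a ha

lemma word_mem_degLE {δ : ℕ} {w : List (Fin n)} (hw : w.length ≤ δ) : word w ∈ degLE n δ :=
  Submodule.subset_span ⟨w, hw, rfl⟩

lemma mem_degLE_iff {δ : ℕ} {a : FreeAlg n} :
    a ∈ degLE n δ ↔ ∀ w : List (Fin n), δ < w.length → coeff w a = 0 := by
  have hspan : degLE n δ = Submodule.span ℂ (wordBasis n '' {w | w.length ≤ δ}) := by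
    simp only [degLE, Set.image, wordBasis_apply, word, Set.mem_ofPred_eq, eq_comm]
  rw [hspan, Module.Basis.mem_span_image]
  simp only [Set.subset_def, Finset.mem_coe, Finsupp.mem_support_iff, Set.mem_ofPred_eq,
    ← not_lt, not_imp_not]
  rfl

lemma exists_mem_degLE (a : FreeAlg n) : ∃ δ, a ∈ degLE n δ := by
  induction a using word_induction with
  | word w => exact ⟨w.length, word_mem_degLE le_rfl⟩
  | add a b ha hb =>
    obtain ⟨p, hp⟩ := ha
    obtain ⟨q, hq⟩ := hb
    simp only [mem_degLE_iff] at *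
    exact ⟨max p q, fun w hw => by
      rw [map_add, hp w (by omega), hq w (by omega), add_zero]⟩
  | smul c a ha =>
    obtain ⟨p, hp⟩ := ha
    exact ⟨p, Submodule.smul_mem _ c hp⟩

lemma degLE_mono {p q : ℕ} (hpq : p ≤ q) : degLE n p ≤ degLE n q :=
  Submodule.span_mono fun _ ⟨w, hw, ha⟩ => ⟨w, hw.trans hpq, ha⟩

lemma matDegLE_matDeg {I J : Type*} [Finite I] [Finite J] (f : Matrix I J (FreeAlg n)) :
    matDegLE f (matDeg f) := by
  cases nonempty_fintype I
  cases nonempty_fintype J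
  choose g hg using fun p : I × J => exists_mem_degLE (f p.1 p.2)
  exact Nat.sInf_mem (s := {δ | matDegLE f δ}) ⟨Finset.univ.sup g, fun i j =>
    degLE_mono (Finset.le_sup (f := g) (Finset.mem_univ (i, j))) (hg (i, j))⟩

lemma coeff_append_mul {u v : List (Fin n)} {a b : FreeAlg n} (ha : a ∈ degLE n u.length)
    (hb : b ∈ degLE n v.length) : coeff (u ++ v) (a * b) = coeff u a * coeff v b := by
  induction ha using Submodule.span_induction with
  | mem _ hp =>
    obtain ⟨p, hp, rfl⟩ := hp
    induction hb using Submodule.span_induction with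
    | mem _ hq =>
      obtain ⟨q, hq, rfl⟩ := hq
      have hpq : p ++ q = u ++ v ↔ p = u ∧ q = v := by
        refine ⟨fun h => List.append_inj' h ?_, fun h => by rw [h.1, h.2]⟩
        have hlen := congrArg List.length h
        simp only [List.length_append] at hlen
        omega
      change coeff _ (word p * word q) = coeff _ (word p) * coeff _ (word q)
      simp only [← word_append, coeff_word, hpq, ite_and, mul_ite, mul_one, mul_zero]
      split_ifs <;> rfl
    | zero => simp
    | add b b' _ _ hb hb' => rw [mul_add, map_add, map_add, mul_add, hb, hb']
    | smul c b _ hb => rw [mul_smul_comm, map_smul, map_smul, mul_smul_comm, hb]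
  | zero => simp
  | add a a' _ _ ha ha' => rw [add_mul, map_add, map_add, add_mul, ha, ha']
  | smul c a _ ha => rw [smul_mul_assoc, map_smul, map_smul, smul_mul_assoc, ha]

end Words

section Involution

variable {n : ℕ}

lemma coeff_nstar (w : List (Fin n)) (a : FreeAlg n) :
    coeff w (nstar a) = star (coeff w.reverse a) := by
  have hw : FreeMonoid.ofList w = FreeMonoid.reverse (FreeMonoid.ofList w.reverse) :=
    (List.reverse_reverse w).symm
  have hinj : Function.Injective (FreeMonoid.reverse : FreeMonoid (Fin n) → FreeMonoid (Fin n)) :=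
    List.reverse_injective
  change (FreeAlgebra.equivMonoidAlgebraFreeMonoid (nstar a)).coeff (FreeMonoid.ofList w) = _
  rw [nstar, AlgEquiv.apply_symm_apply, MonoidAlgebra.coeff_ofCoeff, hw,
    Finsupp.mapDomain_apply hinj]
  rfl

/-- The involution `nstar` as a conjugate-linear map. -/
noncomputable def nstarₗ (n : ℕ) : FreeAlg n →ₗ⋆[ℂ] FreeAlg n where
  toFun := nstar
  map_add' a b := ext_coeff fun w => by simp [coeff_nstar]
  map_smul' c a := ext_coeff fun w => by simp [coeff_nstar]

lemma nstar_add (a b : FreeAlg n) : nstar (a + b) = nstar a + nstar b := map_add (nstarₗ n) a b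

lemma nstar_smul (c : ℂ) (a : FreeAlg n) : nstar (c • a) = star c • nstar a :=
  map_smulₛₗ (nstarₗ n) c a

lemma nstar_nstar (a : FreeAlg n) : nstar (nstar a) = a :=
  ext_coeff fun w => by simp [coeff_nstar]

lemma nstar_word (w : List (Fin n)) : nstar (word w) = word w.reverse :=
  ext_coeff fun v => by simp [coeff_nstar, coeff_word, List.reverse_eq_iff, apply_ite]

lemma nstar_mul (a b : FreeAlg n) : nstar (a * b) = nstar b * nstar a := by
  induction a using word_induction with
  | word u =>
    induction b using word_induction with
    | word v => simp only [← word_append, nstar_word, List.reverse_append]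
    | add b c hb hc => rw [mul_add, nstar_add, nstar_add, add_mul, hb, hc]
    | smul c b hb => rw [mul_smul_comm, nstar_smul, nstar_smul, smul_mul_assoc, hb]
  | add a c ha hc => rw [add_mul, nstar_add, nstar_add, mul_add, ha, hc]
  | smul c a ha => rw [smul_mul_assoc, nstar_smul, nstar_smul, mul_smul_comm, ha]

lemma nstar_mem_degLE {δ : ℕ} {a : FreeAlg n} (ha : a ∈ degLE n δ) : nstar a ∈ degLE n δ := by
  rw [mem_degLE_iff] at ha ⊢
  exact fun w hw => by rw [coeff_nstar, ha _ (by simpa using hw), star_zero]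

theorem eq_zero_of_sum_nstar_mul_self_eq_zero {κ : Type*} [Fintype κ] {g : κ → FreeAlg n}
    (hg : ∑ r, nstar (g r) * g r = 0) : g = 0 := by
  -- No cancellation in top degree: `u.reverse ++ u` has coefficient `∑ |coeff u (g r)|²`.
  have hlead {N : ℕ} (hN : ∀ r, g r ∈ degLE n N) {u : List (Fin n)} (hu : u.length = N) (r) :
      coeff u (g r) = 0 := by
    have hsum : ∑ r, ((‖coeff u (g r)‖ ^ 2 : ℝ) : ℂ) = 0 := by
      calc
        _ = ∑ r, coeff (u.reverse ++ u) (nstar (g r) * g r) := Finset.sum_congr rfl fun r _ => by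
          rw [coeff_append_mul (nstar_mem_degLE (by simpa [hu] using hN r)) (hu ▸ hN r),
            coeff_nstar, List.reverse_reverse]
          simp [← Complex.conj_mul']
        _ = 0 := by rw [← map_sum, hg, map_zero]
    have hnorm := (Finset.sum_eq_zero_iff_of_nonneg fun r _ => sq_nonneg ‖coeff u (g r)‖).1
      (by exact_mod_cast hsum) r (Finset.mem_univ r)
    simpa using hnorm
  have hvanish (N : ℕ) (hN : ∀ r, ∀ w : List (Fin n), N ≤ w.length → coeff w (g r) = 0) :
      g = 0 := by
    induction N with
    | zero => exact funext fun r => ext_coeff fun w => by simpa using hN r w (Nat.zero_le _)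
    | succ N ih =>
      refine ih fun r w hw => ?_
      rcases hw.eq_or_lt with hw | hw
      · exact hlead (fun r => mem_degLE_iff.2 (hN r)) hw.symm r
      · exact hN r w hw
  choose N hN using fun r => exists_mem_degLE (g r)
  exact hvanish (Finset.univ.sup N + 1) fun r =>
    mem_degLE_iff.1 (degLE_mono (Finset.le_sup (Finset.mem_univ r)) (hN r))

end Involution

section Gram

variable {n : ℕ} {I κ : Type*}

/-- The involution `adjM` on square matrices as a conjugate-linear map. -/
noncomputable def adjMₗ (n : ℕ) (I : Type*) :
    Matrix I I (FreeAlg n) →ₗ⋆[ℂ] Matrix I I (FreeAlg n) where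
  toFun := adjM
  map_add' _ _ := by ext; exact nstar_add _ _
  map_smul' _ _ := by ext; exact nstar_smul _ _

/-- The product `p* q` of the column `p*` with the row `q`, i.e. the matrix with entries
`pᵢ* qⱼ`. -/
noncomputable def hermOuter :
    (I → FreeAlg n) →ₗ⋆[ℂ] (I → FreeAlg n) →ₗ[ℂ] Matrix I I (FreeAlg n) :=
  LinearMap.mk₂'ₛₗ (starRingEnd ℂ) (RingHom.id ℂ)
    (fun p q => Matrix.of fun i j => nstar (p i) * q j)
    (fun _ _ _ => by ext; simp [nstar_add, add_mul])
    (fun _ _ _ => by ext; simp [nstar_smul])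
    (fun _ _ _ => by ext; simp [mul_add])
    (fun _ _ _ => by ext; simp)

lemma hermOuter_apply (p q : I → FreeAlg n) (i j : I) : hermOuter p q i j = nstar (p i) * q j :=
  rfl

lemma adjM_hermOuter (p q : I → FreeAlg n) : adjM (hermOuter p q) = hermOuter q p := by
  ext i j
  simp [adjM, hermOuter_apply, nstar_mul, nstar_nstar]

lemma adjM_mul_self_eq_sum_hermOuter [Fintype κ] (s : Matrix κ I (FreeAlg n)) :
    adjM s * s = ∑ r, hermOuter (s r) (s r) := by
  ext i j
  simp [Matrix.mul_apply, Matrix.sum_apply, adjM, hermOuter_apply]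

lemma eq_zero_of_sum_hermOuter_self_eq_zero [Fintype κ] {p : κ → I → FreeAlg n}
    (hp : ∑ r, hermOuter (p r) (p r) = 0) : p = 0 := by
  ext r j
  have hjj : ∑ r, nstar (p r j) * p r j = 0 := by
    simpa [Matrix.sum_apply, hermOuter_apply] using congr_fun₂ hp j j
  exact congr_fun (eq_zero_of_sum_nstar_mul_self_eq_zero hjj) r

variable [Fintype κ]

/-- The Gram map `G ↦ ∑ G_{ab} e_a* e_b` of a family `e` of polynomial rows. Its values on the
positive semidefinite matrices are the sums of hermitian squares of rows in the span of `e`. -/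
noncomputable def gram (e : κ → I → FreeAlg n) : Matrix κ κ ℂ →ₗ[ℂ] Matrix I I (FreeAlg n) where
  toFun G := ∑ a, ∑ b, G a b • hermOuter (e a) (e b)
  map_add' G H := by simp [add_smul, Finset.sum_add_distrib]
  map_smul' c G := by simp [mul_smul, Finset.smul_sum]

lemma gram_apply (e : κ → I → FreeAlg n) (G : Matrix κ κ ℂ) :
    gram e G = ∑ a, ∑ b, G a b • hermOuter (e a) (e b) :=
  rfl

lemma adjM_gram (e : κ → I → FreeAlg n) (G : Matrix κ κ ℂ) : adjM (gram e G) = gram e Gᴴ := by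
  change adjMₗ n I (gram e G) = _
  simp only [gram_apply, map_sum, map_smulₛₗ]
  rw [Finset.sum_comm]
  simp_rw [show ∀ a b, adjMₗ n I (hermOuter (e a) (e b)) = hermOuter (e b) (e a) from
    fun _ _ => adjM_hermOuter _ _]
  rfl

lemma gram_conjTranspose_mul_self {μ : Type*} [Fintype μ] (e : κ → I → FreeAlg n)
    (B : Matrix μ κ ℂ) :
    gram e (Bᴴ * B) = ∑ r, hermOuter (∑ a, B r a • e a) (∑ a, B r a • e a) := by
  calc
    _ = ∑ a, ∑ b, ∑ r, (star (B r a) * B r b) • hermOuter (e a) (e b) := by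
      simp only [gram_apply, Matrix.mul_apply, Matrix.conjTranspose_apply, Finset.sum_smul]
    _ = ∑ r, ∑ b, ∑ a, (star (B r a) * B r b) • hermOuter (e a) (e b) := by
      rw [Finset.sum_comm]
      exact (Finset.sum_congr rfl fun _ _ => Finset.sum_comm).trans Finset.sum_comm
    _ = _ := by
      simp only [map_sum, map_smulₛₗ, LinearMap.sum_apply, LinearMap.smul_apply,
        RingHom.id_apply, Finset.smul_sum, smul_smul, mul_comm (star _), starRingEnd_apply]

lemma eq_zero_of_gram_eq_zero {e : κ → I → FreeAlg n} (he : LinearIndependent ℂ e)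
    {G : Matrix κ κ ℂ} (hG : G.PosSemidef) (hG0 : gram e G = 0) : G = 0 := by
  obtain ⟨B, rfl⟩ := exists_eq_conjTranspose_mul_self hG
  rw [gram_conjTranspose_mul_self] at hG0
  have hrow := eq_zero_of_sum_hermOuter_self_eq_zero hG0
  have hB : B = 0 := by
    ext r a
    exact Fintype.linearIndependent_iff.1 he (B r) (congr_fun hrow r) a
  rw [hB, Matrix.mul_zero]

end Gram

section MonomialRows

variable {n m : ℕ} {I : Type*} [DecidableEq I]

/-- The words of length at most `m`. -/
abbrev Word (n m : ℕ) : Type := {w : List (Fin n) // w.length ≤ m}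

noncomputable instance : Fintype (Word n m) :=
  (List.finite_length_le (Fin n) m).fintype

/-- The row whose entry at `i` is the monomial `w` and whose other entries vanish, for the index
`(i, w)`. -/
noncomputable def monoRow (a : I × Word n m) : I → FreeAlg n := Pi.single a.1 (word a.2.1)

lemma hermOuter_monoRow (a b : I × Word n m) :
    hermOuter (monoRow a) (monoRow b) =
      Matrix.single a.1 b.1 (word (a.2.1.reverse ++ b.2.1)) := by
  ext i j
  have hstar : nstar (monoRow a i) = if i = a.1 then word a.2.1.reverse else 0 := by
    rw [monoRow, Pi.single_apply, apply_ite nstar, nstar_word]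
    exact congrArg _ (map_zero (nstarₗ n))
  rw [hermOuter_apply, hstar, monoRow, Pi.single_apply, Matrix.single_apply,
    ite_zero_mul_ite_zero, word_append]
  simp only [eq_comm]

lemma linearIndependent_monoRow :
    LinearIndependent ℂ (monoRow : I × Word n m → I → FreeAlg n) := by
  have hword : LinearIndependent ℂ fun w : Word n m => (word w.1 : FreeAlg n) := by
    simpa [Function.comp_def] using
      (wordBasis n).linearIndependent.comp Subtype.val Subtype.val_injective
  exact (Pi.linearIndependent_single (fun _ : I => fun w : Word n m => (word w.1 : FreeAlg n))
    fun _ => hword).comp _ (Equiv.sigmaEquivProd I (Word n m)).symm.injective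

lemma monoRow_mem_degLE (a : I × Word n m) (j : I) : monoRow a j ∈ degLE n m := by
  rw [monoRow, Pi.single_apply]
  split_ifs
  exacts [word_mem_degLE a.2.2, zero_mem _]

theorem exists_gram_monoRow_eq_sum_adjM_mul_self [Fintype I]
    {G : Matrix (I × Word n m) (I × Word n m) ℂ} (hG : G.PosSemidef) :
    ∃ s : Word n m → Matrix I I (FreeAlg n),
      (∀ u, matDegLE (s u) m) ∧ gram monoRow G = ∑ u, adjM (s u) * s u := by
  obtain ⟨B, rfl⟩ := exists_eq_conjTranspose_mul_self hG
  refine ⟨fun u => .of fun i => ∑ a, B (i, u) a • monoRow a, fun u i j => ?_, ?_⟩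
  · simp only [Matrix.of_apply, Finset.sum_apply]
    exact Submodule.sum_mem _ fun a _ => Submodule.smul_mem _ _ (monoRow_mem_degLE a j)
  · simp_rw [adjM_mul_self_eq_sum_hermOuter]
    rw [gram_conjTranspose_mul_self, Fintype.sum_prod_type_right]
    rfl

end MonomialRows

section Realization

lemma exists_gramVectors {κ ι σ : Type*} [Fintype ι] (e : κ ≃ ι)
    {H : Matrix κ κ ℂ} (hH : H.PosDef) {T : σ → Matrix κ κ ℂ} (hT : ∀ x, (T x).IsHermitian) :
    ∃ (X : σ → Matrix ι ι ℂ) (y : κ → ι → ℂ), (∀ x, (X x).IsHermitian) ∧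
      (∀ a b, star (y a) ⬝ᵥ y b = H a b) ∧ (∀ x a b, star (y a) ⬝ᵥ (X x *ᵥ y b) = T x a b) ∧
      ∀ v w, (∀ a, star (y a) ⬝ᵥ v = star (y a) ⬝ᵥ w) → v = w := by
  classical
  obtain ⟨B, hBunit, hB⟩ : ∃ B : Matrix ι ι ℂ, IsUnit B ∧ H.submatrix e.symm e.symm = Bᴴ * B := by
    open scoped MatrixOrder in
    exact CStarAlgebra.isStrictlyPositive_iff_eq_star_mul_self.1
      (hH.submatrix e.symm.injective).isStrictlyPositive
  obtain ⟨C, hBC, hCB⟩ := isUnit_iff_exists.1 hBunit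
  have hCB' : Cᴴ * Bᴴ = 1 := by rw [← Matrix.conjTranspose_mul, hBC, Matrix.conjTranspose_one]
  have hBC' : Bᴴ * Cᴴ = 1 := mul_eq_one_comm.1 hCB'
  let X (x : σ) : Matrix ι ι ℂ := Cᴴ * (T x).submatrix e.symm e.symm * C
  let y (a : κ) : ι → ℂ := B *ᵥ Pi.single (e a) 1
  have hy (a v) : star (y a) ⬝ᵥ v = (Bᴴ *ᵥ v) (e a) := by
    simp only [y, Matrix.mulVec_single_one]
    rfl
  refine ⟨X, y, fun x => Matrix.isHermitian_conjTranspose_mul_mul C ((hT x).submatrix e.symm),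
    fun a b => ?_, fun x a b => ?_, fun v w hvw => ?_⟩
  · rw [hy, Matrix.mulVec_mulVec, ← hB, Matrix.mulVec_single_one]
    simp
  · have hBXB : Bᴴ * X x * B = (T x).submatrix e.symm e.symm := by
      calc
        _ = (Bᴴ * Cᴴ) * (T x).submatrix e.symm e.symm * (C * B) := by
          simp only [X, Matrix.mul_assoc]
        _ = _ := by rw [hBC', hCB, Matrix.one_mul, Matrix.mul_one]
    rw [hy, Matrix.mulVec_mulVec, Matrix.mulVec_mulVec, hBXB, Matrix.mulVec_single_one]
    simp
  · have hBvw : Bᴴ *ᵥ v = Bᴴ *ᵥ w := funext fun p => by simpa [hy] using hvw (e.symm p)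
    simpa [hCB'] using congrArg (Cᴴ *ᵥ ·) hBvw

end Realization

section Functional

variable {n : ℕ} {I κ : Type*} [Fintype κ]

/-- The hermitian functional `p ↦ L p + conj (L p*)`, whose value at hermitian `p` is twice the
real part of `L p`. -/
noncomputable def hermPart (L : Matrix I I (FreeAlg n) →ₗ[ℂ] ℂ) :
    Matrix I I (FreeAlg n) →ₗ[ℂ] ℂ :=
  L + (starLinearEquiv ℂ : ℂ ≃ₗ⋆[ℂ] ℂ).toLinearMap.comp (L.comp (adjMₗ n I))

lemma hermPart_apply (L : Matrix I I (FreeAlg n) →ₗ[ℂ] ℂ) (p : Matrix I I (FreeAlg n)) :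
    hermPart L p = L p + star (L (adjM p)) :=
  rfl

lemma hermPart_adjM (L : Matrix I I (FreeAlg n) →ₗ[ℂ] ℂ) (p : Matrix I I (FreeAlg n)) :
    hermPart L (adjM p) = star (hermPart L p) := by
  have hp : adjM (adjM p) = p := by
    ext i j
    exact nstar_nstar _
  rw [hermPart_apply, hermPart_apply, hp, star_add, star_star, add_comm]

lemma re_hermPart (L : Matrix I I (FreeAlg n) →ₗ[ℂ] ℂ) {p : Matrix I I (FreeAlg n)}
    (hp : adjM p = p) : (hermPart L p).re = 2 * (L p).re := by
  rw [hermPart_apply, hp, Complex.add_re, Complex.star_def, Complex.conj_re, two_mul]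

lemma posDef_of_re_gram_pos {e : κ → I → FreeAlg n} {ℓ : Matrix I I (FreeAlg n) →ₗ[ℂ] ℂ}
    (hℓ : ∀ p, ℓ (adjM p) = star (ℓ p))
    (hpos : ∀ G : Matrix κ κ ℂ, G.PosSemidef → G ≠ 0 → 0 < (ℓ (gram e G)).re) :
    (Matrix.of fun a b => ℓ (hermOuter (e a) (e b))).PosDef := by
  have hherm : (Matrix.of fun a b => ℓ (hermOuter (e a) (e b))).IsHermitian := by
    ext a b
    rw [Matrix.conjTranspose_apply, Matrix.of_apply, Matrix.of_apply, ← hℓ, adjM_hermOuter]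
  refine .of_dotProduct_mulVec_pos hherm fun c hc => ?_
  have hform : star c ⬝ᵥ (Matrix.of (fun a b => ℓ (hermOuter (e a) (e b))) *ᵥ c) =
      ℓ (gram e (Matrix.vecMulVec (star c) c)) := by
    simp only [gram_apply, map_sum, map_smul, dotProduct, Matrix.mulVec, Matrix.of_apply,
      Matrix.vecMulVec_apply, Finset.mul_sum, smul_eq_mul]
    exact Finset.sum_congr rfl fun a _ => Finset.sum_congr rfl fun b _ => by ring
  refine Complex.pos_iff.2 ⟨?_, (hherm.im_star_dotProduct_mulVec_self c).symm⟩
  rw [hform]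
  exact hpos _ (Matrix.posSemidef_vecMulVec_star_self c) (by simpa using hc)

end Functional

section GNS

variable {n m : ℕ} {I ι : Type*} [Fintype ι] [DecidableEq ι]

lemma conjTranspose_prod_map {X : Fin n → Matrix ι ι ℂ} (hX : ∀ x, (X x).IsHermitian)
    (w : List (Fin n)) : ((w.map X).prod)ᴴ = (w.reverse.map X).prod := by
  rw [Matrix.conjTranspose_list_prod, List.map_map, List.map_reverse]
  congr 3
  exact funext fun x => hX x

lemma prod_map_mulVec {X : Fin n → Matrix ι ι ℂ} {y : I × Word n m → ι → ℂ} {i : I}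
    (hstep : ∀ x v (hv : (x :: v).length ≤ m),
      X x *ᵥ y (i, ⟨v, (Nat.le_succ _).trans hv⟩) = y (i, ⟨x :: v, hv⟩))
    (w : List (Fin n)) (hw : w.length ≤ m) :
    (w.map X).prod *ᵥ y (i, ⟨[], Nat.zero_le m⟩) = y (i, ⟨w, hw⟩) := by
  induction w with
  | nil => simp
  | cons x v ih =>
    rw [List.map_cons, List.prod_cons, ← Matrix.mulVec_mulVec,
      ih ((Nat.le_succ _).trans hw), hstep]

variable [DecidableEq I]

lemma adjM_single (i j : I) (a : FreeAlg n) :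
    adjM (Matrix.single i j a) = Matrix.single j i (nstar a) := by
  ext p q
  simp only [adjM, Matrix.single_apply, and_comm, apply_ite nstar]
  exact if_congr .rfl rfl (map_zero (nstarₗ n))

theorem exists_moment_realization {ℓ : Matrix I I (FreeAlg n) →ₗ[ℂ] ℂ}
    (hℓ : ∀ p, ℓ (adjM p) = star (ℓ p))
    (hH : (Matrix.of fun a b : I × Word n m =>
      ℓ (hermOuter (monoRow a) (monoRow b))).PosDef) (e : I × Word n m ≃ ι) :
    ∃ (X : Fin n → Matrix ι ι ℂ) (y : I → ι → ℂ), (∀ x, (X x).IsHermitian) ∧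
      ∀ i j (w : List (Fin n)), w.length ≤ 2 * m + 1 →
        star (y i) ⬝ᵥ ((w.map X).prod *ᵥ y j) = ℓ (Matrix.single i j (word w)) := by
  let T (x : Fin n) : Matrix (I × Word n m) (I × Word n m) ℂ :=
    .of fun a b => ℓ (Matrix.single a.1 b.1 (word (a.2.1.reverse ++ x :: b.2.1)))
  have hT (x) : (T x).IsHermitian := by
    ext a b
    simp [T, ← hℓ, adjM_single, nstar_word]
  obtain ⟨X, y, hX, hyy, hyXy, hspan⟩ := exists_gramVectors e hH hT
  simp only [Matrix.of_apply, hermOuter_monoRow] at hyy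
  have hword (i) (w : List (Fin n)) (hw : w.length ≤ m) :
      (w.map X).prod *ᵥ y (i, ⟨[], Nat.zero_le m⟩) = y (i, ⟨w, hw⟩) :=
    prod_map_mulVec (fun x v hv => hspan _ _ fun a => by rw [hyXy, hyy]; rfl) w hw
  refine ⟨X, fun i => y (i, ⟨[], Nat.zero_le m⟩), hX, fun i j w hw => ?_⟩
  have hdual (u : List (Fin n)) (hu : u.length ≤ m) (z : ι → ℂ) :
      star (y (i, ⟨[], Nat.zero_le m⟩)) ⬝ᵥ ((u.reverse.map X).prod *ᵥ z) =
        star (y (i, ⟨u, hu⟩)) ⬝ᵥ z := by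
    rw [← conjTranspose_prod_map hX, Matrix.dotProduct_mulVec, ← Matrix.star_mulVec, hword i u hu]
  -- Length `2 * m + 1` is still within reach, as the extra letter `x` acts through `T x`.
  obtain ⟨u, r, hu, hr, rfl⟩ : ∃ u r : List (Fin n),
      u.length ≤ m ∧ r.length ≤ m + 1 ∧ w = u.reverse ++ r :=
    ⟨(w.take m).reverse, w.drop m, by simp, by rw [List.length_drop]; omega, by simp⟩
  rw [List.map_append, List.prod_append, ← Matrix.mulVec_mulVec, hdual u hu]
  cases r with
  | nil => simpa using hyy (i, ⟨u, hu⟩) (j, ⟨[], Nat.zero_le m⟩)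
  | cons x v =>
    rw [List.map_cons, List.prod_cons, ← Matrix.mulVec_mulVec,
      hword j v (Nat.le_of_succ_le_succ hr), hyXy]
    rfl

lemma lift_word (X : Fin n → Matrix ι ι ℂ) (w : List (Fin n)) :
    FreeAlgebra.lift ℂ X (word w) = (w.map X).prod := by
  simp [word, map_list_prod, Function.comp_def]

theorem exists_gns {ℓ : Matrix I I (FreeAlg n) →ₗ[ℂ] ℂ}
    (hℓ : ∀ p, ℓ (adjM p) = star (ℓ p))
    (hH : (Matrix.of fun a b : I × Word n m =>
      ℓ (hermOuter (monoRow a) (monoRow b))).PosDef) (e : I × Word n m ≃ ι) :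
    ∃ (X : Fin n → Matrix ι ι ℂ) (y : I → ι → ℂ), (∀ x, (X x).IsHermitian) ∧
      ∀ i j, ∀ p ∈ degLE n (2 * m + 1),
        star (y i) ⬝ᵥ (FreeAlgebra.lift ℂ X p *ᵥ y j) = ℓ (Matrix.single i j p) := by
  obtain ⟨X, y, hX, hy⟩ := exists_moment_realization hℓ hH e
  refine ⟨X, y, hX, fun i j p hp => ?_⟩
  induction hp using Submodule.span_induction with
  | mem _ hw =>
    obtain ⟨w, hw, rfl⟩ := hw
    exact (congrArg (fun A => star (y i) ⬝ᵥ (A *ᵥ y j)) (lift_word X w)).trans (hy i j w hw)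
  | zero => simp
  | add p q _ _ hp hq =>
    rw [map_add, Matrix.add_mulVec, dotProduct_add, hp, hq, Matrix.single_add, map_add]
  | smul c p _ hp =>
    rw [map_smul, Matrix.smul_mulVec, dotProduct_smul, hp, ← Matrix.smul_single, map_smul]

end GNS

section Evaluation

variable {n k : ℕ} {I : Type*} [Fintype I] (X : Fin n → Matrix (Fin k) (Fin k) ℂ)

lemma star_dotProduct_evalM_mulVec (f : Matrix I I (FreeAlg n)) (y : I → Fin k → ℂ) :
    star (Function.uncurry y) ⬝ᵥ (evalM f X *ᵥ Function.uncurry y) =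
      ∑ i, ∑ j, star (y i) ⬝ᵥ (FreeAlgebra.lift ℂ X (f i j) *ᵥ y j) := by
  simp only [dotProduct, Matrix.mulVec, evalM, Fintype.sum_prod_type, Finset.mul_sum]
  exact Finset.sum_congr rfl fun i _ => Finset.sum_comm

variable {X}

lemma lift_nstar (hX : ∀ x, (X x).IsHermitian) (a : FreeAlg n) :
    FreeAlgebra.lift ℂ X (nstar a) = (FreeAlgebra.lift ℂ X a)ᴴ := by
  induction a using word_induction with
  | word w => rw [nstar_word, lift_word, lift_word, conjTranspose_prod_map hX]
  | add a b ha hb => rw [nstar_add, map_add, map_add, Matrix.conjTranspose_add, ha, hb]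
  | smul c a ha => rw [nstar_smul, map_smul, map_smul, Matrix.conjTranspose_smul, ha]

lemma evalM_adjM_mul_self (hX : ∀ x, (X x).IsHermitian) (s : Matrix I I (FreeAlg n)) :
    evalM (adjM s * s) X = (evalM s X)ᴴ * evalM s X := by
  ext p q
  simp only [evalM, Matrix.mul_apply, adjM, map_sum, map_mul, lift_nstar hX, Matrix.sum_apply,
    Matrix.conjTranspose_apply, Fintype.sum_prod_type]

lemma posSemidef_evalM_sum_adjM_mul_self (hX : ∀ x, (X x).IsHermitian) {κ : Type*} [Fintype κ]
    (s : κ → Matrix I I (FreeAlg n)) : (evalM (∑ r, adjM (s r) * s r) X).PosSemidef := by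
  have hsum : evalM (∑ r, adjM (s r) * s r) X = ∑ r, (evalM (s r) X)ᴴ * evalM (s r) X := by
    simp_rw [← evalM_adjM_mul_self hX]
    ext p q
    simp only [evalM, Matrix.sum_apply, map_sum]
  rw [hsum]
  exact Matrix.posSemidef_sum _ fun r _ => Matrix.posSemidef_conjTranspose_mul_self _

end Evaluation

theorem exists_gram_eq_of_posSemidef_evalM {n m : ℕ} {I : Type*} [Fintype I] [DecidableEq I]
    {f : Matrix I I (FreeAlg n)} (hf : IsHermPoly f) (hdeg : matDegLE f (2 * m + 1))
    (hpsd : ∀ X : Fin n → Matrix (Fin (Fintype.card (I × Word n m))) (Fin _) ℂ,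
      (∀ x, (X x).IsHermitian) → (evalM f X).PosSemidef) :
    ∃ G : Matrix (I × Word n m) (I × Word n m) ℂ, G.PosSemidef ∧ gram monoRow G = f := by
  by_contra! hG
  obtain ⟨L, hLpos, hLf⟩ := exists_linearMap_pos_and_neg
    (fun G => eq_zero_of_gram_eq_zero linearIndependent_monoRow) hG
  have hpos (G : Matrix (I × Word n m) (I × Word n m) ℂ) (hG : G.PosSemidef) (hG0 : G ≠ 0) :
      0 < (hermPart L (gram monoRow G)).re := by
    rw [re_hermPart L (by rw [adjM_gram, hG.1.eq])]
    exact mul_pos two_pos (hLpos G hG hG0)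
  obtain ⟨X, y, hX, hy⟩ := exists_gns (hermPart_adjM L)
    (posDef_of_re_gram_pos (hermPart_adjM L) hpos) (Fintype.equivFin _)
  have hvalue : star (Function.uncurry y) ⬝ᵥ (evalM f X *ᵥ Function.uncurry y) =
      hermPart L f := by
    rw [star_dotProduct_evalM_mulVec]
    simp_rw [hy _ _ _ (hdeg _ _), ← map_sum, ← Matrix.matrix_eq_sum_single f]
  have hnonneg : 0 ≤ (hermPart L f).re := by
    rw [← hvalue]
    exact (Complex.nonneg_iff.1 ((hpsd X hX).dotProduct_mulVec_nonneg _)).1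
  have hfadj : f = adjM f := funext₂ hf
  rw [re_hermPart L hfadj.symm] at hnonneg
  exact hnonneg.not_gt (mul_neg_of_pos_of_neg two_pos hLf)

end NCPoly

theorem free_hilbert_17th_general {n : ℕ} {I : Type*} [Fintype I] (f : Matrix I I (FreeAlg n))
    (hf : IsHermPoly f) :
    (∀ X : Fin n →
        Matrix (Fin (Fintype.card (I × NCPoly.Word n (matDeg f / 2)))) (Fin _) ℂ,
      (∀ j, (X j).IsHermitian) → (evalM f X).PosSemidef) ↔
      ∃ (M : ℕ) (s : Fin M → Matrix I I (FreeAlg n)),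
        (∀ i, matDegLE (s i) (matDeg f / 2)) ∧ f = ∑ i, adjM (s i) * s i := by
  classical
  constructor
  · intro hpsd
    have hdeg : matDegLE f (2 * (matDeg f / 2) + 1) := fun i j =>
      NCPoly.degLE_mono (by omega) (NCPoly.matDegLE_matDeg f i j)
    obtain ⟨G, hG, hGf⟩ := NCPoly.exists_gram_eq_of_posSemidef_evalM hf hdeg hpsd
    obtain ⟨s, hs, hsum⟩ := NCPoly.exists_gram_monoRow_eq_sum_adjM_mul_self hG
    let e := Fintype.equivFin (NCPoly.Word n (matDeg f / 2))
    exact ⟨_, s ∘ e.symm, fun i => hs _, hGf.symm.trans <| hsum.trans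
      (e.symm.sum_comp fun u => adjM (s u) * s u).symm⟩
  · rintro ⟨M, s, -, rfl⟩ X hX
    exact NCPoly.posSemidef_evalM_sum_adjM_mul_self hX s

/-- free Hilbert 17th problem, Helton; McCullough: `f = f*` is positive
semidefinite at all hermitian matrix tuples iff it is a sum of hermitian squares with
degrees at most `⌊deg f / 2⌋`. -/
theorem free_hilbert_17th {n d : ℕ}
    (f : Matrix (Fin d) (Fin d) (FreeAlg n)) (hf : IsHermPoly f) :
    (∀ (k : ℕ) (X : Fin n → Matrix (Fin k) (Fin k) ℂ), (∀ j, (X j).IsHermitian) →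
        (evalM f X).PosSemidef) ↔
      (∃ (M : ℕ) (s : Fin M → Matrix (Fin d) (Fin d) (FreeAlg n)),
        (∀ i, matDegLE (s i) (matDeg f / 2)) ∧
        f = ∑ i, adjM (s i) * s i) :=
  ⟨fun h => (free_hilbert_17th_general f hf).1 (h _), fun ⟨_, s, _, hs⟩ _ _ hX =>
    hs ▸ NCPoly.posSemidef_evalM_sum_adjM_mul_self hX s⟩
end
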